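/- arXiv:2306.08545 — 3 statements merged into one kernel-verified Lean document; each statement's English description precedes it below -/
import Mathlib

section
/- Let G be a finite group having a unique minimal normal subgroup M, where M = S_1 × ⋯ × S_n is the internal direct product of subgroups all isomorphic to PSL(2, 3^f) for some odd positive integer f. Let g be an element of G and let r be the order of gM in G/M. Then there exist a non-principal irreducible complex character λ of M and a non-negative integer h ≤ n such that λ has an extension to I = I_G(λ), the element g^{2^h} lies in I, and |M|/λ(1) is a multiple of 2^h · o(g^r), where o(g^r) denotes the order of g^r. -/
open scoped MatrixGroups

noncomputable section

/-- `χ` is the character of some irreducible complex representation of `G`. -/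
def IsIrrChar (G : Type) [Group G] (χ : G → ℂ) : Prop :=
  ∃ V : FDRep ℂ G, CategoryTheory.Simple V ∧ ∀ g : G, FDRep.character V g = χ g

/-- `α : S → ℂ` has an extension to `Aut S`, through the embedding of `S` in `Aut S`
given by inner automorphisms. -/
def ExtendsToAut (S : Type) [Group S] (α : S → ℂ) : Prop :=
  ∃ ψ : MulAut S → ℂ, IsIrrChar (MulAut S) ψ ∧ ∀ s : S, ψ (MulAut.conj s) = α s

/-- The inertia subgroup `I_G(λ)` of a (character) `lam : M → ℂ` of a normal
subgroup `M` of `G`: the set of `g ∈ G` with `lam ∘ (conjugation by g) = lam`. -/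
def inertia {G : Type} [Group G] (M : Subgroup G) (hM : M.Normal) (lam : ↥M → ℂ) :
    Subgroup G where
  carrier := {g : G | ∀ m : ↥M, lam ⟨g * m * g⁻¹, hM.conj_mem m.1 m.2 g⟩ = lam m}
  one_mem' := by
    intro m
    have : ((1 : G) * m * (1 : G)⁻¹) = (m : G) := by group
    exact congrArg lam (Subtype.ext this)
  mul_mem' := by
    intro a b ha hb m
    have key : ∀ (x y : G) (hx : x ∈ M) (hy : y ∈ M), x = y →
        lam ⟨x, hx⟩ = lam ⟨y, hy⟩ := by
      rintro x y hx hy rfl; rfl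
    have h1 := ha ⟨b * m * b⁻¹, hM.conj_mem m.1 m.2 b⟩
    have h2 := hb m
    calc lam ⟨(a * b) * m * (a * b)⁻¹, hM.conj_mem m.1 m.2 (a * b)⟩
        = lam ⟨a * (b * m * b⁻¹) * a⁻¹, hM.conj_mem _ (hM.conj_mem m.1 m.2 b) a⟩ :=
          key _ _ _ _ (by group)
      _ = lam ⟨b * m * b⁻¹, hM.conj_mem m.1 m.2 b⟩ := h1
      _ = lam m := h2
  inv_mem' := by
    intro a ha m
    have key : ∀ (x y : G) (hx : x ∈ M) (hy : y ∈ M), x = y →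
        lam ⟨x, hx⟩ = lam ⟨y, hy⟩ := by
      rintro x y hx hy rfl; rfl
    have h := ha ⟨a⁻¹ * m * (a⁻¹)⁻¹, hM.conj_mem _ m.2 a⁻¹⟩
    have h2 : lam ⟨a * (a⁻¹ * m * (a⁻¹)⁻¹) * a⁻¹,
        hM.conj_mem _ (hM.conj_mem m.1 m.2 a⁻¹) a⟩ = lam m :=
      key _ _ _ _ (by group)
    exact h.symm.trans h2

/-- A (character) `lam : M → ℂ` of a subgroup `M` of `G` has an extension to
the subgroup `H` of `G`: some irreducible character of `H` restricts to `lam`. -/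
def ExtendsToSubgroup {G : Type} [Group G] (M H : Subgroup G) (lam : ↥M → ℂ) : Prop :=
  ∃ ψ : ↥H → ℂ, IsIrrChar ↥H ψ ∧
    ∀ (x : G) (hxM : x ∈ M) (hxH : x ∈ H), ψ ⟨x, hxH⟩ = lam ⟨x, hxM⟩

/-!
Conjugation in `G` permutes the factors of `M` and twists them by automorphisms of `PSL(2, q)`,
because `PSL(2, q)` is not a nontrivial central product. If an irreducible character of `PSL(2, q)`
extends to its stabilizer in the automorphism group, then the product of copies of it over a set
`J` of factors extends to its inertia subgroup by tensor induction.

Two characters of `PSL(2, q)` are used this way. The Steinberg character, of degree `q`, is the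
permutation character on the Sylow subgroups in the defining characteristic `p` minus `1`, so it
extends to all automorphisms. It settles the case of a proper `g`-invariant set `J` of factors and,
with `J` the set of all factors, the case `p ∤ o(g ^ r)`, both with `h = 0`. Otherwise `g` permutes
the `n` factors transitively, and since elements of `PSL(2, q)` of order divisible by `p` have order
exactly `p`, also `o(g ^ r) = p`. Now take the half Weil character, of degree `(q - 1) / 2`, on all
factors. It is stable under and extends to `PΣL(2, q)`, which contains the square of every
automorphism. With `n = 2 ^ a * b` and `b` odd, the `b`-th power of `g ^ 2 ^ (a + 1)` is the square
of `g ^ n`, which fixes every factor. A cocycle computation in an elementary abelian `2`-group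
therefore provides coordinates in which `g ^ 2 ^ (a + 1)` acts through `PΣL(2, q)`.
-/

section MatrixRepresentations

variable {G H ι : Type} [Group G] [Group H] [Fintype ι] [DecidableEq ι]

/-- Only the scalar matrices commute with the image of the matrix representation `ρ`. For a finite
group this amounts to irreducibility of `ρ`. -/
def HasScalarCommutant (ρ : G →* Matrix ι ι ℂ) : Prop :=
  ∀ X : Matrix ι ι ℂ, (∀ g, X * ρ g = ρ g * X) → ∃ c : ℂ, X = c • (1 : Matrix ι ι ℂ)

/-- The action on column vectors attached to a group homomorphism into square matrices. -/
def matrixRepresentation (ρ : G →* Matrix ι ι ℂ) : Representation ℂ G (ι → ℂ) :=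
  ((Matrix.toLinAlgEquiv' : Matrix ι ι ℂ ≃ₐ[ℂ] _) : Matrix ι ι ℂ →* _).comp ρ

lemma matrixRepresentation_apply (ρ : G →* Matrix ι ι ℂ) (g : G) :
    matrixRepresentation ρ g = Matrix.toLin' (ρ g) := rfl

lemma character_matrixRepresentation (ρ : G →* Matrix ι ι ℂ) (g : G) :
    (matrixRepresentation ρ).character g = (ρ g).trace := by
  rw [Representation.character, matrixRepresentation_apply, Matrix.trace_toLin'_eq]

lemma HasScalarCommutant.of_comp {ρ : G →* Matrix ι ι ℂ} (φ : H →* G)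
    (h : HasScalarCommutant (ρ.comp φ)) : HasScalarCommutant ρ :=
  fun X hX => h X fun k => hX (φ k)

variable [Nonempty ι]

lemma hasScalarCommutant_iff_finrank_eq_one (ρ : G →* Matrix ι ι ℂ) :
    HasScalarCommutant ρ ↔ Module.finrank ℂ
      (Representation.IntertwiningMap (matrixRepresentation ρ) (matrixRepresentation ρ)) = 1 := by
  have one_ne_zero : (1 : Representation.IntertwiningMap
      (matrixRepresentation ρ) (matrixRepresentation ρ)) ≠ 0 := fun h => by
    simpa using congrArg (fun f => f.toLinearMap (fun _ => (1 : ℂ)) (Classical.arbitrary ι)) h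
  rw [finrank_eq_one_iff_of_nonzero' _ one_ne_zero]
  constructor
  · intro hρ w
    have hw (g : G) : LinearMap.toMatrix' w.toLinearMap * ρ g =
        ρ g * LinearMap.toMatrix' w.toLinearMap := by
      apply Matrix.toLin'.injective
      rw [Matrix.toLin'_mul, Matrix.toLin'_mul, Matrix.toLin'_toMatrix']
      exact w.2 g
    obtain ⟨c, hc⟩ := hρ _ hw
    refine ⟨c, Representation.IntertwiningMap.ext (LinearMap.toMatrix'.injective ?_)⟩
    rw [hc]
    change LinearMap.toMatrix' (c • LinearMap.id) = _
    rw [map_smul, LinearMap.toMatrix'_id]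
  · intro h X hX
    obtain ⟨c, hc⟩ := h ⟨Matrix.toLin' X, fun g => by
      rw [matrixRepresentation_apply, ← Matrix.toLin'_mul, ← Matrix.toLin'_mul, hX]⟩
    refine ⟨c, Matrix.toLin'.injective ?_⟩
    rw [map_smul, Matrix.toLin'_one]
    exact (congrArg (fun f => f.toLinearMap) hc).symm

lemma hasScalarCommutant_iff_sum_trace [Fintype G] (ρ : G →* Matrix ι ι ℂ) :
    HasScalarCommutant ρ ↔ ∑ g : G, (ρ g).trace * (ρ g⁻¹).trace = Nat.card G := by
  have card_ne_zero : (Nat.card G : ℂ) ≠ 0 := by simp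
  have := invertibleOfNonzero card_ne_zero
  have key := Representation.card_inv_mul_sum_char_mul_char_eq_finrank
    (matrixRepresentation ρ) (matrixRepresentation ρ)
  simp only [character_matrixRepresentation] at key
  rw [hasScalarCommutant_iff_finrank_eq_one, ← Nat.cast_inj (R := ℂ), ← key, Nat.cast_one,
    inv_mul_eq_one₀ card_ne_zero, eq_comm]

lemma HasScalarCommutant.isIrrChar_trace [Finite G] {ρ : G →* Matrix ι ι ℂ}
    (h : HasScalarCommutant ρ) : IsIrrChar G fun g => (ρ g).trace := by
  have := Fintype.ofFinite G
  have character_eq (g : G) :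
      FDRep.character (FDRep.of (matrixRepresentation ρ)) g = (ρ g).trace :=
    character_matrixRepresentation ρ g
  refine ⟨FDRep.of (matrixRepresentation ρ), ?_, character_eq⟩
  rw [FDRep.simple_iff_char_is_norm_one]
  simp only [character_eq]
  exact (hasScalarCommutant_iff_sum_trace ρ).1 h

end MatrixRepresentations

section TensorInduction

variable {G J A ι : Type} [Group G] [MulAction G J] [Group A] [Fintype J] [DecidableEq J]
  [Fintype ι] [DecidableEq ι]

/-- Tensor induction: a cocycle `c` for the action of `G` on `J` with values in `A` turns a matrix
representation `R` of `A` into one of `G` on the `J`-fold tensor power, whose basis is indexed by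
`J → ι`. -/
def tensorInduced (c : G → J → A) (hc : ∀ x y j, c (x * y) j = c x (y • j) * c y j)
    (R : A →* Matrix ι ι ℂ) : G →* Matrix (J → ι) (J → ι) ℂ where
  toFun y := Matrix.of fun v w => ∏ j, R (c y j) (v (y • j)) (w j)
  map_one' := by
    have c_one (j : J) : c 1 j = 1 := by simpa using hc 1 1 j
    ext v w
    simp only [Matrix.of_apply, c_one, map_one, one_smul, Matrix.one_apply]
    by_cases h : v = w
    · simp [h]
    · obtain ⟨j, hj⟩ := Function.ne_iff.1 h
      rw [if_neg h]
      exact Finset.prod_eq_zero (Finset.mem_univ j) (if_neg hj)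
  map_mul' y y' := by
    ext v w
    simp only [Matrix.of_apply, Matrix.mul_apply, hc, map_mul]
    rw [Finset.prod_univ_sum, Fintype.piFinset_univ]
    refine Fintype.sum_equiv (Equiv.arrowCongr (MulAction.toPerm y') (Equiv.refl ι)) _ _ fun t => ?_
    rw [Finset.prod_mul_distrib]
    congr 1
    · refine Eq.trans ?_ (Equiv.prod_comp (MulAction.toPerm y')
        (fun j => R (c y j) (v (y • j)) (t (y'⁻¹ • j))))
      simp [mul_smul]
    · simp

lemma trace_tensorInduced (c : G → J → A) (hc : ∀ x y j, c (x * y) j = c x (y • j) * c y j)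
    (R : A →* Matrix ι ι ℂ) {y : G} (hy : ∀ j : J, y • j = j) :
    (tensorInduced c hc R y).trace = ∏ j, (R (c y j)).trace := by
  simp only [tensorInduced, MonoidHom.coe_mk, OneHom.coe_mk, Matrix.trace, Matrix.diag,
    Matrix.of_apply, hy]
  rw [Finset.prod_univ_sum, Fintype.piFinset_univ]

end TensorInduction

section ExtendibleCharacters

variable {S : Type} [Group S]

/-- The stabilizer of a complex function on `S` in the automorphism group of `S`. -/
def autStabilizer (χ : S → ℂ) : Subgroup (MulAut S) where
  carrier := {α | ∀ x, χ (α x) = χ x}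
  one_mem' _ := rfl
  mul_mem' {α β} hα hβ x := (hα (β x)).trans (hβ x)
  inv_mem' {α} hα x := by simpa using (hα (α⁻¹ x)).symm

/-- A nonconstant irreducible character `χ` of `S` together with a matrix representation of its
stabilizer in `Aut S` whose restriction along `S → Aut S` affords `χ`. Irreducibility is recorded
as `⟨χ, χ⟩ = 1`. -/
structure ExtendibleCharacter (S : Type) [Group S] [Fintype S] where
  χ : S → ℂ
  ι : Type
  [fintype_ι : Fintype ι]
  [decidableEq_ι : DecidableEq ι]
  [nonempty_ι : Nonempty ι]
  rep : autStabilizer χ →* Matrix ι ι ℂ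
  conj_mem : ∀ x, MulAut.conj x ∈ autStabilizer χ
  trace_rep : ∀ x, (rep ⟨MulAut.conj x, conj_mem x⟩).trace = χ x
  sum_mul_inv : ∑ x, χ x * χ x⁻¹ = Nat.card S
  exists_ne : ∃ x, χ x ≠ χ 1

namespace ExtendibleCharacter

attribute [instance] fintype_ι decidableEq_ι nonempty_ι

variable [Fintype S] (D : ExtendibleCharacter S)

lemma χ_one : D.χ 1 = Fintype.card D.ι := by
  have conj_one : (⟨MulAut.conj 1, D.conj_mem 1⟩ : autStabilizer D.χ) = 1 := by ext1; simp
  rw [← D.trace_rep, conj_one, map_one, Matrix.trace_one]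

lemma χ_one_ne_zero : D.χ 1 ≠ 0 := by simp [χ_one]

protected lemma nontrivial (D : ExtendibleCharacter S) : Nontrivial S :=
  have ⟨x, hx⟩ := D.exists_ne
  ⟨x, 1, fun h => hx (by rw [h])⟩

end ExtendibleCharacter

end ExtendibleCharacters

/-- Coordinates on a normal subgroup `M ≅ S ^ ι` of `G` in which conjugation by `y : G` carries the
`i`-th factor to the `perm y i`-th one through the automorphism `aut y i` of `S`. -/
structure FactorAction (G : Type) [Group G] (M : Subgroup G) (S : Type) [Group S]
    (ι : Type) [DecidableEq ι] where
  coord : (ι → S) ≃* M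
  perm : G →* Equiv.Perm ι
  aut : G → ι → MulAut S
  conj_single : ∀ y i x, y * (coord (Pi.mulSingle i x) : G) * y⁻¹ =
    coord (Pi.mulSingle (perm y i) (aut y i x))

namespace FactorAction

variable {G : Type} [Group G] {M : Subgroup G} {S : Type} [Group S] {ι : Type} [DecidableEq ι]
  (T : FactorAction G M S ι)

lemma coord_single_injective (i : ι) :
    Function.Injective fun x => (T.coord (Pi.mulSingle i x) : G) :=
  Subtype.val_injective.comp (T.coord.injective.comp (Pi.mulSingle_injective i))

lemma aut_mul (x y : G) (i : ι) : T.aut (x * y) i = T.aut x (T.perm y i) * T.aut y i := by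
  ext s
  apply T.coord_single_injective (T.perm (x * y) i)
  have perm_mul : T.perm (x * y) i = T.perm x (T.perm y i) := by simp
  dsimp only
  rw [← T.conj_single, MulAut.mul_apply, perm_mul, ← T.conj_single, ← T.conj_single]
  group

lemma perm_coord_and_aut_coord [Nontrivial S] (s : ι → S) (i : ι) :
    T.perm (T.coord s) i = i ∧ T.aut (T.coord s) i = MulAut.conj (s i) := by
  have single_eq (x : S) : (Pi.mulSingle (T.perm (T.coord s) i) (T.aut (T.coord s) i x) : ι → S)
      = Pi.mulSingle i (s i * x * (s i)⁻¹) := by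
    have conj_single : s * Pi.mulSingle i x * s⁻¹ = Pi.mulSingle i (s i * x * (s i)⁻¹) := by
      ext k
      obtain rfl | h := eq_or_ne k i <;> simp [*]
    apply T.coord.injective
    apply Subtype.ext
    rw [← T.conj_single, ← conj_single]
    simp
  have perm_eq : T.perm (T.coord s) i = i := by
    obtain ⟨x, hx⟩ := exists_ne (1 : S)
    by_contra hne
    have := congrFun (single_eq x) i
    rw [Pi.mulSingle_eq_same, Pi.mulSingle_eq_of_ne (Ne.symm hne), eq_comm, mul_inv_eq_one] at this
    exact hx (by simpa using this)
  refine ⟨perm_eq, MulEquiv.ext fun x => Pi.mulSingle_injective (M := fun _ => S) i ?_⟩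
  simpa only [perm_eq, MulAut.conj_apply] using single_eq x

lemma coord_symm_conj (hM : M.Normal) (y : G) (m : M) (i : ι) [Finite ι] :
    T.coord.symm ⟨y * m * y⁻¹, hM.conj_mem _ m.2 y⟩ (T.perm y i) =
      T.aut y i (T.coord.symm m i) := by
  let conjCoord : (ι → S) →* S :=
    (Pi.evalMonoidHom _ (T.perm y i)).comp (T.coord.symm.toMonoidHom.comp
      ((MulAut.conjNormal y).toMonoidHom.comp T.coord.toMonoidHom))
  have hom_eq : conjCoord = (T.aut y i).toMonoidHom.comp (Pi.evalMonoidHom _ i) := by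
    refine MonoidHom.pi_ext fun k x => ?_
    have conj_eq : MulAut.conjNormal y (T.coord (Pi.mulSingle k x)) =
        T.coord (Pi.mulSingle (T.perm y k) (T.aut y k x)) := Subtype.ext (T.conj_single y k x)
    change T.coord.symm (MulAut.conjNormal y (T.coord (Pi.mulSingle k x))) (T.perm y i) =
      T.aut y i ((Pi.mulSingle k x : ι → S) i)
    rw [conj_eq, MulEquiv.symm_apply_apply]
    obtain rfl | h := eq_or_ne i k
    · simp
    · rw [Pi.mulSingle_eq_of_ne h, Pi.mulSingle_eq_of_ne ((T.perm y).injective.ne h), map_one]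
  have := DFunLike.congr_fun hom_eq (T.coord.symm m)
  simp only [conjCoord, MonoidHom.comp_apply, MulEquiv.coe_toMonoidHom,
    MulEquiv.apply_symm_apply] at this
  exact this

/-- The same action in the coordinates obtained by applying `β i` to the `i`-th factor. -/
def changeCoord (β : ι → MulAut S) : FactorAction G M S ι where
  coord := (MulEquiv.piCongrRight β).trans T.coord
  perm := T.perm
  aut y i := (β (T.perm y i))⁻¹ * T.aut y i * β i
  conj_single y i x := by
    have piCongrRight_single (i : ι) (x : S) :
        MulEquiv.piCongrRight β (Pi.mulSingle i x) = Pi.mulSingle i (β i x) := by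
      ext k
      obtain rfl | h := eq_or_ne k i <;> simp [*]
    simp only [MulEquiv.trans_apply, piCongrRight_single, T.conj_single, MulAut.mul_apply,
      MulAut.apply_inv_self]

variable [Fintype S] (D : ExtendibleCharacter S) (J : Finset ι)

/-- The character of `M ≅ S ^ ι` that is the external product of copies of `D.χ` on the factors
in `J` and of the trivial character on the others. -/
def prodChar (m : M) : ℂ := ∏ i ∈ J, D.χ (T.coord.symm m i)

lemma prodChar_one : T.prodChar D J 1 = (Fintype.card D.ι : ℂ) ^ J.card := by
  simp [prodChar, D.χ_one]

variable {J}

lemma prodChar_single_of_mem {i : ι} (hi : i ∈ J) (x : S) :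
    T.prodChar D J (T.coord (Pi.mulSingle i x)) = D.χ x * D.χ 1 ^ (J.card - 1) := by
  rw [prodChar, ← Finset.mul_prod_erase _ _ hi, MulEquiv.symm_apply_apply, Pi.mulSingle_eq_same,
    ← Finset.card_erase_of_mem hi]
  congr 1
  refine Finset.prod_eq_pow_card fun k hk => ?_
  rw [Pi.mulSingle_eq_of_ne (Finset.ne_of_mem_erase hk)]

lemma prodChar_single_of_notMem {i : ι} (hi : i ∉ J) (x : S) :
    T.prodChar D J (T.coord (Pi.mulSingle i x)) = D.χ 1 ^ J.card := by
  refine Finset.prod_eq_pow_card fun k hk => ?_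
  rw [MulEquiv.symm_apply_apply, Pi.mulSingle_eq_of_ne (ne_of_mem_of_not_mem hk hi)]

lemma prodChar_ne_one (hJ : J.Nonempty) : T.prodChar D J ≠ fun _ => 1 := by
  intro h
  obtain ⟨i, hi⟩ := hJ
  obtain ⟨x, hx⟩ := D.exists_ne
  have h_x := congrFun h (T.coord (Pi.mulSingle i x))
  have h_one := congrFun h (T.coord (Pi.mulSingle i 1))
  rw [T.prodChar_single_of_mem D hi] at h_x h_one
  exact hx (mul_right_cancel₀ (pow_ne_zero _ D.χ_one_ne_zero) (h_x.trans h_one.symm))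

lemma mem_inertia_of_forall [Finite ι] (hM : M.Normal) {y : G} (hperm : ∀ i ∈ J, T.perm y i ∈ J)
    (haut : ∀ i ∈ J, T.aut y i ∈ autStabilizer D.χ) : y ∈ inertia M hM (T.prodChar D J) := by
  intro m
  have map_eq : J.map (T.perm y).toEmbedding = J :=
    Finset.eq_of_subset_of_card_le (Finset.map_subset_iff_subset_preimage.2
      fun i hi => Finset.mem_preimage.2 (hperm i hi)) (by simp)
  rw [prodChar]
  nth_rw 1 [← map_eq]
  rw [Finset.prod_map]
  refine Finset.prod_congr rfl fun i hi => ?_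
  rw [Equiv.coe_toEmbedding, T.coord_symm_conj hM, haut i hi]

lemma forall_of_mem_inertia (hM : M.Normal) {y : G} (hy : y ∈ inertia M hM (T.prodChar D J))
    {i : ι} (hi : i ∈ J) : T.perm y i ∈ J ∧ T.aut y i ∈ autStabilizer D.χ := by
  have invariant (x : S) : T.prodChar D J (T.coord (Pi.mulSingle (T.perm y i) (T.aut y i x))) =
      T.prodChar D J (T.coord (Pi.mulSingle i x)) := by
    rw [← hy (T.coord (Pi.mulSingle i x))]
    exact congrArg _ (Subtype.ext (T.conj_single y i x).symm)
  have pow_ne : D.χ 1 ^ (J.card - 1) ≠ 0 := pow_ne_zero _ D.χ_one_ne_zero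
  have perm_mem : T.perm y i ∈ J := by
    by_contra hc
    obtain ⟨x, hx⟩ := D.exists_ne
    have h_x := invariant x
    have h_one := invariant 1
    rw [T.prodChar_single_of_notMem D hc, T.prodChar_single_of_mem D hi] at h_x h_one
    exact hx (mul_right_cancel₀ pow_ne (h_x.symm.trans h_one))
  refine ⟨perm_mem, fun x => mul_right_cancel₀ pow_ne ?_⟩
  rw [← T.prodChar_single_of_mem D perm_mem, invariant, T.prodChar_single_of_mem D hi]

lemma le_inertia_prodChar [Finite ι] (hM : M.Normal) : M ≤ inertia M hM (T.prodChar D J) := by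
  have := D.nontrivial
  intro m hm
  obtain ⟨s, hs⟩ := T.coord.surjective ⟨m, hm⟩
  obtain rfl : (T.coord s : G) = m := by rw [hs]
  refine T.mem_inertia_of_forall D hM (fun i hi => ?_) fun i _ => ?_
  · rwa [(T.perm_coord_and_aut_coord s i).1]
  · rw [(T.perm_coord_and_aut_coord s i).2]
    exact D.conj_mem _

variable (J) in
lemma sum_prodChar_mul_inv [Finite ι] [Fintype M] :
    ∑ m : M, T.prodChar D J m * T.prodChar D J m⁻¹ = Nat.card M := by
  have := Fintype.ofFinite ι
  have prod_eq (s : ι → S) :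
      T.prodChar D J (T.coord.toEquiv s) * T.prodChar D J (T.coord.toEquiv s)⁻¹ =
        ∏ i, if i ∈ J then D.χ (s i) * D.χ (s i)⁻¹ else 1 := by
    rw [prodChar, prodChar, ← Finset.prod_mul_distrib]
    simp [Finset.prod_ite_mem]
  have factor_sum (i : ι) :
      (∑ x : S, if i ∈ J then D.χ x * D.χ x⁻¹ else 1) = (Nat.card S : ℂ) := by
    split_ifs
    · exact D.sum_mul_inv
    · simp
  calc ∑ m : M, T.prodChar D J m * T.prodChar D J m⁻¹
      = ∑ s : ι → S, ∏ i, if i ∈ J then D.χ (s i) * D.χ (s i)⁻¹ else 1 := by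
        rw [← Equiv.sum_comp T.coord.toEquiv]
        exact Finset.sum_congr rfl fun s _ => prod_eq s
    _ = ∏ i : ι, ∑ x : S, if i ∈ J then D.χ x * D.χ x⁻¹ else 1 := by
        rw [Finset.prod_univ_sum, Fintype.piFinset_univ]
    _ = Nat.card M := by
        rw [← Nat.card_congr T.coord.toEquiv, Nat.card_fun]
        simp [factor_sum]

/-- The inertia subgroup of `T.prodChar D J` permutes the factors in `J`. -/
abbrev inertiaMulAction (hM : M.Normal) : MulAction (inertia M hM (T.prodChar D J)) J where
  smul y j := ⟨T.perm y j, (T.forall_of_mem_inertia D hM y.2 j.2).1⟩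
  one_smul j := Subtype.ext (by change T.perm 1 j = j; simp)
  mul_smul x y j := Subtype.ext (by change T.perm (x * y : G) j = T.perm x (T.perm y j); simp)

/-- The tensor-induced representation of the inertia subgroup that extends `T.prodChar D J`. -/
def inertiaRep (hM : M.Normal) :
    inertia M hM (T.prodChar D J) →* Matrix (J → D.ι) (J → D.ι) ℂ :=
  letI := T.inertiaMulAction D (J := J) hM
  tensorInduced (fun y j => ⟨T.aut y j, (T.forall_of_mem_inertia D hM y.2 j.2).2⟩)
    (fun x y j => Subtype.ext (T.aut_mul x y j)) D.rep

lemma trace_inertiaRep (hM : M.Normal) {m : M} (hm : (m : G) ∈ inertia M hM (T.prodChar D J)) :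
    (T.inertiaRep D hM ⟨m, hm⟩).trace = T.prodChar D J m := by
  have := D.nontrivial
  let _ := T.inertiaMulAction D (J := J) hM
  obtain ⟨s, rfl⟩ := T.coord.surjective m
  refine (trace_tensorInduced _ _ _ fun j =>
    Subtype.ext (T.perm_coord_and_aut_coord s j).1).trans ?_
  rw [prodChar, ← Finset.prod_coe_sort J]
  refine Finset.prod_congr rfl fun j _ => ?_
  rw [MulEquiv.symm_apply_apply, ← D.trace_rep]
  congr 3
  exact (T.perm_coord_and_aut_coord s j).2

theorem isIrrChar_prodChar_and_extendsToSubgroup [Finite ι] [Finite G] (hM : M.Normal) :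
    IsIrrChar M (T.prodChar D J) ∧
      ExtendsToSubgroup M (inertia M hM (T.prodChar D J)) (T.prodChar D J) := by
  have := Fintype.ofFinite M
  have hle := T.le_inertia_prodChar D (J := J) hM
  have schur : HasScalarCommutant ((T.inertiaRep D hM).comp (Subgroup.inclusion hle)) := by
    rw [hasScalarCommutant_iff_sum_trace, ← T.sum_prodChar_mul_inv D J]
    exact Finset.sum_congr rfl fun m _ => congrArg₂ _ (T.trace_inertiaRep D hM (hle m.2))
      (T.trace_inertiaRep D hM (m := m⁻¹) (hle (m⁻¹).2))
  constructor
  · convert schur.isIrrChar_trace using 2 with m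
    exact (T.trace_inertiaRep D hM (hle m.2)).symm
  · exact ⟨_, schur.of_comp.isIrrChar_trace, fun x hx _ => T.trace_inertiaRep D hM (m := ⟨x, hx⟩) _⟩

end FactorAction

section DirectPowers

lemma nonempty_pi_mulEquiv_of_noncommPiCoprod {G S ι : Type} [Group G] [Group S]
    [Fintype ι] {M : Subgroup G} {H : ι → Subgroup G} (hiso : ∀ i, Nonempty (H i ≃* S))
    (hcomm : Pairwise fun i j => ∀ x y : G, x ∈ H i → y ∈ H j → Commute x y)
    (hinj : Function.Injective (Subgroup.noncommPiCoprod hcomm))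
    (hrange : (Subgroup.noncommPiCoprod hcomm).range = M) : Nonempty ((ι → S) ≃* M) :=
  ⟨((MulEquiv.piCongrRight fun i => (hiso i).some).symm.trans (MonoidHom.ofInjective hinj)).trans
    (MulEquiv.subgroupCongr hrange)⟩

/-- `S` is not a central product of two nontrivial subgroups. -/
def CentrallyIndecomposable (S : Type) [Group S] : Prop :=
  ∀ A B : Subgroup S, A ≤ Subgroup.centralizer B → A ⊔ B = ⊤ → A = ⊥ ∨ B = ⊥

variable {S : Type} [Group S] {ι : Type} [DecidableEq ι]

lemma mulSingle_mul_update_one (s : ι → S) (i : ι) :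
    Pi.mulSingle i (s i) * Function.update s i 1 = s := by
  ext k
  obtain rfl | h := eq_or_ne k i <;> simp [*]

lemma CentrallyIndecomposable.apply_eq_one_or (hS : CentrallyIndecomposable S)
    (a : MulAut (ι → S)) (i j : ι) :
    (∀ x, a (Pi.mulSingle i x) j = 1) ∨ ∀ s : ι → S, s i = 1 → a s j = 1 := by
  let evalAt : (ι → S) →* S := (Pi.evalMonoidHom _ j).comp a.toMonoidHom
  let A : Subgroup S := (MonoidHom.mulSingle (fun _ => S) i).range.map evalAt
  let B : Subgroup S := (Pi.evalMonoidHom (fun _ => S) i).ker.map evalAt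
  have commute : A ≤ Subgroup.centralizer B := by
    rintro _ ⟨_, ⟨x, rfl⟩, rfl⟩ _ ⟨s, hs, rfl⟩
    rw [← map_mul, ← map_mul]
    congr 1
    ext k
    obtain rfl | h := eq_or_ne k i
    · have hs : s k = 1 := hs
      simp [hs]
    · simp [h]
  have generate : A ⊔ B = ⊤ := by
    refine eq_top_iff.2 fun t _ => ?_
    obtain ⟨s, hs⟩ := a.surjective (Pi.mulSingle j t)
    have ht : evalAt s = t := by simp [evalAt, hs]
    rw [← ht, ← mulSingle_mul_update_one s i, map_mul]
    exact Subgroup.mul_mem_sup ⟨_, ⟨s i, rfl⟩, rfl⟩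
      ⟨_, by simp [MonoidHom.mem_ker], rfl⟩
  refine (hS A B commute generate).imp (fun h x => ?_) fun h s hs => ?_
  · exact (Subgroup.eq_bot_iff_forall _).1 h _ ⟨_, ⟨x, rfl⟩, rfl⟩
  · exact (Subgroup.eq_bot_iff_forall _).1 h _ ⟨s, hs, rfl⟩

variable [Finite ι]

lemma CentrallyIndecomposable.exists_apply_mulSingle_eq [Nontrivial S]
    (hS : CentrallyIndecomposable S) (a : MulAut (ι → S)) (i : ι) :
    ∃ (j : ι) (α : MulAut S), ∀ x, a (Pi.mulSingle i x) = Pi.mulSingle j (α x) := by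
  have exists_ne (i : ι) : ∃ j x, a (Pi.mulSingle i x) j ≠ 1 := by
    by_contra! h
    obtain ⟨x, hx⟩ := exists_ne (1 : S)
    have : a (Pi.mulSingle i x) = 1 := funext fun j => h j x
    exact hx (by simpa using this)
  choose π x hπ using exists_ne
  have apply_eq_one (i : ι) (s : ι → S) (hs : s i = 1) : a s (π i) = 1 :=
    ((hS.apply_eq_one_or a i (π i)).resolve_left fun h => hπ i (h _)) s hs
  have π_injective : Function.Injective π := fun i i' h => by
    by_contra hne
    exact hπ i (h ▸ apply_eq_one i' _ (Pi.mulSingle_eq_of_ne (Ne.symm hne) _))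
  have π_surjective := Finite.surjective_of_injective π_injective
  let α : S →* S := (Pi.evalMonoidHom _ (π i)).comp
    (a.toMonoidHom.comp (MonoidHom.mulSingle (fun _ => S) i))
  have apply_single (x : S) : a (Pi.mulSingle i x) = Pi.mulSingle (π i) (α x) := by
    ext k
    obtain ⟨k, rfl⟩ := π_surjective k
    obtain rfl | h := eq_or_ne k i
    · simp [α]
    · rw [apply_eq_one k _ (Pi.mulSingle_eq_of_ne h x), Pi.mulSingle_eq_of_ne (π_injective.ne h)]
  have α_bijective : Function.Bijective α := by
    constructor
    · intro x y hxy
      exact Pi.mulSingle_injective (M := fun _ => S) i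
        (a.injective (by rw [apply_single, apply_single, hxy]))
    · intro t
      obtain ⟨s, hs⟩ := a.surjective (Pi.mulSingle (π i) t)
      have := congrFun hs (π i)
      rw [← mulSingle_mul_update_one s i, map_mul, Pi.mul_apply,
        apply_eq_one i (Function.update s i 1) (by simp), mul_one, Pi.mulSingle_eq_same] at this
      exact ⟨s i, this⟩
  exact ⟨π i, MulEquiv.ofBijective α α_bijective, apply_single⟩

variable {G : Type} [Group G] {M : Subgroup G}

lemma CentrallyIndecomposable.nonempty_factorAction [Nontrivial S]
    (hS : CentrallyIndecomposable S) (hM : M.Normal) (e : (ι → S) ≃* M) :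
    Nonempty (FactorAction G M S ι) := by
  have exists_conj (y : G) (i : ι) : ∃ (j : ι) (α : MulAut S), ∀ x,
      y * (e (Pi.mulSingle i x) : G) * y⁻¹ = e (Pi.mulSingle j (α x)) := by
    obtain ⟨j, α, h⟩ :=
      hS.exists_apply_mulSingle_eq ((e.trans (MulAut.conjNormal y)).trans e.symm) i
    exact ⟨j, α, fun x => by simp [← h]⟩
  choose π α conj_single using exists_conj
  have index_unique {i i' : ι} {x x' : S} (hx : x ≠ 1)
      (h : (e (Pi.mulSingle i x) : G) = e (Pi.mulSingle i' x')) : i = i' := by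
    by_contra hne
    have := congrFun (e.injective (Subtype.ext h)) i
    rw [Pi.mulSingle_eq_same, Pi.mulSingle_eq_of_ne hne] at this
    exact hx this
  obtain ⟨x, hx⟩ := exists_ne (1 : S)
  have aut_ne (β : MulAut S) : β x ≠ 1 := by simpa using hx
  let πHom : G →* Function.End ι :=
    { toFun := π
      map_one' := funext fun i => index_unique (aut_ne (α 1 i)) (x' := x) (by
        rw [← conj_single, one_mul, inv_one, mul_one]
        rfl)
      map_mul' := fun y z => funext fun i => index_unique (aut_ne (α (y * z) i))
        (x' := α y (π z i) (α z i x)) (by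
          change _ = (e (Pi.mulSingle (π y (π z i)) _) : G)
          rw [← conj_single, ← conj_single, ← conj_single]
          group) }
  exact ⟨⟨e, πHom.toHomPerm, α, conj_single⟩⟩

end DirectPowers

section ProjectiveSpecialLinear

variable {F : Type} [Field F]

/-- The element of `SL(2, F)` with rows `(a, b)` and `(c, d)`. -/
def slOf (a b c d : F) (h : a * d - b * c = 1) : SL(2, F) :=
  ⟨!![a, b; c, d], by rw [Matrix.det_fin_two_of]; exact h⟩

lemma exists_eq_slOf (s : SL(2, F)) : ∃ a b c d h, s = slOf a b c d h :=
  Matrix.SpecialLinearGroup.fin_two_induction (fun s => ∃ a b c d h, s = slOf a b c d h)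
    (fun a b c d h => ⟨a, b, c, d, h, rfl⟩) s

lemma slOf_inj {a b c d a' b' c' d' : F} {h h'} :
    slOf a b c d h = slOf a' b' c' d' h' ↔ a = a' ∧ b = b' ∧ c = c' ∧ d = d' := by
  rw [Matrix.SpecialLinearGroup.ext_iff]
  simp [slOf, Fin.forall_fin_two, and_assoc]

lemma slOf_mul (a b c d a' b' c' d' : F) (h h') :
    slOf a b c d h * slOf a' b' c' d' h' = slOf (a * a' + b * c') (a * b' + b * d')
      (c * a' + d * c') (c * b' + d * d') (by linear_combination h * (a' * d' - b' * c') + h') :=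
  Subtype.ext (Matrix.mul_fin_two ..)

lemma slOf_inv (a b c d : F) (h) :
    (slOf a b c d h)⁻¹ = slOf d (-b) (-c) a (by linear_combination h) :=
  Subtype.ext (Matrix.adjugate_fin_two_of ..)

lemma slOf_neg (a b c d : F) (h) :
    -slOf a b c d h = slOf (-a) (-b) (-c) (-d) (by linear_combination h) :=
  Subtype.ext (by ext i j; fin_cases i <;> fin_cases j <;> rfl)

lemma slOf_one : slOf (1 : F) 0 0 1 (by ring) = 1 :=
  Subtype.ext Matrix.one_fin_two.symm

lemma mem_center_SL_two_iff {s : SL(2, F)} :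
    s ∈ Subgroup.center SL(2, F) ↔ s = 1 ∨ s = -1 := by
  rw [Matrix.SpecialLinearGroup.mem_center_iff]
  constructor
  · rintro ⟨r, hr, hs⟩
    have hs : s = slOf r 0 0 r (by simpa [sq] using hr) := Subtype.ext (by
      rw [← hs]
      ext i j
      fin_cases i <;> fin_cases j <;> rfl)
    rw [hs, ← slOf_one, slOf_neg, slOf_inj, slOf_inj]
    simpa using hr
  · rintro (rfl | rfl)
    · exact ⟨1, by simp, by simp⟩
    · exact ⟨-1, by simp, by ext i j; fin_cases i <;> fin_cases j <;> simp⟩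

lemma mk_PSL_two_eq_iff {s t : SL(2, F)} : (s : PSL(2, F)) = t ↔ t = s ∨ t = -s := by
  rw [QuotientGroup.eq, mem_center_SL_two_iff, inv_mul_eq_iff_eq_mul, inv_mul_eq_iff_eq_mul]
  simp

/-- The class in `PSL(2, F)` of the matrix with rows `(a, b)` and `(c, d)`. -/
def pslOf (a b c d : F) (h : a * d - b * c = 1) : PSL(2, F) := slOf a b c d h

lemma exists_eq_pslOf (x : PSL(2, F)) : ∃ a b c d h, x = pslOf a b c d h := by
  obtain ⟨s, rfl⟩ := QuotientGroup.mk_surjective x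
  obtain ⟨a, b, c, d, h, rfl⟩ := exists_eq_slOf s
  exact ⟨a, b, c, d, h, rfl⟩

lemma pslOf_inj {a b c d a' b' c' d' : F} {h h'} :
    pslOf a b c d h = pslOf a' b' c' d' h' ↔
      (a' = a ∧ b' = b ∧ c' = c ∧ d' = d) ∨ (a' = -a ∧ b' = -b ∧ c' = -c ∧ d' = -d) := by
  rw [pslOf, pslOf, mk_PSL_two_eq_iff, slOf_neg, slOf_inj, slOf_inj]

lemma pslOf_mul (a b c d a' b' c' d' : F) (h h') :
    pslOf a b c d h * pslOf a' b' c' d' h' = pslOf (a * a' + b * c') (a * b' + b * d')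
      (c * a' + d * c') (c * b' + d * d') (by linear_combination h * (a' * d' - b' * c') + h') :=
  congrArg _ (slOf_mul a b c d a' b' c' d' h h')

lemma pslOf_inv (a b c d : F) (h) :
    (pslOf a b c d h)⁻¹ = pslOf d (-b) (-c) a (by linear_combination h) :=
  congrArg _ (slOf_inv a b c d h)

lemma pslOf_one : pslOf (1 : F) 0 0 1 (by ring) = 1 := by
  rw [pslOf, slOf_one, QuotientGroup.mk_one]

/-- The upper unitriangular elements of `PSL(2, F)`. -/
def upper (b : F) : PSL(2, F) := pslOf 1 b 0 1 (by ring)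

/-- The lower unitriangular elements of `PSL(2, F)`. -/
def lower (c : F) : PSL(2, F) := pslOf 1 0 c 1 (by ring)

/-- The Weyl element of `PSL(2, F)`, interchanging upper and lower unitriangular elements. -/
def weyl : PSL(2, F) := pslOf 0 (-1) 1 0 (by ring)

lemma upper_zero : upper (0 : F) = 1 := pslOf_one

lemma upper_add (a b : F) : upper (a + b) = upper a * upper b := by
  simp only [upper, pslOf_mul, pslOf_inj]
  grind

lemma upper_neg (a : F) : upper (-a) = (upper a)⁻¹ := by simp [upper, pslOf_inv]

lemma lower_add (a b : F) : lower (a + b) = lower a * lower b := by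
  simp only [lower, pslOf_mul, pslOf_inj]
  grind

lemma upper_eq_lower_iff {a b : F} : upper a = lower b ↔ a = 0 ∧ b = 0 := by
  rw [upper, lower, pslOf_inj]
  grind

lemma upper_injective : Function.Injective (upper : F → PSL(2, F)) := fun a b h => by
  rw [upper, upper, pslOf_inj] at h
  grind

lemma lower_injective : Function.Injective (lower : F → PSL(2, F)) := fun a b h => by
  rw [lower, lower, pslOf_inj] at h
  grind

lemma weyl_conj_upper (b : F) : weyl * upper b * weyl⁻¹ = lower (-b) := by
  simp [weyl, upper, lower, pslOf_mul, pslOf_inv]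

lemma pslOf_conj_upper (a b d t : F) (h : a * d - b * 0 = 1) :
    pslOf a b 0 d h * upper t * (pslOf a b 0 d h)⁻¹ = upper (a ^ 2 * t) := by
  simp only [upper, pslOf_mul, pslOf_inv, pslOf_inj]
  grind

lemma pslOf_eq_upper_mul_lower_mul_upper {a b c d : F} (h) (hc : c ≠ 0) :
    pslOf a b c d h = upper ((a - 1) / c) * lower c * upper ((d - 1) / c) := by
  simp only [upper, lower, pslOf_mul, pslOf_inj]
  refine .inl ⟨?_, ?_, ?_, ?_⟩ <;> grind

lemma PSL_two_closure (H : Subgroup PSL(2, F)) (hupper : ∀ b, upper b ∈ H)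
    (hlower : ∀ c, lower c ∈ H) : H = ⊤ := by
  refine eq_top_iff.2 fun x _ => ?_
  have mem_of_ne_zero {a b c d : F} (h) (hc : c ≠ 0) : pslOf a b c d h ∈ H := by
    rw [pslOf_eq_upper_mul_lower_mul_upper h hc]
    exact mul_mem (mul_mem (hupper _) (hlower _)) (hupper _)
  obtain ⟨a, b, c, d, h, rfl⟩ := exists_eq_pslOf x
  obtain rfl | hc := eq_or_ne c 0
  · have ha : a ≠ 0 := by grind
    have : pslOf a b 0 d h = lower (-1) * pslOf a b a (b + d) (by linear_combination h) := by
      simp [lower, pslOf_mul]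
    rw [this]
    exact mul_mem (hlower _) (mem_of_ne_zero _ ha)
  · exact mem_of_ne_zero _ hc

lemma upper_lower_braid_iff {a c : F} (ha : a ≠ 0) (hc : c ≠ 0) :
    upper a * lower c * upper a = lower c * upper a * lower c ↔ a * c = -1 := by
  simp only [upper, lower, pslOf_mul, pslOf_inj]
  grind

/-- The unipotent radical of the upper triangular Borel subgroup of `PSL(2, F)`. -/
def upperUnipotent (F : Type) [Field F] : Subgroup PSL(2, F) :=
  (MonoidHom.mk' (fun b : Multiplicative F => upper b.toAdd) fun _ _ => upper_add _ _).range

/-- The unipotent radical of the lower triangular Borel subgroup of `PSL(2, F)`. -/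
def lowerUnipotent (F : Type) [Field F] : Subgroup PSL(2, F) :=
  (MonoidHom.mk' (fun b : Multiplicative F => lower b.toAdd) fun _ _ => lower_add _ _).range

lemma mem_upperUnipotent {x : PSL(2, F)} : x ∈ upperUnipotent F ↔ ∃ b, upper b = x := Iff.rfl

lemma mem_lowerUnipotent {x : PSL(2, F)} : x ∈ lowerUnipotent F ↔ ∃ c, lower c = x := Iff.rfl

lemma mem_upperUnipotent_of_commute {x : PSL(2, F)} {b : F} (hb : b ≠ 0)
    (hx : Commute x (upper b)) : x ∈ upperUnipotent F := by
  obtain ⟨α, β, γ, δ, h, rfl⟩ := exists_eq_pslOf x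
  have hx := hx.eq
  simp only [upper, pslOf_mul, pslOf_inj] at hx
  have hγ : γ = 0 := by grind
  have hδ : δ = α := by grind
  obtain hα | hα : α = 1 ∨ α = -1 := mul_self_eq_one_iff.1 (by grind)
  · exact ⟨Multiplicative.ofAdd β, by subst hγ hδ hα; rfl⟩
  · exact ⟨Multiplicative.ofAdd (-β), pslOf_inj.2 (.inr (by simp [*]))⟩

lemma eq_bot_of_le_upperUnipotent {N : Subgroup PSL(2, F)} (hN : N.Normal)
    (hle : N ≤ upperUnipotent F) : N = ⊥ := by
  refine (Subgroup.eq_bot_iff_forall N).2 fun x hx => ?_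
  obtain ⟨b, rfl⟩ := mem_upperUnipotent.1 (hle hx)
  obtain ⟨c, hc⟩ := mem_upperUnipotent.1 (hle (hN.conj_mem _ hx weyl))
  rw [weyl_conj_upper, upper_eq_lower_iff] at hc
  rw [neg_eq_zero.1 hc.2, upper_zero]

lemma normal_of_le_centralizer_of_sup_eq_top {G : Type*} [Group G] {A B : Subgroup G}
    (hAB : A ≤ Subgroup.centralizer B) (hsup : A ⊔ B = ⊤) : A.Normal := by
  refine Subgroup.normalizer_eq_top_iff.1 (eq_top_iff.2 (hsup ▸ sup_le Subgroup.le_normalizer ?_))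
  exact (Subgroup.le_centralizer_iff.1 hAB).trans (Subgroup.centralizer_le_normalizer _)

lemma centrallyIndecomposable_PSL_two : CentrallyIndecomposable PSL(2, F) := by
  intro A B hAB hsup
  have hBA := Subgroup.le_centralizer_iff.1 hAB
  have hA := normal_of_le_centralizer_of_sup_eq_top hAB hsup
  have hB := normal_of_le_centralizer_of_sup_eq_top hBA (sup_comm A B ▸ hsup)
  obtain ⟨x, hx, y, hy, hxy⟩ := Subgroup.mem_sup_of_normal_left.1
    (hsup ▸ Subgroup.mem_top (upper (1 : F)))
  have hyU : y ∈ upperUnipotent F := mem_upperUnipotent_of_commute one_ne_zero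
    (hxy ▸ Commute.mul_right (hAB hx y hy) (Commute.refl y))
  obtain ⟨b, rfl⟩ := mem_upperUnipotent.1 hyU
  obtain rfl | hb := eq_or_ne b 0
  · rw [upper_zero, mul_one] at hxy
    exact .inr (eq_bot_of_le_upperUnipotent hB fun z hz =>
      mem_upperUnipotent_of_commute one_ne_zero (hBA hz _ (hxy ▸ hx)).symm)
  · exact .inl (eq_bot_of_le_upperUnipotent hA fun z hz =>
      mem_upperUnipotent_of_commute hb (hAB hz _ hy).symm)

end ProjectiveSpecialLinear

section SylowPSL

variable {F : Type} [Field F]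

lemma toGL_range_eq_ker_det {n R : Type*} [Fintype n] [DecidableEq n] [CommRing R] :
    (Matrix.SpecialLinearGroup.toGL (n := n) (R := R)).range =
      Matrix.GeneralLinearGroup.det.ker := by
  ext A
  rw [MonoidHom.mem_ker]
  constructor
  · rintro ⟨s, rfl⟩
    exact Matrix.SpecialLinearGroup.coeToGL_det s
  · exact fun hA => ⟨⟨A, congrArg Units.val hA⟩, Units.ext rfl⟩

lemma natCard_SL_two [Finite F] :
    Nat.card SL(2, F) = Nat.card F * ((Nat.card F - 1) * (Nat.card F + 1)) := by
  have := Fintype.ofFinite F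
  have hq : 1 < Nat.card F := Finite.one_lt_card
  have hker := (Matrix.GeneralLinearGroup.det (n := Fin 2) (R := F)).ker.card_mul_index
  rw [Subgroup.index_ker, MonoidHom.range_eq_top.2 Matrix.GeneralLinearGroup.det_surjective,
    Subgroup.card_top, Nat.card_units, ← toGL_range_eq_ker_det, Matrix.card_GL_field,
    ← SetLike.coe_sort_coe, MonoidHom.coe_range,
    Nat.card_range_of_injective Matrix.SpecialLinearGroup.toGL_injective, Fin.prod_univ_two,
    ← Nat.card_eq_fintype_card] at hker
  obtain ⟨k, hk⟩ := Nat.exists_eq_add_of_le' hq.le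
  refine Nat.eq_of_mul_eq_mul_right (Nat.sub_pos_of_lt hq) (hker.trans ?_)
  simp only [hk, Fin.val_zero, Fin.val_one, pow_zero, pow_one, Nat.add_sub_cancel]
  rw [show (k + 1) ^ 2 - 1 = k * (k + 2) by rw [Nat.sub_eq_iff_eq_add] <;> nlinarith,
    show (k + 1) ^ 2 - (k + 1) = k * (k + 1) by rw [Nat.sub_eq_iff_eq_add] <;> nlinarith]
  ring

lemma natCard_upperUnipotent : Nat.card (upperUnipotent F) = Nat.card F :=
  Nat.card_range_of_injective (upper_injective (F := F))

lemma natCard_PSL_two : Nat.card PSL(2, F) = Nat.card F * (upperUnipotent F).index := by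
  rw [← (upperUnipotent F).card_mul_index, natCard_upperUnipotent]

lemma natCard_center_SL_two_mul_index_upperUnipotent [Finite F] :
    Nat.card (Subgroup.center SL(2, F)) * (upperUnipotent F).index =
      (Nat.card F - 1) * (Nat.card F + 1) := by
  have hSL := Subgroup.card_eq_card_quotient_mul_card_subgroup (Subgroup.center SL(2, F))
  have hPSL : Nat.card (SL(2, F) ⧸ Subgroup.center SL(2, F)) = _ := natCard_PSL_two
  rw [natCard_SL_two, hPSL, mul_assoc] at hSL
  rw [mul_comm]
  exact (Nat.eq_of_mul_eq_mul_left Nat.card_pos hSL).symm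

lemma natCard_center_SL_two (h2 : (2 : F) ≠ 0) : Nat.card (Subgroup.center SL(2, F)) = 2 := by
  have hcoe : (Subgroup.center SL(2, F) : Set SL(2, F)) = {1, -1} :=
    Set.ext fun s => mem_center_SL_two_iff
  rw [← SetLike.coe_sort_coe, hcoe, Nat.card_coe_set_eq, Set.ncard_pair]
  rw [← slOf_one, slOf_neg, ne_eq, slOf_inj]
  grind

lemma upper_pow (b : F) (n : ℕ) : upper b ^ n = upper (n * b) := by
  induction n with
  | zero => simp [upper_zero]
  | succ n ih => rw [pow_succ, ih, ← upper_add, Nat.cast_succ, add_one_mul]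

lemma pow_eq_one_of_mem_upperUnipotent (p : ℕ) [CharP F p] {x : PSL(2, F)}
    (hx : x ∈ upperUnipotent F) : x ^ p = 1 := by
  obtain ⟨b, rfl⟩ := hx
  exact (upper_pow _ p).trans (by rw [CharP.cast_eq_zero, zero_mul, upper_zero])

lemma charP_dvd_natCard [Finite F] (p : ℕ) [CharP F p] : p ∣ Nat.card F := by
  have := Fintype.ofFinite F
  rw [Nat.card_eq_fintype_card, ← CharP.cast_eq_zero_iff F p]
  exact Nat.cast_card_eq_zero F

lemma prime_not_dvd_sub_one_mul_add_one {p q : ℕ} (hp : p.Prime) (hq : 0 < q) (hpq : p ∣ q) :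
    ¬ p ∣ (q - 1) * (q + 1) := by
  rw [hp.dvd_mul]
  rintro (h | h)
  · exact hp.one_lt.ne' (Nat.dvd_one.1 (by simpa [Nat.sub_sub_self hq] using Nat.dvd_sub hpq h))
  · exact hp.one_lt.ne' (Nat.dvd_one.1 ((Nat.dvd_add_right hpq).1 h))

variable [Finite F] (p : ℕ) [Fact p.Prime] [CharP F p]

lemma not_dvd_index_upperUnipotent : ¬ p ∣ (upperUnipotent F).index := fun h =>
  prime_not_dvd_sub_one_mul_add_one Fact.out Nat.card_pos (charP_dvd_natCard (F := F) p)
    (natCard_center_SL_two_mul_index_upperUnipotent (F := F) ▸ h.mul_left _)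

/-- The upper unitriangular elements of `PSL(2, F)` as a Sylow subgroup in the characteristic. -/
def upperSylow (F : Type) [Field F] [Finite F] (p : ℕ) [Fact p.Prime] [CharP F p] :
    Sylow p PSL(2, F) :=
  IsPGroup.toSylow (P := upperUnipotent F)
    (fun x => ⟨1, Subtype.ext (by simpa using pow_eq_one_of_mem_upperUnipotent p x.2)⟩)
    (not_dvd_index_upperUnipotent p)

/-- The lower unitriangular elements of `PSL(2, F)` as a Sylow subgroup in the characteristic. -/
def lowerSylow (F : Type) [Field F] [Finite F] (p : ℕ) [Fact p.Prime] [CharP F p] :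
    Sylow p PSL(2, F) :=
  (weyl : PSL(2, F)) • upperSylow F p

lemma coe_lowerSylow : (lowerSylow F p : Subgroup PSL(2, F)) = lowerUnipotent F := by
  ext x
  constructor
  · rintro ⟨_, ⟨b, rfl⟩, rfl⟩
    exact mem_lowerUnipotent.2 ⟨_, (weyl_conj_upper _).symm⟩
  · rintro ⟨c, rfl⟩
    exact ⟨upper (-c.toAdd), mem_upperUnipotent.2 ⟨_, rfl⟩,
      (weyl_conj_upper _).trans (by rw [neg_neg]; rfl)⟩

lemma pslOf_smul_upperSylow (a b d : F) (h : a * d - b * 0 = 1) :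
    pslOf a b 0 d h • upperSylow F p = upperSylow F p := by
  have hle : ((pslOf a b 0 d h • upperSylow F p : Sylow p _) : Subgroup PSL(2, F)) ≤
      upperSylow F p := by
    rintro _ ⟨_, ⟨t, rfl⟩, rfl⟩
    exact mem_upperUnipotent.2 ⟨_, (pslOf_conj_upper a b d t.toAdd h).symm⟩
  exact (Sylow.ext (Sylow.is_maximal' _ (upperSylow F p).isPGroup' hle)).symm

lemma upper_smul_upperSylow (b : F) : upper b • upperSylow F p = upperSylow F p :=
  pslOf_smul_upperSylow p _ _ _ _

lemma lowerSylow_ne_upperSylow : lowerSylow F p ≠ upperSylow F p := fun h => by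
  have hmem : lower (1 : F) ∈ upperUnipotent F := by
    have : lower (1 : F) ∈ (lowerSylow F p : Subgroup PSL(2, F)) := by
      rw [coe_lowerSylow]
      exact ⟨Multiplicative.ofAdd 1, rfl⟩
    rwa [h] at this
  obtain ⟨b, hb⟩ := mem_upperUnipotent.1 hmem
  exact one_ne_zero (upper_eq_lower_iff.1 hb).2

lemma eq_zero_of_upper_smul_lowerSylow {b : F}
    (h : upper b • lowerSylow F p = lowerSylow F p) : b = 0 := by
  have hmem : upper b * lower 1 * (upper b)⁻¹ ∈ lowerUnipotent F := by
    rw [← coe_lowerSylow p, ← h]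
    refine ⟨lower 1, ?_, rfl⟩
    change lower 1 ∈ (lowerSylow F p : Subgroup PSL(2, F))
    rw [coe_lowerSylow]
    exact ⟨Multiplicative.ofAdd 1, rfl⟩
  obtain ⟨c, hc⟩ := mem_lowerUnipotent.1 hmem
  simp only [upper, lower, pslOf_mul, pslOf_inv, pslOf_inj] at hc
  grind

lemma eq_upperSylow_or_exists_eq_smul_lowerSylow (P : Sylow p PSL(2, F)) :
    P = upperSylow F p ∨ ∃ x : F, P = upper x • lowerSylow F p := by
  obtain ⟨y, rfl⟩ := MulAction.exists_smul_eq PSL(2, F) (upperSylow F p) P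
  obtain ⟨a, b, c, d, h, rfl⟩ := exists_eq_pslOf y
  obtain rfl | hc := eq_or_ne c 0
  · exact .inl (pslOf_smul_upperSylow p _ _ _ _)
  · have bruhat : pslOf a b c d h =
        upper (a / c) * (weyl * pslOf c d 0 c⁻¹ (by simp [hc])) := by
      simp only [upper, weyl, pslOf_mul, pslOf_inj]
      refine .inl ⟨?_, ?_, ?_, ?_⟩ <;> grind
    exact .inr ⟨a / c, by rw [bruhat, mul_smul, mul_smul, pslOf_smul_upperSylow, lowerSylow]⟩

lemma natCard_sylow_PSL_two : Nat.card (Sylow p PSL(2, F)) = Nat.card F + 1 := by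
  rw [← Finite.card_option]
  refine (Nat.card_eq_of_bijective
    (fun o : Option F => o.elim (upperSylow F p) fun x => upper x • lowerSylow F p) ⟨?_, ?_⟩).symm
  · have ne (x : F) : upper x • lowerSylow F p ≠ upperSylow F p := fun h =>
      lowerSylow_ne_upperSylow p (smul_left_cancel _ (h.trans (upper_smul_upperSylow p x).symm))
    rintro (_ | x) (_ | y) h
    · rfl
    · exact absurd h.symm (ne y)
    · exact absurd h (ne x)
    · have : upper (-y + x) • lowerSylow F p = lowerSylow F p := by
        rw [upper_add, mul_smul, upper_neg, inv_smul_eq_iff]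
        exact h
      exact congrArg some (neg_add_eq_zero.1 (eq_zero_of_upper_smul_lowerSylow p this)).symm
  · intro P
    obtain rfl | ⟨x, rfl⟩ := eq_upperSylow_or_exists_eq_smul_lowerSylow p P
    · exact ⟨none, rfl⟩
    · exact ⟨some x, rfl⟩

lemma isMultiplyPretransitive_sylow_PSL_two :
    MulAction.IsMultiplyPretransitive PSL(2, F) (Sylow p PSL(2, F)) 2 := by
  have normalize {P Q : Sylow p PSL(2, F)} (h : P ≠ Q) :
      ∃ s : PSL(2, F), s • P = upperSylow F p ∧ s • Q = lowerSylow F p := by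
    obtain ⟨y, hy⟩ := MulAction.exists_smul_eq PSL(2, F) P (upperSylow F p)
    obtain hQ | ⟨x, hQ⟩ := eq_upperSylow_or_exists_eq_smul_lowerSylow p (y • Q)
    · exact absurd (smul_left_cancel y (hy.trans hQ.symm)) h
    · refine ⟨(upper x)⁻¹ * y, ?_, by rw [mul_smul, hQ, inv_smul_smul]⟩
      rw [mul_smul, hy, ← upper_neg, upper_smul_upperSylow]
  rw [MulAction.is_two_pretransitive_iff]
  intro P Q P' Q' h h'
  obtain ⟨s, hP, hQ⟩ := normalize h
  obtain ⟨t, hP', hQ'⟩ := normalize h'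
  exact ⟨t⁻¹ * s, by rw [mul_smul, hP, ← hP', inv_smul_smul],
    by rw [mul_smul, hQ, ← hQ', inv_smul_smul]⟩

lemma exists_conj_mem_upperUnipotent_of_commute {y : PSL(2, F)} (hy : orderOf y = p) :
    ∃ s : PSL(2, F), ∀ x, Commute x y → s * x * s⁻¹ ∈ upperUnipotent F := by
  have hpgroup : IsPGroup p (Subgroup.zpowers y) :=
    IsPGroup.of_card (n := 1) (by rw [Nat.card_zpowers, hy, pow_one])
  obtain ⟨P, hP⟩ := hpgroup.exists_le_sylow
  obtain ⟨s, hs⟩ := MulAction.exists_smul_eq PSL(2, F) P (upperSylow F p)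
  have hmem : s * y * s⁻¹ ∈ (upperSylow F p : Subgroup PSL(2, F)) := by
    rw [← hs]
    exact ⟨y, hP (Subgroup.mem_zpowers y), rfl⟩
  obtain ⟨b, hb⟩ := mem_upperUnipotent.1 hmem
  have hb0 : b ≠ 0 := by
    rintro rfl
    rw [upper_zero, eq_comm, conj_eq_one_iff] at hb
    exact (Fact.out (p := p.Prime)).one_lt.ne (by simpa [hb] using hy)
  refine ⟨s, fun x hx => mem_upperUnipotent_of_commute hb0 ?_⟩
  rw [hb]
  exact (Commute.conj_iff s).2 hx

lemma orderOf_eq_prime_of_dvd_orderOf {x : PSL(2, F)} (hx : p ∣ orderOf x) : orderOf x = p := by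
  have hy := orderOf_pow_orderOf_div (orderOf_pos x).ne' hx
  obtain ⟨s, hs⟩ := exists_conj_mem_upperUnipotent_of_commute p hy
  have hpow := pow_eq_one_of_mem_upperUnipotent p (hs x (Commute.self_pow x _))
  rw [conj_pow, conj_eq_one_iff] at hpow
  exact Nat.dvd_antisymm (orderOf_dvd_of_pow_eq_one hpow) hx

end SylowPSL

section DoublyTransitiveActions

open MulAction

section Counting

variable {A X : Type*} [Group A] [MulAction A X]

lemma natCard_orbits_prod_of_isMultiplyPretransitive [Nontrivial X]
    (h2 : IsMultiplyPretransitive A X 2) : Nat.card (Quotient (orbitRel A (X × X))) = 2 := by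
  obtain ⟨x, y, hxy⟩ := exists_pair_ne X
  have : IsPretransitive A X := isPretransitive_of_is_two_pretransitive
  rw [is_two_pretransitive_iff] at h2
  rw [Nat.card_eq_two_iff]
  refine ⟨Quotient.mk _ (x, x), Quotient.mk _ (x, y), fun h => ?_, Set.eq_univ_of_forall ?_⟩
  · obtain ⟨a, ha⟩ := Quotient.exact h
    obtain ⟨hx, hy⟩ := Prod.ext_iff.1 ha
    exact hxy (MulAction.injective a (hx.trans hy.symm) : x = y)
  · refine Quotient.ind fun z => ?_
    obtain ⟨u, v⟩ := z
    obtain rfl | huv := eq_or_ne u v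
    · obtain ⟨a, rfl⟩ := exists_smul_eq A x u
      exact .inl (Quotient.sound ⟨a, rfl⟩)
    · obtain ⟨a, rfl, rfl⟩ := h2 hxy huv
      exact .inr (Quotient.sound ⟨a, rfl⟩)

variable [Fintype A] [Finite X]

lemma sum_natCard_fixedBy :
    ∑ a : A, Nat.card (fixedBy X a) = Nat.card (Quotient (orbitRel A X)) * Nat.card A := by
  classical
  have := Fintype.ofFinite X
  simpa only [Nat.card_eq_fintype_card] using sum_card_fixedBy_eq_card_orbits_mul_card_group A X

lemma sum_natCard_fixedBy_of_isPretransitive [IsPretransitive A X] [Nonempty X] :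
    ∑ a : A, Nat.card (fixedBy X a) = Nat.card A := by
  have : Nonempty (Quotient (orbitRel A X)) := ⟨Quotient.mk _ (Classical.arbitrary X)⟩
  have : Subsingleton (Quotient (orbitRel A X)) :=
    (pretransitive_iff_subsingleton_quotient A X).1 inferInstance
  rw [sum_natCard_fixedBy, Nat.card_unique, one_mul]

lemma sum_natCard_fixedBy_sq_of_isMultiplyPretransitive [Nontrivial X]
    (h2 : IsMultiplyPretransitive A X 2) :
    ∑ a : A, Nat.card (fixedBy X a) ^ 2 = 2 * Nat.card A := by
  have burnside := sum_natCard_fixedBy (A := A) (X := X × X)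
  rw [natCard_orbits_prod_of_isMultiplyPretransitive h2] at burnside
  rw [← burnside]
  refine Finset.sum_congr rfl fun a _ => ?_
  have : fixedBy (X × X) a = fixedBy X a ×ˢ fixedBy X a := by
    ext z
    simp [Prod.ext_iff]
  rw [this, sq, ← Nat.card_prod]
  exact (Nat.card_congr (Equiv.Set.prod _ _)).symm

lemma sum_natCard_fixedBy_sub_one_mul_inv [Nontrivial X] (h2 : IsMultiplyPretransitive A X 2) :
    ∑ a : A, ((Nat.card (fixedBy X a) : ℂ) - 1) * (Nat.card (fixedBy X a⁻¹) - 1) = Nat.card A := by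
  have : IsPretransitive A X := isPretransitive_of_is_two_pretransitive
  have hsum : ∑ a : A, (Nat.card (fixedBy X a) : ℂ) = Nat.card A :=
    mod_cast sum_natCard_fixedBy_of_isPretransitive
  have hsum_sq : ∑ a : A, (Nat.card (fixedBy X a) : ℂ) ^ 2 = 2 * Nat.card A :=
    mod_cast sum_natCard_fixedBy_sq_of_isMultiplyPretransitive h2
  calc
    _ = ∑ a : A, ((Nat.card (fixedBy X a) : ℂ) ^ 2 - 2 * Nat.card (fixedBy X a) + 1) :=
      Finset.sum_congr rfl fun a _ => by rw [fixedBy_inv]; ring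
    _ = _ := by
      rw [Finset.sum_add_distrib, Finset.sum_sub_distrib, ← Finset.mul_sum, hsum, hsum_sq]
      simp

end Counting

section ReducedPermutationRepresentation

variable {A X : Type*} [Fintype X] [DecidableEq X]

lemma sum_subtype_ne_of_eq_zero {x₀ : X} (f : X → ℂ) (hf : f x₀ = 0) :
    ∑ y : {x : X // x ≠ x₀}, f y = ∑ y, f y := by
  rw [Fintype.sum_eq_add_sum_subtype_ne f x₀, hf, zero_add]

variable [Group A] [MulAction A X]

/-- The permutation representation of `A` on `ℂ ^ X` modulo the constant functions, in the basis
given by the points other than `x₀`. -/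
def reducedPermRep (x₀ : X) : A →* Matrix {x : X // x ≠ x₀} {x : X // x ≠ x₀} ℂ where
  toFun a := Matrix.of fun x y =>
    (if (x : X) = a • (y : X) then 1 else 0) - (if (x : X) = a • x₀ then 1 else 0)
  map_one' := by
    ext x y
    simp [Matrix.one_apply, Subtype.ext_iff, x.2]
  map_mul' a b := by
    ext x z
    simp only [Matrix.of_apply, Matrix.mul_apply]
    rw [sum_subtype_ne_of_eq_zero (fun y => ((if (x : X) = a • y then 1 else 0) -
      (if (x : X) = a • x₀ then 1 else 0)) *
        ((if y = b • (z : X) then 1 else 0) - (if y = b • x₀ then (1 : ℂ) else 0))) (by simp)]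
    simp [mul_sub, Finset.sum_sub_distrib, mul_smul]

lemma trace_reducedPermRep (x₀ : X) (a : A) :
    (reducedPermRep x₀ a).trace = Nat.card (fixedBy X a) - 1 := by
  calc
    _ = ∑ y : X, ((if y = a • y then 1 else 0) - (if y = a • x₀ then (1 : ℂ) else 0)) :=
      sum_subtype_ne_of_eq_zero (fun y : X => (if y = a • y then (1 : ℂ) else 0) -
        (if y = a • x₀ then 1 else 0)) (by simp)
    _ = _ := by simp [Finset.sum_sub_distrib, fixedBy, Fintype.card_subtype, eq_comm]

end ReducedPermutationRepresentation

lemma exists_extendibleCharacter_of_isMultiplyPretransitive {S X : Type} [Group S] [Fintype S]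
    [MulAction S X] [MulAction (MulAut S) X] [Finite X] [Nontrivial X]
    (hconj : ∀ (s : S) (x : X), MulAut.conj s • x = s • x) (h2 : IsMultiplyPretransitive S X 2) :
    ∃ D : ExtendibleCharacter S,
      autStabilizer D.χ = ⊤ ∧ Fintype.card D.ι + 1 = Nat.card X := by
  classical
  have := Fintype.ofFinite X
  have : IsPretransitive S X := isPretransitive_of_is_two_pretransitive
  obtain ⟨x₀, x₁, hx⟩ := exists_pair_ne X
  have : Nonempty {x : X // x ≠ x₀} := ⟨x₁, hx.symm⟩
  let χ (s : S) : ℂ := (reducedPermRep x₀ (MulAut.conj s)).trace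
  have hχ (s : S) : χ s = Nat.card (fixedBy X s) - 1 := by
    rw [show χ s = _ from trace_reducedPermRep .., show fixedBy X (MulAut.conj s) = fixedBy X s
      from Set.ext fun x => by rw [mem_fixedBy, mem_fixedBy, hconj]]
  have hstab : autStabilizer χ = ⊤ := by
    refine eq_top_iff.2 fun α _ s => ?_
    have : MulAut.conj (α s) = α * MulAut.conj s * α⁻¹ := by ext; simp
    simp only [χ, this, map_mul]
    rw [Matrix.trace_mul_cycle, ← map_mul, inv_mul_cancel, map_one, one_mul]
  refine ⟨⟨χ, _, (reducedPermRep x₀).comp (Subgroup.subtype _), fun _ => hstab ▸ trivial,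
    fun _ => rfl, ?_, ?_⟩, hstab, ?_⟩
  · simp only [hχ]
    exact sum_natCard_fixedBy_sub_one_mul_inv h2
  · obtain ⟨s, hs⟩ := exists_smul_eq S x₀ x₁
    have hne : fixedBy X s ≠ Set.univ := fun h =>
      hx ((mem_fixedBy.1 (h ▸ Set.mem_univ x₀)).symm.trans hs)
    refine ⟨s, ?_⟩
    rw [hχ, hχ, ne_eq, sub_left_inj, Nat.cast_inj, fixedBy_one_eq_univ, Nat.card_univ]
    exact fun h => hne ((Set.eq_univ_iff_ncard _).2 h)
  · rw [← Nat.card_eq_fintype_card, ← Finite.card_option]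
    exact Nat.card_congr (Equiv.optionSubtypeNe x₀)

end DoublyTransitiveActions

section Steinberg

variable {F : Type} [Field F] [Finite F]

lemma exists_extendibleCharacter_steinberg [Fintype PSL(2, F)] :
    ∃ D : ExtendibleCharacter PSL(2, F),
      autStabilizer D.χ = ⊤ ∧ Fintype.card D.ι = Nat.card F := by
  obtain ⟨p, _⟩ := CharP.exists F
  have : Fact p.Prime := ⟨CharP.char_is_prime F p⟩
  have : Nontrivial (Sylow p PSL(2, F)) := ⟨_, _, lowerSylow_ne_upperSylow p⟩
  obtain ⟨D, hD, hcard⟩ := exists_extendibleCharacter_of_isMultiplyPretransitive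
    (X := Sylow p PSL(2, F)) (fun _ _ => rfl) (isMultiplyPretransitive_sylow_PSL_two p)
  rw [natCard_sylow_PSL_two] at hcard
  exact ⟨D, hD, Nat.succ_injective hcard⟩

end Steinberg

section QuadraticGaussSums

variable {F : Type} [Field F]

lemma exists_isPrimitive_addChar_ringAut_invariant [Finite F] :
    ∃ ψ : AddChar F ℂ, ψ.IsPrimitive ∧ ∀ (σ : RingAut F) (x : F), ψ (σ x) = ψ x := by
  obtain ⟨p, _⟩ := CharP.exists F
  have : Fact p.Prime := ⟨CharP.char_is_prime F p⟩
  let _ : Algebra (ZMod p) F := ZMod.algebra F p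
  refine ⟨(ZMod.stdAddChar (N := p)).compAddMonoidHom
    (Algebra.trace (ZMod p) F).toAddMonoidHom, .of_ne_one fun h => ?_, fun σ x => ?_⟩
  · obtain ⟨x, hx⟩ := Algebra.trace_surjective (ZMod p) F 1
    have h1 : ZMod.stdAddChar (N := p) (Algebra.trace (ZMod p) F x) = 1 := DFunLike.congr_fun h x
    rw [hx, ← AddChar.map_zero_eq_one (ZMod.stdAddChar (N := p))] at h1
    exact one_ne_zero (ZMod.injective_stdAddChar h1)
  · let τ : F ≃ₐ[ZMod p] F := AlgEquiv.ofRingEquiv (f := σ) fun r =>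
      RingHom.congr_fun (Subsingleton.elim (σ.toRingHom.comp (algebraMap (ZMod p) F)) _) r
    exact congrArg ZMod.stdAddChar (Algebra.trace_eq_of_algEquiv τ x)

variable [Fintype F] [DecidableEq F]

/-- The quadratic character of a finite field, with complex values. -/
def complexQuadraticChar (F : Type) [Field F] [Fintype F] [DecidableEq F] : MulChar F ℂ :=
  (quadraticChar F).ringHomComp (Int.castRingHom ℂ)

local notation "η" => complexQuadraticChar _

lemma complexQuadraticChar_mul_self {x : F} (hx : x ≠ 0) : η x * η x = 1 := by
  rw [← sq, complexQuadraticChar, MulChar.ringHomComp_apply, ← map_pow, quadraticChar_sq_one hx,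
    map_one]

lemma complexQuadraticChar_inv (x : F) : η x⁻¹ = η x := by
  obtain rfl | hx := eq_or_ne x 0
  · rw [inv_zero]
  · refine mul_left_cancel₀ (left_ne_zero_of_mul_eq_one (complexQuadraticChar_mul_self hx)) ?_
    rw [complexQuadraticChar_mul_self hx, ← map_mul, mul_inv_cancel₀ hx, map_one]

lemma complexQuadraticChar_of_isSquare {x : F} (hx : x ≠ 0) (h : IsSquare x) : η x = 1 := by
  obtain ⟨y, rfl⟩ := h
  rw [map_mul, complexQuadraticChar_mul_self (left_ne_zero_of_mul hx)]

lemma complexQuadraticChar_of_not_isSquare {x : F} (h : ¬IsSquare x) : η x = -1 := by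
  rw [complexQuadraticChar, MulChar.ringHomComp_apply,
    quadraticChar_neg_one_iff_not_isSquare.2 h, map_neg, map_one]

lemma complexQuadraticChar_neg (h : ¬IsSquare (-1 : F)) (x : F) : η (-x) = -η x := by
  rw [← neg_one_mul, map_mul, complexQuadraticChar_of_not_isSquare h, neg_one_mul]

lemma sum_comp_sq (hF : ringChar F ≠ 2) (f : F → ℂ) : ∑ y, f (y ^ 2) = ∑ z, (η z + 1) * f z := by
  rw [← Finset.sum_fiberwise_of_maps_to (g := fun y : F => y ^ 2) fun _ _ => Finset.mem_univ _]
  refine Finset.sum_congr rfl fun z _ => ?_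
  have hcard : (({y | y ^ 2 = z} : Finset F).card : ℂ) = η z + 1 := by
    have h := congrArg (Int.cast : ℤ → ℂ) (quadraticChar_card_sqrts hF z)
    rw [Int.cast_add, Int.cast_one, Int.cast_natCast] at h
    rw [complexQuadraticChar, MulChar.ringHomComp_apply, Int.coe_castRingHom, ← h]
    congr 2
    ext y
    simp
  rw [Finset.sum_congr rfl fun y hy => congrArg f (Finset.mem_filter.1 hy).2, Finset.sum_const,
    nsmul_eq_mul, hcard]

variable {ψ : AddChar F ℂ}

lemma gaussSum_mul_self (hF : ringChar F ≠ 2) (hψ : ψ.IsPrimitive) :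
    gaussSum η ψ * gaussSum η ψ = η (-1 : F) * Fintype.card F := by
  rw [← sq, gaussSum_sq (χ := complexQuadraticChar F) ?_ ((quadraticChar_isQuadratic F).comp _) hψ]
  rw [complexQuadraticChar, Ne, MulChar.ringHomComp_eq_one_iff Int.cast_injective]
  exact quadraticChar_ne_one hF

lemma gaussSum_ne_zero (hF : ringChar F ≠ 2) (hψ : ψ.IsPrimitive) : gaussSum η ψ ≠ 0 := fun h => by
  have hsq := gaussSum_mul_self hF hψ
  have hη := complexQuadraticChar_mul_self (neg_ne_zero.2 (one_ne_zero (α := F)))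
  rw [h, zero_mul, eq_comm, mul_eq_zero] at hsq
  simp [left_ne_zero_of_mul_eq_one hη] at hsq

lemma sum_addChar_mul (hψ : ψ.IsPrimitive) (b : F) :
    ∑ y, ψ (b * y) = if b = 0 then (Fintype.card F : ℂ) else 0 := by
  simpa only [mul_comm b, Nat.cast_ite, Nat.cast_zero] using AddChar.sum_mulShift b hψ

lemma sum_addChar_mul_sq (hF : ringChar F ≠ 2) (hψ : ψ.IsPrimitive) {a : F} (ha : a ≠ 0) :
    ∑ y, ψ (a * y ^ 2) = η a * gaussSum η ψ := by
  have hshift : ∑ z, η z * ψ (a * z) = gaussSum η (ψ.mulShift a) := rfl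
  rw [sum_comp_sq hF fun z => ψ (a * z)]
  simp only [add_mul, one_mul, Finset.sum_add_distrib]
  rw [sum_addChar_mul hψ, if_neg ha, add_zero, hshift,
    ← gaussSum_mulShift η ψ (Units.mk0 a ha), ← mul_assoc, Units.val_mk0,
    complexQuadraticChar_mul_self ha, one_mul]

lemma sum_addChar_quadratic (hF : ringChar F ≠ 2) (hψ : ψ.IsPrimitive) {a : F} (ha : a ≠ 0)
    (b : F) : ∑ y, ψ (a * y ^ 2 - 2 * b * y) = ψ (-b ^ 2 / a) * (η a * gaussSum η ψ) := by
  rw [← sum_addChar_mul_sq hF hψ ha,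
    ← (Equiv.subRight (b / a)).sum_comp fun y => ψ (a * y ^ 2), Finset.mul_sum]
  refine Finset.sum_congr rfl fun y _ => ?_
  rw [← AddChar.map_add_eq_mul, Equiv.subRight_apply]
  congr 1
  field

end QuadraticGaussSums

section WeilRepresentation

variable {F : Type} [Field F] [Fintype F] [DecidableEq F]

local notation "η" => complexQuadraticChar _

/-- The kernel of the Weil representation of `SL(2, F)` on functions on `F`: the entry at `(x, y)`
of the operator attached to the matrix with rows `(a, b)` and `(c, d)`. -/
def weilKernel (ψ : AddChar F ℂ) (a b c d x y : F) : ℂ :=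
  if c = 0 then if y = a * x then η a * ψ (a * b * x ^ 2) else 0
  else η c * (gaussSum η ψ)⁻¹ * ψ ((a * x ^ 2 - 2 * x * y + d * y ^ 2) / c)

variable {ψ : AddChar F ℂ}

lemma weilKernel_zero (a b d x y : F) :
    weilKernel ψ a b 0 d x y = if y = a * x then η a * ψ (a * b * x ^ 2) else 0 := if_pos rfl

lemma weilKernel_of_ne_zero (a b d x y : F) {c : F} (hc : c ≠ 0) :
    weilKernel ψ a b c d x y =
      η c * (gaussSum η ψ)⁻¹ * ψ ((a * x ^ 2 - 2 * x * y + d * y ^ 2) / c) := if_neg hc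

lemma weilKernel_neg_left (a b c d x y : F) :
    weilKernel ψ a b c d (-x) y = weilKernel ψ a b c d x (-y) := by
  simp [weilKernel, neg_eq_iff_eq_neg]

lemma sum_weilKernel_mul_of_left_eq_zero {a b d a' b' c' d' : F} (h : a * d = 1)
    (h' : a' * d' - b' * c' = 1) (x z : F) :
    ∑ y, weilKernel ψ a b 0 d x y * weilKernel ψ a' b' c' d' y z =
      weilKernel ψ (a * a' + b * c') (a * b' + b * d') (d * c') (d * d') x z := by
  have ha : a ≠ 0 := left_ne_zero_of_mul_eq_one h
  obtain rfl : d = a⁻¹ := eq_inv_of_mul_eq_one_right h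
  simp only [weilKernel_zero, ite_mul, zero_mul, Finset.sum_ite_eq', Finset.mem_univ, if_true]
  obtain rfl | hc' := eq_or_ne c' 0
  · rw [mul_zero, mul_zero, add_zero, weilKernel_zero, weilKernel_zero, mul_ite, mul_zero,
      mul_mul_mul_comm, ← map_mul, ← AddChar.map_add_eq_mul, mul_left_comm a' a x, mul_assoc a a' x]
    congr 3
    linear_combination -a * b * x ^ 2 * h'
  · have hexp : ψ (a * b * x ^ 2) * ψ ((a' * (a * x) ^ 2 - 2 * (a * x) * z + d' * z ^ 2) / c') =
        ψ (((a * a' + b * c') * x ^ 2 - 2 * x * z + a⁻¹ * d' * z ^ 2) / (a⁻¹ * c')) := by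
      rw [← AddChar.map_add_eq_mul]
      congr 1
      field
    rw [weilKernel_of_ne_zero _ _ _ _ _ hc',
      weilKernel_of_ne_zero _ _ _ _ _ (mul_ne_zero (inv_ne_zero ha) hc'), map_mul η,
      complexQuadraticChar_inv, ← hexp]
    ring

lemma sum_weilKernel_mul_of_right_eq_zero {a b c d a' b' d' : F} (hc : c ≠ 0)
    (h' : a' * d' = 1) (x z : F) :
    ∑ y, weilKernel ψ a b c d x y * weilKernel ψ a' b' 0 d' y z =
      weilKernel ψ (a * a') (a * b' + b * d') (c * a') (c * b' + d * d') x z := by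
  have ha' : a' ≠ 0 := left_ne_zero_of_mul_eq_one h'
  obtain rfl : d' = a'⁻¹ := eq_inv_of_mul_eq_one_right h'
  have hz (y : F) : z = a' * y ↔ y = a'⁻¹ * z := by rw [eq_comm, eq_inv_mul_iff_mul_eq₀ ha']
  simp only [weilKernel_zero, hz, mul_ite, mul_zero, Finset.sum_ite_eq', Finset.mem_univ, if_true]
  have hexp : ψ ((a * x ^ 2 - 2 * x * (a'⁻¹ * z) + d * (a'⁻¹ * z) ^ 2) / c) *
      ψ (a' * b' * (a'⁻¹ * z) ^ 2) =
      ψ ((a * a' * x ^ 2 - 2 * x * z + (c * b' + d * a'⁻¹) * z ^ 2) / (c * a')) := by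
    rw [← AddChar.map_add_eq_mul]
    congr 1
    field
  rw [weilKernel_of_ne_zero _ _ _ _ _ hc, weilKernel_of_ne_zero _ _ _ _ _ (mul_ne_zero hc ha'),
    map_mul η, ← hexp]
  ring

lemma sum_weilKernel_mul_eq_sum_addChar {a b c d a' b' c' d' : F} (hc : c ≠ 0) (hc' : c' ≠ 0)
    (x z : F) :
    ∑ y, weilKernel ψ a b c d x y * weilKernel ψ a' b' c' d' y z =
      η c * η c' * (gaussSum η ψ * gaussSum η ψ)⁻¹ * ψ (a * x ^ 2 / c + d' * z ^ 2 / c') *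
        ∑ y, ψ ((c * a' + d * c') / (c * c') * y ^ 2 - 2 * (x / c + z / c') * y) := by
  rw [Finset.mul_sum]
  refine Finset.sum_congr rfl fun y _ => ?_
  have hexp : ψ ((a * x ^ 2 - 2 * x * y + d * y ^ 2) / c) *
      ψ ((a' * y ^ 2 - 2 * y * z + d' * z ^ 2) / c') =
      ψ (a * x ^ 2 / c + d' * z ^ 2 / c') *
        ψ ((c * a' + d * c') / (c * c') * y ^ 2 - 2 * (x / c + z / c') * y) := by
    rw [← AddChar.map_add_eq_mul, ← AddChar.map_add_eq_mul]
    congr 1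
    field
  rw [weilKernel_of_ne_zero _ _ _ _ _ hc, weilKernel_of_ne_zero _ _ _ _ _ hc', mul_inv,
    mul_assoc _ (ψ _) (ψ _), ← hexp]
  ring

variable (hF : ringChar F ≠ 2) (hψ : ψ.IsPrimitive) {a b c d a' b' c' d' : F}
include hF hψ

lemma sum_weilKernel_mul_of_ne_zero_of_eq_zero (h : a * d - b * c = 1) (h' : a' * d' - b' * c' = 1)
    (hc : c ≠ 0) (hc' : c' ≠ 0) (hcc' : c * a' + d * c' = 0) (x z : F) :
    ∑ y, weilKernel ψ a b c d x y * weilKernel ψ a' b' c' d' y z =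
      weilKernel ψ (a * a' + b * c') (a * b' + b * d') 0 (c * b' + d * d') x z := by
  have h2 : (2 : F) ≠ 0 := Ring.two_ne_zero hF
  have hg := gaussSum_ne_zero hF hψ
  have ha : a * a' + b * c' = -1 * c' * c⁻¹ := by grind
  have hz : -2 * (x / c + z / c') = 0 ↔ z = (a * a' + b * c') * x := by grind
  rw [sum_weilKernel_mul_eq_sum_addChar hc hc', hcc', weilKernel_zero]
  simp only [zero_div, zero_mul, zero_sub, ← neg_mul]
  rw [sum_addChar_mul hψ, if_congr hz rfl rfl]
  split_ifs with hxz
  · have hη : η (a * a' + b * c') = η (-1 : F) * (η c * η c') := by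
      rw [ha, map_mul, map_mul, complexQuadraticChar_inv]
      ring
    have hexp : a * x ^ 2 / c + d' * z ^ 2 / c' =
        (a * a' + b * c') * (a * b' + b * d') * x ^ 2 := by
      grind
    have hη_sq := complexQuadraticChar_mul_self (neg_ne_zero.2 (one_ne_zero (α := F)))
    rw [hη, hexp]
    have hg2 := mul_inv_cancel₀ (mul_ne_zero hg hg)
    rw [gaussSum_mul_self hF hψ] at hg2 ⊢
    linear_combination η c * η c' * ψ ((a * a' + b * c') * (a * b' + b * d') * x ^ 2) *
      (η (-1 : F) * hg2 - (η (-1 : F) * Fintype.card F)⁻¹ * Fintype.card F * hη_sq)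
  · rw [mul_zero]

lemma sum_weilKernel_mul_of_ne_zero_of_ne_zero (h : a * d - b * c = 1) (h' : a' * d' - b' * c' = 1)
    (hc : c ≠ 0) (hc' : c' ≠ 0) (hcc' : c * a' + d * c' ≠ 0) (x z : F) :
    ∑ y, weilKernel ψ a b c d x y * weilKernel ψ a' b' c' d' y z =
      weilKernel ψ (a * a' + b * c') (a * b' + b * d') (c * a' + d * c') (c * b' + d * d') x z := by
  have hη : η ((c * a' + d * c') / (c * c')) = η (c * a' + d * c') * (η c * η c') := by
    rw [div_eq_mul_inv, map_mul, complexQuadraticChar_inv, map_mul]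
  have hexp : ψ (a * x ^ 2 / c + d' * z ^ 2 / c') *
      ψ (-(x / c + z / c') ^ 2 / ((c * a' + d * c') / (c * c'))) =
      ψ (((a * a' + b * c') * x ^ 2 - 2 * x * z + (c * b' + d * d') * z ^ 2) /
        (c * a' + d * c')) := by
    rw [← AddChar.map_add_eq_mul]
    congr 1
    generalize he : c * a' + d * c' = e at hcc' ⊢
    field_simp
    grind
  rw [sum_weilKernel_mul_eq_sum_addChar hc hc', weilKernel_of_ne_zero _ _ _ _ _ hcc',
    sum_addChar_quadratic hF hψ (div_ne_zero hcc' (mul_ne_zero hc hc')), hη, ← hexp, mul_inv]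
  have hg := inv_mul_cancel₀ (gaussSum_ne_zero hF hψ)
  have hc2 := complexQuadraticChar_mul_self hc
  have hc2' := complexQuadraticChar_mul_self hc'
  linear_combination (η (c * a' + d * c') * ψ (a * x ^ 2 / c + d' * z ^ 2 / c') *
    ψ (-(x / c + z / c') ^ 2 / ((c * a' + d * c') / (c * c'))) * (gaussSum η ψ)⁻¹) *
    ((η c * η c) * (η c' * η c') * hg + η c' * η c' * hc2 + hc2')

lemma sum_weilKernel_mul (h : a * d - b * c = 1) (h' : a' * d' - b' * c' = 1) (x z : F) :
    ∑ y, weilKernel ψ a b c d x y * weilKernel ψ a' b' c' d' y z =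
      weilKernel ψ (a * a' + b * c') (a * b' + b * d') (c * a' + d * c') (c * b' + d * d') x z := by
  obtain rfl | hc := eq_or_ne c 0
  · rw [sum_weilKernel_mul_of_left_eq_zero (by linear_combination h) h', zero_mul, zero_mul,
      zero_add, zero_add]
  obtain rfl | hc' := eq_or_ne c' 0
  · rw [sum_weilKernel_mul_of_right_eq_zero hc (by linear_combination h'), mul_zero, mul_zero,
      add_zero, add_zero]
  by_cases hcc' : c * a' + d * c' = 0
  · rw [sum_weilKernel_mul_of_ne_zero_of_eq_zero hF hψ h h' hc hc' hcc', hcc']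
  · exact sum_weilKernel_mul_of_ne_zero_of_ne_zero hF hψ h h' hc hc' hcc' x z

/-- The Weil representation of `SL(2, F)` on functions on `F`. -/
def weilRep : SL(2, F) →* Matrix F F ℂ where
  toFun s := Matrix.of (weilKernel ψ (s 0 0) (s 0 1) (s 1 0) (s 1 1))
  map_one' := by
    ext x y
    simp [weilKernel, Matrix.one_apply, eq_comm]
  map_mul' s t := by
    obtain ⟨a, b, c, d, h, rfl⟩ := exists_eq_slOf s
    obtain ⟨a', b', c', d', h', rfl⟩ := exists_eq_slOf t
    rw [slOf_mul]
    ext x z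
    exact (sum_weilKernel_mul hF hψ h h' x z).symm

lemma weilRep_slOf_apply (h : a * d - b * c = 1) (x y : F) :
    weilRep hF hψ (slOf a b c d h) x y = weilKernel ψ a b c d x y := rfl

lemma weilRep_apply_neg_left (s : SL(2, F)) (x y : F) :
    weilRep hF hψ s (-x) y = weilRep hF hψ s x (-y) := weilKernel_neg_left ..

end WeilRepresentation

section HalfWeilRepresentation

variable {F : Type} [Field F]

/-- The nonzero squares of a field. If `-1` is not a square of the finite field `F`, then every
nonzero element of `F` is, up to sign, exactly one of them. -/
abbrev NonzeroSquare (F : Type) [Field F] : Type := {x : F // x ≠ 0 ∧ IsSquare x}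

section HalfSystem

variable (hF : ¬IsSquare (-1 : F))

section Finite

variable [Finite F]
include hF

lemma ringChar_ne_two_of_not_isSquare_neg_one : ringChar F ≠ 2 := fun h =>
  hF (FiniteField.isSquare_of_char_two h (-1))

lemma isSquare_or_isSquare_neg (x : F) : IsSquare x ∨ IsSquare (-x) := by
  classical
  have := Fintype.ofFinite F
  by_contra! h
  have hx := complexQuadraticChar_of_not_isSquare h.1
  have hx' := complexQuadraticChar_of_not_isSquare h.2
  rw [complexQuadraticChar_neg hF, hx] at hx'
  norm_num at hx'

lemma nonzeroSquare_coe_ne_neg (x y : NonzeroSquare F) : (x : F) ≠ -y := fun h => by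
  classical
  have := Fintype.ofFinite F
  have hx := complexQuadraticChar_of_isSquare x.2.1 x.2.2
  rw [h, complexQuadraticChar_neg hF, complexQuadraticChar_of_isSquare y.2.1 y.2.2] at hx
  norm_num at hx

lemma bijective_zero_or_nonzeroSquare_or_neg :
    Function.Bijective fun o : Option (NonzeroSquare F ⊕ NonzeroSquare F) =>
      o.elim (0 : F) (Sum.elim (fun x => x) fun x => -x) := by
  constructor
  · rintro (_ | x | x) (_ | y | y) h
    · rfl
    · exact absurd h.symm y.2.1
    · exact absurd h.symm (neg_ne_zero.2 y.2.1)
    · exact absurd h x.2.1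
    · exact congrArg (fun x => some (Sum.inl x)) (Subtype.ext h)
    · exact absurd h (nonzeroSquare_coe_ne_neg hF x y)
    · exact absurd h (neg_ne_zero.2 x.2.1)
    · exact absurd h.symm (nonzeroSquare_coe_ne_neg hF y x)
    · exact congrArg (fun x => some (Sum.inr x)) (Subtype.ext (neg_injective h))
  · intro y
    obtain rfl | hy := eq_or_ne y 0
    · exact ⟨none, rfl⟩
    obtain h | h := isSquare_or_isSquare_neg hF y
    · exact ⟨some (Sum.inl ⟨y, hy, h⟩), rfl⟩
    · exact ⟨some (Sum.inr ⟨-y, neg_ne_zero.2 hy, h⟩), neg_neg y⟩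

end Finite

variable [Fintype F] [DecidableEq F]

include hF in
lemma sum_eq_sum_nonzeroSquare (f : F → ℂ) :
    ∑ y, f y = f 0 + ∑ y : NonzeroSquare F, (f y + f (-y)) := by
  rw [← (bijective_zero_or_nonzeroSquare_or_neg hF).sum_comp f, Fintype.sum_option,
    Fintype.sum_sum_type, Finset.sum_add_distrib]
  rfl

include hF in
lemma card_eq_one_add_two_mul_card_nonzeroSquare :
    Fintype.card F = 1 + 2 * Fintype.card (NonzeroSquare F) := by
  rw [← Fintype.card_of_bijective (bijective_zero_or_nonzeroSquare_or_neg hF),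
    Fintype.card_option, Fintype.card_sum]
  ring

/-- The restriction to odd functions of a representation on functions on `F` which commutes with
`x ↦ -x`, in the basis of odd functions indexed by the nonzero squares. -/
def oddPart {G : Type} [Monoid G] (ρ : G →* Matrix F F ℂ)
    (hρ : ∀ g x y, ρ g (-x) y = ρ g x (-y)) :
    G →* Matrix (NonzeroSquare F) (NonzeroSquare F) ℂ where
  toFun g := Matrix.of fun x y => ρ g x y - ρ g x (-y)
  map_one' := by
    ext x y
    simp [Matrix.one_apply, Subtype.ext_iff, nonzeroSquare_coe_ne_neg hF x y]
  map_mul' g h := by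
    ext x z
    have hzero : ρ h 0 (-z) = ρ h 0 z := by rw [← hρ, neg_zero]
    simp only [Matrix.of_apply, Matrix.mul_apply, map_mul, ← Finset.sum_sub_distrib, ← mul_sub]
    rw [sum_eq_sum_nonzeroSquare hF, hzero, sub_self, mul_zero, zero_add]
    refine Finset.sum_congr rfl fun y _ => ?_
    rw [hρ, hρ, neg_neg]
    ring

end HalfSystem

local notation "η" => complexQuadraticChar _

variable [Fintype F] [DecidableEq F] (hF : ¬IsSquare (-1 : F))
  {ψ : AddChar F ℂ} (hψ : ψ.IsPrimitive)

/-- One half of the Weil representation: its restriction to odd functions, which is trivial on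
`-1` because `-1` is not a square. -/
def halfWeilRep : PSL(2, F) →* Matrix (NonzeroSquare F) (NonzeroSquare F) ℂ :=
  QuotientGroup.lift (Subgroup.center SL(2, F))
    (oddPart hF (weilRep (ringChar_ne_two_of_not_isSquare_neg_one hF) hψ)
      (weilRep_apply_neg_left _ hψ)) fun s hs => by
    obtain rfl | rfl := mem_center_SL_two_iff.1 hs
    · exact map_one _
    · rw [← slOf_one, slOf_neg]
      ext x y
      obtain rfl | hxy := eq_or_ne x y
      · simp [oddPart, weilRep_slOf_apply, weilKernel, nonzeroSquare_coe_ne_neg hF x x,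
          complexQuadraticChar_of_not_isSquare hF]
      · simp [oddPart, weilRep_slOf_apply, weilKernel, nonzeroSquare_coe_ne_neg hF y x,
          Subtype.coe_inj, hxy, hxy.symm]

lemma halfWeilRep_pslOf_apply {a b c d : F} (h : a * d - b * c = 1) (x y : NonzeroSquare F) :
    halfWeilRep hF hψ (pslOf a b c d h) x y =
      weilKernel ψ a b c d x y - weilKernel ψ a b c d x (-y) := rfl

lemma halfWeilRep_upper (b : F) :
    halfWeilRep hF hψ (upper b) = Matrix.diagonal fun x : NonzeroSquare F => ψ (b * x ^ 2) := by
  ext x y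
  have hxy := nonzeroSquare_coe_ne_neg hF x y
  simp [upper, halfWeilRep_pslOf_apply, weilKernel, Matrix.diagonal_apply, Subtype.ext_iff,
    hxy.symm, eq_comm]

lemma halfWeilRep_diagonal_apply (a x y : NonzeroSquare F) :
    halfWeilRep hF hψ (pslOf a 0 0 a⁻¹ (by simp [a.2.1])) x y =
      if (y : F) = a * x then 1 else 0 := by
  have hne : -(y : F) ≠ a * x := fun h =>
    nonzeroSquare_coe_ne_neg hF ⟨a * x, mul_ne_zero a.2.1 x.2.1, a.2.2.mul x.2.2⟩ y h.symm
  simp [halfWeilRep_pslOf_apply, weilKernel, hne, complexQuadraticChar_of_isSquare a.2.1 a.2.2]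

lemma apply_eq_zero_of_commute_halfWeilRep_upper
    {X : Matrix (NonzeroSquare F) (NonzeroSquare F) ℂ}
    (hX : ∀ b, X * halfWeilRep hF hψ (upper b) = halfWeilRep hF hψ (upper b) * X)
    {x y : NonzeroSquare F} (hxy : x ≠ y) : X x y = 0 := by
  have hne : (y : F) ^ 2 - x ^ 2 ≠ 0 := fun h => by
    obtain h | h := sq_eq_sq_iff_eq_or_eq_neg.1 (sub_eq_zero.1 h)
    · exact hxy (Subtype.ext h.symm)
    · exact nonzeroSquare_coe_ne_neg hF y x h
  by_contra hX0
  refine hψ hne (DFunLike.ext _ _ fun b => ?_)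
  have h := congrFun (congrFun (hX b) x) y
  rw [halfWeilRep_upper, Matrix.mul_diagonal, Matrix.diagonal_mul, mul_comm] at h
  rw [AddChar.mulShift_apply, sub_mul, mul_comm, mul_comm (_ ^ 2), AddChar.map_sub_eq_div,
    mul_right_cancel₀ hX0 h, div_self (ψ.val_isUnit _).ne_zero, AddChar.one_apply]

lemma hasScalarCommutant_halfWeilRep : HasScalarCommutant (halfWeilRep hF hψ) := fun X hX => by
  have hdiag {x y : NonzeroSquare F} (hxy : x ≠ y) : X x y = 0 :=
    apply_eq_zero_of_commute_halfWeilRep_upper hF hψ (fun b => hX (upper b)) hxy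
  let one : NonzeroSquare F := ⟨1, one_ne_zero, IsSquare.one⟩
  refine ⟨X one one, ?_⟩
  ext x y
  obtain rfl | hxy := eq_or_ne x y
  · have h := congrFun (congrFun (hX (pslOf x 0 0 x⁻¹ (by simp [x.2.1]))) one) x
    rw [Matrix.mul_apply, Matrix.mul_apply,
      Finset.sum_eq_single one (fun z _ hz => by rw [hdiag hz.symm, zero_mul]) (by simp),
      Finset.sum_eq_single x (fun z _ hz => by rw [hdiag hz, mul_zero]) (by simp),
      halfWeilRep_diagonal_apply, if_pos (mul_one _).symm, mul_one, one_mul] at h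
    simp [h]
  · simp [hdiag hxy, hxy]

lemma one_add_two_mul_trace_halfWeilRep_upper {a : F} (ha : a ≠ 0) :
    1 + 2 * (halfWeilRep hF hψ (upper a)).trace = η a * gaussSum η ψ := by
  rw [← sum_addChar_mul_sq (ringChar_ne_two_of_not_isSquare_neg_one hF) hψ ha,
    sum_eq_sum_nonzeroSquare hF, halfWeilRep_upper, Matrix.trace_diagonal, Finset.mul_sum]
  simp [two_mul]

lemma isSquare_of_trace_halfWeilRep_upper_eq {t : F} (ht : t ≠ 0)
    (h : (halfWeilRep hF hψ (upper t)).trace = (halfWeilRep hF hψ (upper 1)).trace) :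
    IsSquare t := by
  have hg := gaussSum_ne_zero (ringChar_ne_two_of_not_isSquare_neg_one hF) hψ
  have hη : η t = η (1 : F) := mul_right_cancel₀ hg (by
    rw [← one_add_two_mul_trace_halfWeilRep_upper hF hψ ht, h,
      one_add_two_mul_trace_halfWeilRep_upper hF hψ one_ne_zero])
  by_contra hsq
  rw [complexQuadraticChar_of_not_isSquare hsq, map_one] at hη
  norm_num at hη

end HalfWeilRepresentation

section AutomorphismsPSL

variable {F : Type} [Field F]

/-- The action on the central quotient of a group of the automorphisms of the group. -/
def quotientCenterAut (G : Type*) [Group G] : MulAut G →* MulAut (G ⧸ Subgroup.center G) where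
  toFun α := QuotientGroup.congr _ _ α (Subgroup.characteristic_iff_map_eq.1 inferInstance α)
  map_one' := by
    ext x
    obtain ⟨s, rfl⟩ := QuotientGroup.mk_surjective x
    rfl
  map_mul' α β := by
    ext x
    obtain ⟨s, rfl⟩ := QuotientGroup.mk_surjective x
    rfl

/-- The action of the field automorphisms on `PSL(2, F)` by application to matrix entries. -/
def fieldAut : RingAut F →* MulAut PSL(2, F) :=
  (quotientCenterAut SL(2, F)).comp
    { toFun σ :=
        { Matrix.SpecialLinearGroup.map (σ : F →+* F) with
          invFun := Matrix.SpecialLinearGroup.map (σ.symm : F →+* F)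
          left_inv s := by ext; simp
          right_inv s := by ext; simp }
      map_one' := rfl
      map_mul' _ _ := rfl }

/-- Conjugation of `SL(2, F)` by the diagonal matrix with entries `t` and `1`. -/
def diagConj (t : Fˣ) : SL(2, F) →* SL(2, F) where
  toFun s := slOf (s 0 0) (t * s 0 1) (t⁻¹ * s 1 0) (s 1 1) (by
    have hdet := s.det_coe
    rw [Matrix.det_fin_two] at hdet
    linear_combination hdet - s 0 1 * s 1 0 * t.mul_inv)
  map_one' := by
    rw [← slOf_one, slOf_inj]
    simp [slOf]
  map_mul' s s' := by
    obtain ⟨a, b, c, d, h, rfl⟩ := exists_eq_slOf s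
    obtain ⟨a', b', c', d', h', rfl⟩ := exists_eq_slOf s'
    have ht := t.mul_inv
    simp only [slOf_mul, slOf_inj]
    simp only [slOf, Matrix.of_apply, Matrix.cons_val', Matrix.cons_val_zero, Matrix.cons_val_one]
    grind

lemma diagConj_slOf (t : Fˣ) {a b c d : F} (h : a * d - b * c = 1) :
    diagConj t (slOf a b c d h) = slOf a (t * b) (t⁻¹ * c) d
      (by linear_combination h - b * c * t.mul_inv) := rfl

lemma diagConj_comp_diagConj_inv (t : Fˣ) :
    (diagConj t).comp (diagConj t⁻¹) = MonoidHom.id SL(2, F) := by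
  ext1 s
  obtain ⟨a, b, c, d, h, rfl⟩ := exists_eq_slOf s
  simp [diagConj_slOf]

/-- The automorphism of `PSL(2, F)` induced by the diagonal matrix with entries `t` and `1`. -/
def diagAut (t : Fˣ) : MulAut PSL(2, F) :=
  quotientCenterAut SL(2, F) ((diagConj t).toMulEquiv (diagConj t⁻¹)
    (by simpa using diagConj_comp_diagConj_inv t⁻¹) (diagConj_comp_diagConj_inv t))

lemma fieldAut_pslOf (σ : RingAut F) {a b c d : F} (h : a * d - b * c = 1) :
    fieldAut σ (pslOf a b c d h) =
      pslOf (σ a) (σ b) (σ c) (σ d) (by rw [← map_mul, ← map_mul, ← map_sub, h, map_one]) := by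
  refine congrArg _ (Subtype.ext ?_)
  ext i j
  fin_cases i <;> fin_cases j <;> rfl

lemma fieldAut_upper (σ : RingAut F) (b : F) : fieldAut σ (upper b) = upper (σ b) := by
  simp [upper, fieldAut_pslOf]

lemma fieldAut_lower (σ : RingAut F) (c : F) : fieldAut σ (lower c) = lower (σ c) := by
  simp [lower, fieldAut_pslOf]

lemma diagAut_pslOf (t : Fˣ) {a b c d : F} (h : a * d - b * c = 1) :
    diagAut t (pslOf a b c d h) = pslOf a (t * b) (t⁻¹ * c) d
      (by linear_combination h - b * c * t.mul_inv) := rfl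

lemma diagAut_upper (t : Fˣ) (b : F) : diagAut t (upper b) = upper (t * b) := by
  simp [upper, diagAut_pslOf]

lemma diagAut_lower (t : Fˣ) (c : F) : diagAut t (lower c) = lower (t⁻¹ * c) := by
  simp [lower, diagAut_pslOf]

lemma mulAut_PSL_two_ext {α β : MulAut PSL(2, F)} (hupper : ∀ b, α (upper b) = β (upper b))
    (hlower : ∀ c, α (lower c) = β (lower c)) : α = β := by
  have htop := PSL_two_closure (α.toMonoidHom.eqLocus β.toMonoidHom) hupper hlower
  ext x
  exact htop.ge (Subgroup.mem_top x)

lemma diagAut_mul (s t : Fˣ) : diagAut (s * t) = diagAut s * diagAut t :=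
  mulAut_PSL_two_ext (by simp [diagAut_upper, mul_assoc])
    (by simp [diagAut_lower, mul_comm, mul_left_comm])

lemma fieldAut_mul_diagAut (σ : RingAut F) (t : Fˣ) :
    fieldAut σ * diagAut t = diagAut (Units.map σ t) * fieldAut σ :=
  mulAut_PSL_two_ext (by simp [diagAut_upper, fieldAut_upper])
    (by simp [diagAut_lower, fieldAut_lower])

lemma diagAut_mem_range_conj {t : Fˣ} (ht : IsSquare (t : F)) :
    diagAut t ∈ (MulAut.conj (G := PSL(2, F))).range := by
  obtain ⟨z, hz⟩ := ht
  have hz0 : z ≠ 0 := by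
    rintro rfl
    simp at hz
  refine ⟨pslOf z 0 0 z⁻¹ (by simp [hz0]), mulAut_PSL_two_ext (fun b => ?_) fun c => ?_⟩
  · rw [MulAut.conj_apply, pslOf_conj_upper, diagAut_upper, hz, sq]
  · simp [lower, MulAut.conj_apply, diagAut_pslOf, pslOf_mul, pslOf_inv, pslOf_inj, hz]
    grind

lemma mul_conj_eq_conj_mul {P : Type*} [Group P] (α : MulAut P) (x : P) :
    α * MulAut.conj x = MulAut.conj (α x) * α := by
  ext y
  simp

/-- The group `PΣL(2, F)` acting on `PSL(2, F)`. -/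
def semilinearAut : PSL(2, F) ⋊[fieldAut] RingAut F →* MulAut PSL(2, F) :=
  SemidirectProduct.lift MulAut.conj fieldAut fun σ => by
    refine MonoidHom.ext fun x => ?_
    exact (mul_inv_eq_of_eq_mul (mul_conj_eq_conj_mul (fieldAut σ) x)).symm

lemma semilinearAut_mk (x : PSL(2, F)) (σ : RingAut F) :
    semilinearAut ⟨x, σ⟩ = MulAut.conj x * fieldAut σ := rfl

lemma semilinearAut_inl (x : PSL(2, F)) :
    semilinearAut (SemidirectProduct.inl x) = MulAut.conj x :=
  SemidirectProduct.lift_inl ..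

lemma inl_semilinearAut (p : PSL(2, F) ⋊[fieldAut] RingAut F) (x : PSL(2, F)) :
    SemidirectProduct.inl (semilinearAut p x) = p * SemidirectProduct.inl x * p⁻¹ := by
  obtain ⟨y, σ⟩ := p
  rw [SemidirectProduct.mk_eq_inl_mul_inr, semilinearAut, map_mul, SemidirectProduct.lift_inl,
    SemidirectProduct.lift_inr]
  simp [SemidirectProduct.inl_aut, mul_assoc]

lemma conj_mul_diagAut_mul_fieldAut_mem_range {x : PSL(2, F)} {t : Fˣ} (ht : IsSquare (t : F))
    (σ : RingAut F) :
    MulAut.conj x * diagAut t * fieldAut σ ∈ (semilinearAut (F := F)).range := by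
  obtain ⟨y, hy⟩ := diagAut_mem_range_conj ht
  exact ⟨⟨x * y, σ⟩, by rw [semilinearAut_mk, map_mul, hy]⟩

lemma semilinearAut_injective : Function.Injective (semilinearAut (F := F)) := by
  refine (injective_iff_map_eq_one _).2 ?_
  rintro ⟨x, σ⟩ h
  rw [semilinearAut_mk] at h
  have hx_upper := DFunLike.congr_fun h (upper 1)
  have hx_lower := DFunLike.congr_fun h (lower 1)
  simp only [MulAut.mul_apply, fieldAut_upper, fieldAut_lower, map_one, MulAut.conj_apply,
    MulAut.one_apply, mul_inv_eq_iff_eq_mul] at hx_upper hx_lower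
  obtain ⟨e, rfl⟩ := mem_upperUnipotent.1 (mem_upperUnipotent_of_commute one_ne_zero hx_upper)
  obtain rfl : e = 0 := by
    simp only [upper, lower, pslOf_mul, pslOf_inj] at hx_lower
    grind
  have hσ : σ = 1 := RingEquiv.ext fun b => upper_injective (by
    simpa [upper_zero, fieldAut_upper] using DFunLike.congr_fun h (upper b))
  rw [upper_zero, hσ]
  rfl

/-- Hua's identity `a⁻¹ + (1 - a)⁻¹ = (a * (1 - a))⁻¹` expresses squares through inverses. -/
lemma map_mul_self_of_mul_map_inv_eq_one {K L : Type*} [Field K] [Field L] {φ φ' : K →+ L}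
    (hone : φ 1 = 1) (hinv : ∀ a ≠ 0, φ a * φ' a⁻¹ = 1) (a : K) : φ (a * a) = φ a * φ a := by
  obtain rfl | ha := eq_or_ne a 0
  · simp
  obtain rfl | ha' := eq_or_ne a 1
  · simp [hone]
  rw [ne_comm, ← sub_ne_zero] at ha'
  have hua : φ' a⁻¹ + φ' (1 - a)⁻¹ = φ' (a * (1 - a))⁻¹ := by
    rw [← map_add]
    congr 1
    field
  have h₁ := hinv a ha
  have h₂ := hinv (1 - a) ha'
  have h₃ := hinv (a * (1 - a)) (mul_ne_zero ha ha')
  rw [map_sub, hone] at h₂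
  rw [← hua, mul_sub, mul_one, map_sub] at h₃
  grind

lemma exists_addMonoidHom_of_forall_exists_map_eq {A P : Type*} [AddGroup A] [Group P] {u : A → P}
    (hu : Function.Injective u) (hadd : ∀ a b, u (a + b) = u a * u b) {α : MulAut P}
    (hα : ∀ a, ∃ b, u b = α (u a)) :
    ∃ φ : A →+ A, Function.Injective φ ∧ ∀ a, α (u a) = u (φ a) := by
  choose φ hφ using hα
  refine ⟨AddMonoidHom.mk' φ fun a b => hu ?_, fun a b h => hu (α.injective ?_),
    fun a => (hφ a).symm⟩
  · rw [hφ, hadd, hadd, map_mul, hφ, hφ]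
  · rw [← hφ, ← hφ]
    exact congrArg u h

section Finite

variable [Finite F]

lemma eq_fieldAut_of_map_upper_one_eq (h2 : (2 : F) ≠ 0) {α : MulAut PSL(2, F)}
    (hupper : ∀ b, α (upper b) ∈ upperUnipotent F)
    (hlower : ∀ c, α (lower c) ∈ lowerUnipotent F) (hone : α (upper 1) = upper 1) :
    ∃ σ, α = fieldAut σ := by
  obtain ⟨φ, hφ, hαφ⟩ := exists_addMonoidHom_of_forall_exists_map_eq (u := upper (F := F))
    upper_injective upper_add fun b => mem_upperUnipotent.1 (hupper b)
  obtain ⟨φ', hφ', hαφ'⟩ := exists_addMonoidHom_of_forall_exists_map_eq (u := lower (F := F))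
    lower_injective lower_add fun c => mem_lowerUnipotent.1 (hlower c)
  have hφ_one : φ 1 = 1 := upper_injective ((hαφ 1).symm.trans hone)
  have hφ_inv (a : F) (ha : a ≠ 0) : φ a * φ' a⁻¹ = 1 := by
    have hne : -a⁻¹ ≠ 0 := neg_ne_zero.2 (inv_ne_zero ha)
    have h := congrArg α ((upper_lower_braid_iff ha hne).2 (by field))
    simp only [map_mul, hαφ, hαφ'] at h
    rw [upper_lower_braid_iff ((map_ne_zero_iff φ hφ).2 ha) ((map_ne_zero_iff φ' hφ').2 hne),
      map_neg] at h
    linear_combination -h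
  let σ : RingAut F := RingEquiv.ofBijective
    (φ.mkRingHomOfMulSelfOfTwoNeZero (map_mul_self_of_mul_map_inv_eq_one hφ_one hφ_inv) h2 hφ_one)
    (Finite.injective_iff_bijective.1 hφ)
  have hσ' (c : F) : φ' c = σ c := by
    obtain rfl | hc := eq_or_ne c 0
    · simp
    · have h := hφ_inv c⁻¹ (inv_ne_zero hc)
      change σ c⁻¹ * _ = 1 at h
      rw [inv_inv, map_inv₀] at h
      exact (inv_mul_eq_one₀ ((map_ne_zero σ).2 hc)).1 h |>.symm
  refine ⟨σ, mulAut_PSL_two_ext (fun b => ?_) fun c => ?_⟩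
  · rw [hαφ, fieldAut_upper]
    rfl
  · rw [hαφ', fieldAut_lower, hσ']

lemma exists_conj_mul_stabilizes_unipotents (α : MulAut PSL(2, F)) :
    ∃ x : PSL(2, F), (∀ b, (MulAut.conj x * α) (upper b) ∈ upperUnipotent F) ∧
      ∀ c, (MulAut.conj x * α) (lower c) ∈ lowerUnipotent F := by
  obtain ⟨p, hp⟩ := CharP.exists F
  have : Fact p.Prime := ⟨CharP.char_is_prime F p⟩
  have hne : α • upperSylow F p ≠ α • lowerSylow F p := fun h =>
    lowerSylow_ne_upperSylow p (smul_left_cancel α h).symm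
  obtain ⟨x, hupper, hlower⟩ := MulAction.is_two_pretransitive_iff.1
    (isMultiplyPretransitive_sylow_PSL_two (F := F) p) hne (lowerSylow_ne_upperSylow p).symm
  rw [Sylow.smul_def, smul_smul] at hupper hlower
  refine ⟨x, fun b => ?_, fun c => ?_⟩
  · change _ ∈ (upperSylow F p : Subgroup PSL(2, F))
    rw [← hupper]
    exact Subgroup.smul_mem_pointwise_smul (upper b) _ _ ⟨Multiplicative.ofAdd b, rfl⟩
  · rw [← coe_lowerSylow p, ← hlower]
    refine Subgroup.smul_mem_pointwise_smul (lower c) _ _ ?_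
    rw [coe_lowerSylow]
    exact ⟨Multiplicative.ofAdd c, rfl⟩

lemma exists_eq_conj_mul_diagAut_mul_fieldAut (h2 : (2 : F) ≠ 0) (α : MulAut PSL(2, F)) :
    ∃ x t σ, α = MulAut.conj x * diagAut t * fieldAut σ := by
  obtain ⟨x, hupper, hlower⟩ := exists_conj_mul_stabilizes_unipotents α
  obtain ⟨t, ht⟩ := mem_upperUnipotent.1 (hupper 1)
  have ht0 : t ≠ 0 := by
    rintro rfl
    rw [upper_zero, eq_comm, map_eq_one_iff _ (MulEquiv.injective _), ← upper_zero] at ht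
    exact one_ne_zero (upper_injective ht)
  let u := Units.mk0 t ht0
  obtain ⟨σ, hσ⟩ : ∃ σ, diagAut u⁻¹ * (MulAut.conj x * α) = fieldAut σ := by
    refine eq_fieldAut_of_map_upper_one_eq h2 (fun b => ?_) (fun c => ?_) ?_
    · obtain ⟨b', hb'⟩ := mem_upperUnipotent.1 (hupper b)
      exact ⟨Multiplicative.ofAdd _, by rw [MulAut.mul_apply, ← hb', diagAut_upper]; rfl⟩
    · obtain ⟨c', hc'⟩ := mem_lowerUnipotent.1 (hlower c)
      exact ⟨Multiplicative.ofAdd _, by rw [MulAut.mul_apply, ← hc', diagAut_lower]; rfl⟩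
    · rw [MulAut.mul_apply, ← ht, diagAut_upper]
      simp [u, ht0]
  refine ⟨x⁻¹, u, σ, ?_⟩
  have hu : diagAut u * diagAut u⁻¹ = 1 := by
    rw [← diagAut_mul, mul_inv_cancel]
    exact mulAut_PSL_two_ext (by simp [diagAut_upper]) (by simp [diagAut_lower])
  rw [← hσ, mul_assoc, ← mul_assoc (diagAut u), hu, one_mul, map_inv, inv_mul_cancel_left]

lemma mul_self_mem_range_semilinearAut (hF : ¬IsSquare (-1 : F)) (α : MulAut PSL(2, F)) :
    α * α ∈ (semilinearAut (F := F)).range := by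
  have h2 : (2 : F) ≠ 0 := Ring.two_ne_zero (ringChar_ne_two_of_not_isSquare_neg_one hF)
  obtain ⟨x, t, σ, rfl⟩ := exists_eq_conj_mul_diagAut_mul_fieldAut h2 α
  have ht : IsSquare ((t * Units.map σ t : Fˣ) : F) := by
    obtain ⟨z, hz⟩ | ⟨z, hz⟩ := isSquare_or_isSquare_neg hF (t : F)
    · exact ⟨z * σ z, by simp [hz, mul_mul_mul_comm]⟩
    · refine ⟨z * σ z, ?_⟩
      simp [neg_eq_iff_eq_neg.1 hz, mul_mul_mul_comm]
  convert conj_mul_diagAut_mul_fieldAut_mem_range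
    (x := x * (diagAut t * fieldAut σ) x) ht (σ * σ) using 1
  calc MulAut.conj x * diagAut t * fieldAut σ * (MulAut.conj x * diagAut t * fieldAut σ)
      = MulAut.conj x * ((diagAut t * fieldAut σ) * MulAut.conj x) * diagAut t * fieldAut σ := by
        simp only [mul_assoc]
    _ = MulAut.conj (x * (diagAut t * fieldAut σ) x) * diagAut t * (fieldAut σ * diagAut t) *
          fieldAut σ := by
        rw [mul_conj_eq_conj_mul, map_mul]
        simp only [mul_assoc]
    _ = MulAut.conj (x * (diagAut t * fieldAut σ) x) * diagAut (t * Units.map σ t) *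
          fieldAut (σ * σ) := by
        rw [fieldAut_mul_diagAut, diagAut_mul, map_mul fieldAut]
        simp only [mul_assoc]

end Finite

end AutomorphismsPSL

section HalfWeilCharacter

variable {F : Type} [Field F]

/-- The Galois action on the nonzero squares. -/
def galoisPerm : RingAut F →* Equiv.Perm (NonzeroSquare F) where
  toFun σ :=
    { toFun x := ⟨σ x, by simpa using x.2.1, x.2.2.map σ⟩
      invFun x := ⟨σ.symm x, by simpa using x.2.1, x.2.2.map σ.symm⟩
      left_inv x := Subtype.ext (by simp)
      right_inv x := Subtype.ext (by simp) }
  map_one' := rfl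
  map_mul' _ _ := rfl

lemma coe_galoisPerm (σ : RingAut F) (x : NonzeroSquare F) : (galoisPerm σ x : F) = σ x := rfl

variable [Fintype F] [DecidableEq F]

local notation "η" => complexQuadraticChar _

/-- The permutation representation of the Galois action on the nonzero squares. -/
def galoisPermRep : RingAut F →* Matrix (NonzeroSquare F) (NonzeroSquare F) ℂ where
  toFun σ := Matrix.of fun x y => if x = galoisPerm σ y then 1 else 0
  map_one' := by
    ext x y
    simp [Matrix.one_apply]
  map_mul' σ τ := by
    ext x y
    simp [Matrix.mul_apply]

lemma complexQuadraticChar_map (σ : RingAut F) (a : F) : η (σ a) = η a := by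
  have hsq : IsSquare (σ a) ↔ IsSquare a :=
    ⟨fun h => by simpa using h.map σ.symm, fun h => h.map σ⟩
  simp [complexQuadraticChar, quadraticChar_apply, quadraticCharFun, hsq]

variable {ψ : AddChar F ℂ}

lemma weilKernel_map (hσ : ∀ (σ : RingAut F) x, ψ (σ x) = ψ x) (σ : RingAut F)
    (a b c d x y : F) :
    weilKernel ψ (σ a) (σ b) (σ c) (σ d) (σ x) (σ y) = weilKernel ψ a b c d x y := by
  have h2 : (2 : F) = σ 2 := (map_ofNat σ 2).symm
  simp only [weilKernel, complexQuadraticChar_map]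
  rw [h2]
  simp only [← map_mul, ← map_pow, ← map_add, ← map_sub, ← map_div₀, hσ, σ.injective.eq_iff,
    map_eq_zero_iff σ σ.injective]
  rw [← h2]

variable (hF : ¬IsSquare (-1 : F)) (hψ : ψ.IsPrimitive)
  (hσ : ∀ (σ : RingAut F) x, ψ (σ x) = ψ x)

include hσ in
lemma halfWeilRep_fieldAut_mul (σ : RingAut F) (x : PSL(2, F)) :
    halfWeilRep hF hψ (fieldAut σ x) * galoisPermRep σ =
      galoisPermRep σ * halfWeilRep hF hψ x := by
  obtain ⟨a, b, c, d, h, rfl⟩ := exists_eq_pslOf x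
  ext y z
  obtain ⟨y, rfl⟩ := (galoisPerm σ).surjective y
  simp only [fieldAut_pslOf, Matrix.mul_apply, galoisPermRep, MonoidHom.coe_mk, OneHom.coe_mk,
    Matrix.of_apply, mul_ite, mul_one, mul_zero, ite_mul, one_mul, zero_mul, Finset.sum_ite_eq',
    Finset.mem_univ, if_true, EmbeddingLike.apply_eq_iff_eq, Finset.sum_ite_eq]
  simp only [halfWeilRep_pslOf_apply, coe_galoisPerm, ← map_neg, weilKernel_map hσ]

/-- The extension of the half Weil representation to `PΣL(2, F)`. -/
def semilinearHalfWeilRep :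
    PSL(2, F) ⋊[fieldAut] RingAut F →* (Matrix (NonzeroSquare F) (NonzeroSquare F) ℂ)ˣ :=
  SemidirectProduct.lift (halfWeilRep hF hψ).toHomUnits
    (galoisPermRep (F := F)).toHomUnits fun σ => MonoidHom.ext fun x =>
      eq_mul_inv_of_mul_eq (Units.ext (halfWeilRep_fieldAut_mul hF hψ hσ σ x))

lemma coe_semilinearHalfWeilRep_inl (x : PSL(2, F)) :
    (semilinearHalfWeilRep hF hψ hσ (SemidirectProduct.inl x) : Matrix _ _ ℂ) =
      halfWeilRep hF hψ x := by
  rw [semilinearHalfWeilRep, SemidirectProduct.lift_inl]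
  rfl

include hσ in
lemma trace_halfWeilRep_semilinearAut (p : PSL(2, F) ⋊[fieldAut] RingAut F) (x : PSL(2, F)) :
    (halfWeilRep hF hψ (semilinearAut p x)).trace = (halfWeilRep hF hψ x).trace := by
  rw [← coe_semilinearHalfWeilRep_inl hF hψ hσ, ← coe_semilinearHalfWeilRep_inl hF hψ hσ,
    inl_semilinearAut, map_mul, map_mul, map_inv, Units.val_mul, Units.val_mul,
    Matrix.trace_mul_cycle, Units.inv_mul, one_mul]

include hσ in
lemma autStabilizer_trace_halfWeilRep :
    autStabilizer (fun x => (halfWeilRep hF hψ x).trace) = semilinearAut.range := by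
  refine le_antisymm (fun α hα => ?_) ?_
  · have h2 : (2 : F) ≠ 0 := Ring.two_ne_zero (ringChar_ne_two_of_not_isSquare_neg_one hF)
    obtain ⟨x, t, σ, rfl⟩ := exists_eq_conj_mul_diagAut_mul_fieldAut h2 α
    have htrace : (halfWeilRep hF hψ ((MulAut.conj x * diagAut t * fieldAut σ) (upper 1))).trace =
        (halfWeilRep hF hψ (upper 1)).trace := hα (upper 1)
    rw [mul_assoc, MulAut.mul_apply, ← semilinearAut_inl, trace_halfWeilRep_semilinearAut hF hψ hσ,
      MulAut.mul_apply, fieldAut_upper, diagAut_upper, map_one, mul_one] at htrace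
    exact conj_mul_diagAut_mul_fieldAut_mem_range
      (isSquare_of_trace_halfWeilRep_upper_eq hF hψ t.ne_zero htrace) σ
  · rintro _ ⟨p, rfl⟩
    exact trace_halfWeilRep_semilinearAut hF hψ hσ p

end HalfWeilCharacter

lemma exists_extendibleCharacter_halfWeil {F : Type} [Field F] [Finite F] [Fintype PSL(2, F)]
    (hF : ¬IsSquare (-1 : F)) :
    ∃ D : ExtendibleCharacter PSL(2, F),
      (∀ α, α * α ∈ autStabilizer D.χ) ∧ Nat.card F = 1 + 2 * Fintype.card D.ι := by
  classical
  have := Fintype.ofFinite F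
  obtain ⟨ψ, hψ, hσ⟩ := exists_isPrimitive_addChar_ringAut_invariant (F := F)
  have hstab := autStabilizer_trace_halfWeilRep hF hψ hσ
  let e := MonoidHom.ofInjective (semilinearAut_injective (F := F))
  have : Nonempty (NonzeroSquare F) := ⟨⟨1, one_ne_zero, IsSquare.one⟩⟩
  refine ⟨⟨_, NonzeroSquare F, (Units.coeHom _).comp ((semilinearHalfWeilRep hF hψ hσ).comp
    (e.symm.toMonoidHom.comp (Subgroup.inclusion hstab.le))),
    fun x => hstab ▸ ⟨_, semilinearAut_inl x⟩, fun x => ?_,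
    (hasScalarCommutant_iff_sum_trace _).1 (hasScalarCommutant_halfWeilRep hF hψ), ?_⟩,
    fun α => hstab ▸ mul_self_mem_range_semilinearAut hF α, ?_⟩
  · have hx (h : MulAut.conj x ∈ semilinearAut.range) :
        e.symm ⟨MulAut.conj x, h⟩ = SemidirectProduct.inl x :=
      e.symm_apply_eq.2 (Subtype.ext (semilinearAut_inl x).symm)
    change ((semilinearHalfWeilRep hF hψ hσ (e.symm ⟨MulAut.conj x, _⟩)).val).trace = _
    rw [hx, coe_semilinearHalfWeilRep_inl]
  · by_contra! h
    refine hF (isSquare_of_trace_halfWeilRep_upper_eq hF hψ (neg_ne_zero.2 one_ne_zero) ?_)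
    exact (h _).trans (h _).symm
  · rw [Nat.card_eq_fintype_card]
    exact card_eq_one_add_two_mul_card_nonzeroSquare hF

section CocyclesInElementaryAbelianTwoGroups

lemma normal_of_forall_mul_self_mem {B : Type*} [Group B] {A : Subgroup B}
    (hsq : ∀ b : B, b * b ∈ A) : A.Normal where
  conj_mem a ha x := by
    have hx : x * a * x⁻¹ =
        x * a * (x * a) * (a⁻¹ * x⁻¹ * a * (a⁻¹ * x⁻¹ * a)) * (a * a)⁻¹ * a := by group
    rw [hx]
    exact A.mul_mem (A.mul_mem (A.mul_mem (hsq _) (hsq _)) (A.inv_mem (hsq _))) ha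

lemma exists_eq_mul_of_cocycle {G Q ι : Type*} [Group G] [CommGroup Q]
    (hQ : ∀ z : Q, z * z = 1) (perm : G →* Equiv.Perm ι) {c : G → ι → Q}
    (hc : ∀ x y i, c (x * y) i = c x (perm y i) * c y i)
    {x y : G} {N : ℕ} (hN : Odd N) (hxy : x ^ N = y * y) (hy : perm y = 1) :
    ∃ b : ι → Q, ∀ i, c x i = b (perm x i) * b i := by
  have c_one (i : ι) : c 1 i = 1 := by simpa using hc 1 1 i
  have c_pow (i : ι) : c (x ^ N) i = 1 := by simp [hxy, hc, hy, hQ]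
  have pow_odd (z : Q) : z ^ N = z := by
    obtain ⟨k, rfl⟩ := hN
    rw [pow_succ, pow_mul, sq, hQ, one_pow, one_mul]
  let b (i : ι) : Q := ∏ j ∈ Finset.range N, c (x ^ j) i
  refine ⟨b, fun i => ?_⟩
  have hb : b (perm x i) * c x i = b i := calc
    b (perm x i) * c x i = b (perm x i) * c x i ^ N := by rw [pow_odd]
    _ = ∏ j ∈ Finset.range N, c (x ^ (j + 1)) i := by
      simp only [b, pow_succ x, hc, Finset.prod_mul_distrib, Finset.prod_const, Finset.card_range]
    _ = (∏ j ∈ Finset.range N, c (x ^ (j + 1)) i) * c (x ^ 0) i := by rw [pow_zero, c_one, mul_one]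
    _ = b i * c (x ^ N) i := by
      rw [← Finset.prod_range_succ' fun j => c (x ^ j) i, Finset.prod_range_succ]
    _ = b i := by rw [c_pow, mul_one]
  rw [← hb, ← mul_assoc, hQ, one_mul]

end CocyclesInElementaryAbelianTwoGroups

lemma pow_card_eq_one_of_forall_invariant {ι : Type*} [Fintype ι] {σ : Equiv.Perm ι}
    (hσ : ∀ J : Finset ι, J.Nonempty → (∀ i ∈ J, σ i ∈ J) → J = Finset.univ) :
    σ ^ Fintype.card ι = 1 := by
  classical
  have sameCycle (i j : ι) : σ.SameCycle i j := by
    have := hσ (Finset.univ.filter (σ.SameCycle i)) 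
      ⟨i, by simpa using Equiv.Perm.SameCycle.refl σ i⟩ (by simp)
    simpa using this.ge (Finset.mem_univ j)
  have hcycle : σ.IsCycleOn (Finset.univ : Finset ι) :=
    ⟨by simp, fun i _ j _ => sameCycle i j⟩
  ext i
  exact hcycle.pow_card_apply (Finset.mem_univ i)

namespace FactorAction

variable {G : Type} [Group G] {M : Subgroup G} {S : Type} [Group S] {ι : Type} [DecidableEq ι]
  (T : FactorAction G M S ι)

lemma exists_changeCoord_aut_mem {A : Subgroup (MulAut S)} (hA : ∀ α, α * α ∈ A) {x y : G}
    {N : ℕ} (hN : Odd N) (hxy : x ^ N = y * y) (hy : T.perm y = 1) :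
    ∃ β, ∀ i, (T.changeCoord β).aut x i ∈ A := by
  have := normal_of_forall_mul_self_mem hA
  have hsq (z : MulAut S ⧸ A) : z * z = 1 := by
    obtain ⟨α, rfl⟩ := QuotientGroup.mk_surjective z
    exact (QuotientGroup.eq_one_iff _).2 (hA α)
  let _ : CommGroup (MulAut S ⧸ A) :=
    { mul_comm := Commute.of_orderOf_dvd_two fun z => orderOf_dvd_of_pow_eq_one (by rw [sq, hsq]) }
  obtain ⟨b, hb⟩ := exists_eq_mul_of_cocycle hsq T.perm
    (c := fun x i => QuotientGroup.mk (T.aut x i)) (by simp [T.aut_mul]) hN hxy hy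
  choose β hβ using fun i => QuotientGroup.mk_surjective (b i)
  refine ⟨β, fun i => ?_⟩
  rw [← QuotientGroup.eq_one_iff]
  change (QuotientGroup.mk (β (T.perm x i)) : MulAut S ⧸ A)⁻¹ * QuotientGroup.mk (T.aut x i) *
    QuotientGroup.mk (β i) = 1
  rw [hβ, hβ, hb, inv_mul_cancel_left, hsq]

lemma coord_symm_perm_of_commute [Finite ι] (hM : M.Normal) {g : G} {m : M} (h : Commute g m)
    (i : ι) : T.coord.symm m (T.perm g i) = T.aut g i (T.coord.symm m i) := by
  have hconj : (⟨g * m * g⁻¹, hM.conj_mem _ m.2 g⟩ : M) = m :=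
    Subtype.ext (mul_inv_eq_of_eq_mul h.eq)
  rw [← T.coord_symm_conj hM, hconj]

end FactorAction

section DivisibilityOfOrders

lemma orderOf_dvd_iff_forall_coord {ι S M : Type*} [Group S] [Group M] (e : (ι → S) ≃* M) (m : M)
    (N : ℕ) : orderOf m ∣ N ↔ ∀ i, orderOf (e.symm m i) ∣ N := by
  rw [← e.symm.orderOf_eq]
  simp only [orderOf_dvd_iff_pow_eq_one, funext_iff, Pi.pow_apply, Pi.one_apply]

variable {F : Type} [Field F] {ι M : Type*} [Fintype ι] [Group M] (e : (ι → PSL(2, F)) ≃* M)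

include e in
lemma natCard_eq_pow_of_pi_PSL_two :
    Nat.card M = (Nat.card F * (upperUnipotent F).index) ^ Fintype.card ι := by
  rw [← natCard_PSL_two, ← Nat.card_congr e.toEquiv, Nat.card_fun,
    Nat.card_eq_fintype_card (α := ι)]

include e in
lemma orderOf_mul_pow_dvd_natCard {m : M} {j : ℕ} (hj : j < Fintype.card ι) :
    orderOf m * Nat.card F ^ j ∣ Nat.card M := by
  have hm : orderOf m ∣ Nat.card F * (upperUnipotent F).index :=
    (orderOf_dvd_iff_forall_coord e m _).2 fun _ => natCard_PSL_two (F := F) ▸ orderOf_dvd_natCard _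
  rw [natCard_eq_pow_of_pi_PSL_two e, ← Nat.sub_add_cancel hj.le, pow_add]
  refine mul_dvd_mul (hm.trans (dvd_pow_self _ (Nat.sub_ne_zero_of_lt hj)))
    (pow_dvd_pow_of_dvd (dvd_mul_right _ _) j)

variable [Finite F]

lemma orderOf_dvd_index_upperUnipotent (p : ℕ) [CharP F p] {x : PSL(2, F)}
    (hx : ¬ p ∣ orderOf x) : orderOf x ∣ (upperUnipotent F).index := by
  have := Fintype.ofFinite F
  obtain ⟨k, hp, hk⟩ := FiniteField.card F p
  have hdvd := orderOf_dvd_natCard x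
  rw [natCard_PSL_two, Nat.card_eq_fintype_card, hk] at hdvd
  exact ((hp.coprime_iff_not_dvd.2 hx).symm.pow_right k).dvd_of_dvd_mul_left hdvd

lemma index_upperUnipotent_eq_mul {d : ℕ} (hd : Nat.card F = 1 + 2 * d) :
    (upperUnipotent F).index = (Nat.card F + 1) * d := by
  have h2 : (2 : F) ≠ 0 := by
    have := Fintype.ofFinite F
    refine Ring.two_ne_zero fun h => ?_
    have := FiniteField.even_card_iff_char_two.1 h
    rw [← Nat.card_eq_fintype_card] at this
    omega
  have h := natCard_center_SL_two_mul_index_upperUnipotent (F := F)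
  rw [natCard_center_SL_two h2, hd, Nat.add_sub_cancel_left, mul_assoc] at h
  rw [Nat.eq_of_mul_eq_mul_left two_pos h, hd, mul_comm]

include e in
lemma orderOf_mul_pow_card_dvd_natCard [Nonempty ι] (p : ℕ) [CharP F p] {m : M}
    (hm : ¬ p ∣ orderOf m) : orderOf m * Nat.card F ^ Fintype.card ι ∣ Nat.card M := by
  have hm_index : orderOf m ∣ (upperUnipotent F).index :=
    (orderOf_dvd_iff_forall_coord e m _).2 fun i => orderOf_dvd_index_upperUnipotent p fun hi =>
      hm (hi.trans ((orderOf_dvd_iff_forall_coord e m _).1 dvd_rfl i))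
  rw [natCard_eq_pow_of_pi_PSL_two e, mul_pow, mul_comm]
  exact mul_dvd_mul_left _ (hm_index.trans (dvd_pow_self _ Fintype.card_ne_zero))

end DivisibilityOfOrders

namespace FactorAction

variable {G : Type} [Group G] {M : Subgroup G} {F : Type} [Field F] [Finite F]
  {ι : Type} [DecidableEq ι] (T : FactorAction G M PSL(2, F) ι)

lemma orderOf_dvd_prime_of_transitive [Fintype ι] (hM : M.Normal) {g : G} {m : M}
    (hgm : Commute g m)
    (htrans : ∀ J : Finset ι, J.Nonempty → (∀ i ∈ J, T.perm g i ∈ J) → J = Finset.univ)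
    (p : ℕ) [Fact p.Prime] [CharP F p] (hm : p ∣ orderOf m) : orderOf m ∣ p := by
  have hinvariant := htrans (Finset.univ.filter fun i => p ∣ orderOf (T.coord.symm m i)) ?_
    fun i hi => by
      simpa [T.coord_symm_perm_of_commute hM hgm, (T.aut g i).orderOf_eq] using hi
  · refine (orderOf_dvd_iff_forall_coord T.coord m p).2 fun i => ?_
    have hi : p ∣ orderOf (T.coord.symm m i) := by
      simpa using hinvariant.ge (Finset.mem_univ i)
    exact (orderOf_eq_prime_of_dvd_orderOf p hi).dvd
  · by_contra hempty
    rw [Finset.not_nonempty_iff_eq_empty, Finset.filter_eq_empty_iff] at hempty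
    refine not_dvd_index_upperUnipotent (F := F) p (hm.trans ?_)
    exact (orderOf_dvd_iff_forall_coord T.coord m _).2 fun i =>
      orderOf_dvd_index_upperUnipotent p (hempty (Finset.mem_univ i))

variable [Fintype PSL(2, F)]

lemma exists_prodChar_of_pow_perm_eq_one [Fintype ι] [Nonempty ι] (hM : M.Normal)
    (hF : ¬IsSquare (-1 : F)) {g : G} (hg : T.perm (g ^ Fintype.card ι) = 1) {o : ℕ}
    (ho : o ∣ Nat.card F) :
    ∃ (T' : FactorAction G M PSL(2, F) ι) (D : ExtendibleCharacter PSL(2, F)) (h : ℕ),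
      h ≤ Fintype.card ι ∧ g ^ 2 ^ h ∈ inertia M hM (T'.prodChar D Finset.univ) ∧
      2 ^ h * o * Fintype.card D.ι ^ Fintype.card ι ∣ Nat.card M := by
  obtain ⟨D, hD, hcard⟩ := exists_extendibleCharacter_halfWeil hF
  obtain ⟨a, b, hb, hab⟩ := Nat.exists_eq_two_pow_mul_odd (Fintype.card_ne_zero (α := ι))
  obtain ⟨β, hβ⟩ := T.exists_changeCoord_aut_mem hD (x := g ^ 2 ^ (a + 1)) hb
    (by rw [← pow_mul, ← pow_add, hab]; congr 1; ring) hg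
  have ha : a + 1 ≤ Fintype.card ι :=
    Nat.lt_two_pow_self.trans_le (Nat.le_of_dvd Fintype.card_pos ⟨b, hab⟩)
  refine ⟨T.changeCoord β, D, a + 1, ha, (T.changeCoord β).mem_inertia_of_forall D hM
    (fun _ _ => Finset.mem_univ _) (fun i _ => hβ i), ?_⟩
  have htwo : 2 ∣ Nat.card F + 1 := by omega
  rw [natCard_eq_pow_of_pi_PSL_two T.coord, index_upperUnipotent_eq_mul hcard, ← mul_assoc, mul_pow,
    mul_pow, mul_comm (2 ^ _)]
  exact mul_dvd_mul_right (mul_dvd_mul (ho.trans (dvd_pow_self _ Fintype.card_ne_zero))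
    ((pow_dvd_pow 2 ha).trans (pow_dvd_pow_of_dvd htwo _))) _

lemma exists_prodChar_of_forall_perm_mem [Finite ι] (hM : M.Normal) {g : G} {J : Finset ι}
    (hgJ : ∀ i ∈ J, T.perm g i ∈ J) :
    ∃ D : ExtendibleCharacter PSL(2, F),
      Fintype.card D.ι = Nat.card F ∧ g ∈ inertia M hM (T.prodChar D J) := by
  obtain ⟨D, hD, hcard⟩ := exists_extendibleCharacter_steinberg (F := F)
  exact ⟨D, hcard, T.mem_inertia_of_forall D hM hgJ fun _ _ => hD ▸ Subgroup.mem_top _⟩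

end FactorAction

theorem exists_prodChar_of_commute {G : Type} [Group G] {M : Subgroup G} (hM : M.Normal)
    {F : Type} [Field F] [Finite F] [Fintype PSL(2, F)] (hF : ¬IsSquare (-1 : F))
    {ι : Type} [DecidableEq ι] [Fintype ι] [Nonempty ι] (T : FactorAction G M PSL(2, F) ι)
    {g : G} {m : M} (hgm : Commute g m) :
    ∃ (T' : FactorAction G M PSL(2, F) ι) (D : ExtendibleCharacter PSL(2, F)) (J : Finset ι)
      (h : ℕ), J.Nonempty ∧ h ≤ Fintype.card ι ∧ g ^ 2 ^ h ∈ inertia M hM (T'.prodChar D J) ∧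
      2 ^ h * orderOf m * Fintype.card D.ι ^ J.card ∣ Nat.card M := by
  obtain ⟨p, hchar⟩ := CharP.exists F
  have : Fact p.Prime := ⟨CharP.char_is_prime F p⟩
  by_cases hJ : ∃ J : Finset ι, J.Nonempty ∧ (∀ i ∈ J, T.perm g i ∈ J) ∧
      orderOf m * Nat.card F ^ J.card ∣ Nat.card M
  · obtain ⟨J, hJ, hgJ, hdvd⟩ := hJ
    obtain ⟨D, hcard, hmem⟩ := T.exists_prodChar_of_forall_perm_mem hM hgJ
    exact ⟨T, D, J, 0, hJ, Nat.zero_le _, by simpa using hmem, by simpa [hcard] using hdvd⟩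
  · have htrans (J : Finset ι) (hJne : J.Nonempty) (hgJ : ∀ i ∈ J, T.perm g i ∈ J) :
        J = Finset.univ := by
      by_contra hne
      exact hJ ⟨J, hJne, hgJ, orderOf_mul_pow_dvd_natCard T.coord (J.card_lt_iff_ne_univ.2 hne)⟩
    have hpm : p ∣ orderOf m := by
      by_contra hpm
      exact hJ ⟨Finset.univ, Finset.univ_nonempty, by simp,
        orderOf_mul_pow_card_dvd_natCard T.coord p hpm⟩
    have ho := (T.orderOf_dvd_prime_of_transitive hM hgm htrans p hpm).trans
      (charP_dvd_natCard (F := F) p)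
    have hperm : T.perm (g ^ Fintype.card ι) = 1 :=
      (map_pow ..).trans (pow_card_eq_one_of_forall_invariant htrans)
    obtain ⟨T', D, h, hle, hmem, hdvd⟩ := T.exists_prodChar_of_pow_perm_eq_one hM hF hperm ho
    exact ⟨T', D, Finset.univ, h, Finset.univ_nonempty, hle, hmem, hdvd⟩

theorem monolithic_lemma_psl_general {G : Type} [Group G] [Finite G] {M : Subgroup G}
    (hM : M.Normal) {F : Type} [Field F] [Finite F] (hF : Nat.card F % 4 = 3)
    {ι : Type} [Fintype ι] [Nonempty ι] {S : ι → Subgroup G}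
    (hiso : ∀ i, Nonempty (S i ≃* PSL(2, F)))
    (hcomm : Pairwise fun i j => ∀ x y : G, x ∈ S i → y ∈ S j → Commute x y)
    (hinj : Function.Injective (Subgroup.noncommPiCoprod hcomm))
    (hrange : (Subgroup.noncommPiCoprod hcomm).range = M)
    {g : G} {r : ℕ} (hgr : g ^ r ∈ M) :
    ∃ (lam : M → ℂ) (h : ℕ), h ≤ Fintype.card ι ∧ IsIrrChar M lam ∧ lam ≠ (fun _ => 1) ∧
      ExtendsToSubgroup M (inertia M hM lam) lam ∧
      g ^ (2 ^ h) ∈ inertia M hM lam ∧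
      ∃ k : ℕ, (Nat.card M : ℂ) = ((2 : ℂ) ^ h * (orderOf (g ^ r) : ℂ)) * (k : ℂ) * lam 1 := by
  classical
  have := Fintype.ofFinite F
  have := Fintype.ofFinite PSL(2, F)
  have hF' : ¬IsSquare (-1 : F) := by
    rw [FiniteField.isSquare_neg_one_iff, ← Nat.card_eq_fintype_card]
    exact not_not.2 hF
  obtain ⟨e⟩ := nonempty_pi_mulEquiv_of_noncommPiCoprod hiso hcomm hinj hrange
  obtain ⟨T⟩ := centrallyIndecomposable_PSL_two.nonempty_factorAction hM e
  obtain ⟨T', D, J, h, hJ, hle, hmem, k, hk⟩ := exists_prodChar_of_commute hM hF' T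
    (m := ⟨g ^ r, hgr⟩) (Commute.self_pow g r)
  obtain ⟨hirr, hext⟩ := T'.isIrrChar_prodChar_and_extendsToSubgroup D (J := J) hM
  refine ⟨T'.prodChar D J, h, hle, hirr, T'.prodChar_ne_one D hJ, hext, hmem, k, ?_⟩
  rw [T'.prodChar_one, hk, Subgroup.orderOf_mk]
  push_cast
  ring

lemma three_pow_mod_four_of_odd {f : ℕ} (hf : Odd f) : 3 ^ f % 4 = 3 := by
  obtain ⟨k, rfl⟩ := hf
  rw [pow_succ, pow_mul, Nat.mul_mod, Nat.pow_mod]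
  norm_num

/-- Lemma (monolithic, part (b)): `G` has a unique minimal normal subgroup
`M = S₁ × ⋯ × Sₙ`, an internal direct product of subgroups all isomorphic to
`PSL(2, 3^f)` with `f` an odd positive integer.  Given `g ∈ G`, with `r` the order of
`gM` in `G/M`, there are a non-principal irreducible character `λ` of `M` and `h ≤ n`
such that `λ` extends to `I = I_G(λ)`, `g ^ (2^h) ∈ I`, and `|M|/λ(1)` is a multiple of
`2^h · o(g^r)` (stated multiplicatively). -/
theorem monolithic_lemma_psl (G : Type) [Group G] [Fintype G]
    (M : Subgroup G) [hMn : M.Normal] (hMne : M ≠ ⊥)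
    (hMuniq : ∀ N : Subgroup G, N.Normal → N ≠ ⊥ → M ≤ N)
    (f : ℕ) (hfodd : Odd f) (hfpos : 0 < f)
    (n : ℕ) [NeZero n] (S : Fin n → Subgroup G)
    (hiso : ∀ i, Nonempty (↥(S i) ≃* PSL(2, GaloisField 3 f)))
    (hcomm : Pairwise fun i j => ∀ x y : G, x ∈ S i → y ∈ S j → Commute x y)
    (hinj : Function.Injective (Subgroup.noncommPiCoprod hcomm))
    (hrange : (Subgroup.noncommPiCoprod hcomm).range = M)
    (g : G) (r : ℕ) (hr : r = orderOf (QuotientGroup.mk g : G ⧸ M)) :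
    ∃ (lam : ↥M → ℂ) (h : ℕ), h ≤ n ∧ IsIrrChar ↥M lam ∧ lam ≠ (fun _ => 1) ∧
      ExtendsToSubgroup M (inertia M hMn lam) lam ∧
      g ^ (2 ^ h) ∈ inertia M hMn lam ∧
      ∃ k : ℕ, (Nat.card ↥M : ℂ) =
        ((2 : ℂ) ^ h * (orderOf (g ^ r) : ℂ)) * (k : ℂ) * lam 1 := by
  have hF : Nat.card (GaloisField 3 f) % 4 = 3 := by
    rw [GaloisField.card 3 f hfpos.ne', three_pow_mod_four_of_odd hfodd]
  have hgr : g ^ r ∈ M := by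
    rw [← QuotientGroup.eq_one_iff, QuotientGroup.mk_pow, hr, pow_orderOf_eq_one]
  simpa only [Fintype.card_fin] using
    monolithic_lemma_psl_general hMn hF hiso hcomm hinj hrange hgr
end
end

section
/- Let G be a finite group, g an element of G, and M a normal subgroup of G which is the internal direct product M = S_1 × ⋯ × S_n of subgroups S_1, …, S_n that are permuted transitively by conjugation by g (that is, for each i there is j with S_i^g = S_j, and the cyclic group ⟨g⟩ acts transitively on {S_1, …, S_n}). Let r be the order of gM in G/M, so that g^r ∈ M, and write g^r = s_1 ⋯ s_n with s_i ∈ S_i. Then all the elements s_1, …, s_n have the same order; in particular, the order of g^r equals the order of s_1. -/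
open scoped MatrixGroups

noncomputable section

/-!
An automorphism of `G` that permutes the factors of an internal direct product and fixes an
element `x` of it must also permute the components of `x`, because the decomposition of `x` is
unique. Conjugation by a power of `g` fixes `g ^ r`, so transitivity makes all the components of
`g ^ r` conjugate. They then have a common order, which is also that of the tuple they form.
-/

lemma orderOf_eq_orderOf_apply_of_forall_eq {ι : Type*} {N : ι → Type*} [∀ i, Monoid (N i)]
    {x : ∀ i, N i} (h : ∀ i j, orderOf (x i) = orderOf (x j)) (i : ι) :
    orderOf x = orderOf (x i) := by
  have pow_eq_one : x ^ orderOf (x i) = 1 :=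
    funext fun j => orderOf_dvd_iff_pow_eq_one.mp (h j i).dvd
  exact Nat.dvd_antisymm (orderOf_dvd_of_pow_eq_one pow_eq_one) (orderOf_apply_dvd_orderOf i)

lemma exists_map_pow_eq {G ι : Type*} [Group G] {S : ι → Subgroup G} {a : MulAut G}
    (hperm : ∀ i, ∃ j, (S i).map a.toMonoidHom = S j) (m : ℕ) (i : ι) :
    ∃ j, (S i).map (a ^ m).toMonoidHom = S j := by
  induction m generalizing i with
  | zero => exact ⟨i, Subgroup.map_id (S i)⟩
  | succ m ih =>
    obtain ⟨j, hj⟩ := hperm i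
    obtain ⟨k, hk⟩ := ih j
    refine ⟨k, ?_⟩
    rw [← hk, ← hj, Subgroup.map_map, pow_succ]
    rfl

lemma noncommPiCoprod_eq_prod_ofFn {G : Type*} [Group G] {n : ℕ} {S : Fin n → Subgroup G}
    (hcomm : Pairwise fun i j => ∀ x y : G, x ∈ S i → y ∈ S j → Commute x y) (x : ∀ i, S i) :
    Subgroup.noncommPiCoprod hcomm x = (List.ofFn fun i => (x i : G)).prod := by
  have hx : ((List.finRange n).toFinset : Set (Fin n)).Pairwise
      (Function.onFun Commute fun i => (x i : G)) :=
    fun i _ j _ hij => hcomm hij _ _ (x i).2 (x j).2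
  rw [Subgroup.noncommPiCoprod_apply, List.ofFn_eq_map,
    ← Finset.noncommProd_toFinset _ _ hx (List.nodup_finRange n)]
  exact Finset.noncommProd_congr (List.toFinset_finRange n).symm (fun _ _ => rfl) _

section NoncommPiCoprod

variable {G ι : Type*} [Group G] [Fintype ι] {S : ι → Subgroup G}
  {hcomm : Pairwise fun i j => ∀ x y : G, x ∈ S i → y ∈ S j → Commute x y}

lemma iSupIndep_of_injective_noncommPiCoprod
    (hinj : Function.Injective (Subgroup.noncommPiCoprod hcomm)) : iSupIndep S := by
  classical
  intro i
  have iSup_le_map_ker : ⨆ (j) (_ : j ≠ i), S j ≤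
      (Pi.evalMonoidHom (fun j => S j) i).ker.map (Subgroup.noncommPiCoprod hcomm) :=
    iSup₂_le fun j hj z hz => ⟨Pi.mulSingle j ⟨z, hz⟩, Pi.mulSingle_eq_of_ne hj.symm _,
      Subgroup.noncommPiCoprod_mulSingle j _⟩
  rw [Subgroup.disjoint_def]
  intro z hz hz'
  obtain ⟨y, hy, rfl⟩ := iSup_le_map_ker hz'
  have y_eq : y = Pi.mulSingle i ⟨_, hz⟩ :=
    hinj (Subgroup.noncommPiCoprod_mulSingle i (⟨_, hz⟩ : S i)).symm
  have y_apply : y i = 1 := hy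
  rw [y_eq, Pi.mulSingle_eq_same] at y_apply
  exact congrArg Subtype.val y_apply

lemma inv_mul_noncommPiCoprod_mem_iSup_ne (x : ∀ i, S i) (i : ι) :
    (x i : G)⁻¹ * Subgroup.noncommPiCoprod hcomm x ∈ ⨆ (j) (_ : j ≠ i), S j := by
  classical
  have hx : ((Finset.univ : Finset ι) : Set ι).Pairwise
      (Function.onFun Commute fun j => (x j : G)) :=
    fun j _ k _ hjk => hcomm hjk _ _ (x j).2 (x k).2
  have hsplit := Finset.mul_noncommProd_erase Finset.univ (Finset.mem_univ i) _ hx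
  rw [Subgroup.noncommPiCoprod_apply, ← hsplit, inv_mul_cancel_left]
  exact Subgroup.noncommProd_mem _ _ fun j hj =>
    Subgroup.mem_iSup_of_mem j (Subgroup.mem_iSup_of_mem (Finset.ne_of_mem_erase hj) (x j).2)

lemma eq_apply_of_inv_mul_noncommPiCoprod_mem (hS : iSupIndep S) {x : ∀ i, S i} {i : ι} {y : G}
    (hy : y ∈ S i) (hyx : y⁻¹ * Subgroup.noncommPiCoprod hcomm x ∈ ⨆ (j) (_ : j ≠ i), S j) :
    y = x i := by
  have hmem : y⁻¹ * x i ∈ ⨆ (j) (_ : j ≠ i), S j := by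
    simpa [mul_assoc] using
      mul_mem hyx (inv_mem (inv_mul_noncommPiCoprod_mem_iSup_ne (hcomm := hcomm) x i))
  exact inv_mul_eq_one.mp
    (Subgroup.disjoint_def.mp (hS i) (mul_mem (inv_mem hy) (x i).2) hmem)

lemma map_apply_eq_of_map_noncommPiCoprod_eq (hS : iSupIndep S) {f : G →* G}
    (hf : Function.Injective f) (hperm : ∀ k, ∃ l, (S k).map f = S l) {x : ∀ i, S i}
    (hx : f (Subgroup.noncommPiCoprod hcomm x) = Subgroup.noncommPiCoprod hcomm x)
    {i j : ι} (hij : (S i).map f = S j) : f (x i) = x j := by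
  have hmem : f (x i) ∈ S j := hij ▸ Subgroup.mem_map_of_mem f (x i).2
  -- Trivial factors can coincide, so `f` determines a permutation of indices only off them.
  by_cases hj : S j = ⊥
  · have eq_one {z : G} (hz : z ∈ S j) : z = 1 := Subgroup.mem_bot.mp (hj ▸ hz)
    rw [eq_one hmem, eq_one (x j).2]
  have map_iSup_le : (⨆ (k) (_ : k ≠ i), S k).map f ≤ ⨆ (l) (_ : l ≠ j), S l := by
    simp only [Subgroup.map_iSup]
    refine iSup₂_le fun k hk => ?_
    obtain ⟨l, hl⟩ := hperm k
    have hlj : l ≠ j := by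
      rintro rfl
      have hSki : S k = S i := Subgroup.map_injective hf (hl.trans hij.symm)
      have hSi : S i ≠ ⊥ := fun h => hj (by rw [← hij, h, Subgroup.map_bot])
      exact hk (hS.injOn (hSki.trans_ne hSi) hSi hSki)
    exact hl ▸ le_iSup₂_of_le l hlj le_rfl
  refine eq_apply_of_inv_mul_noncommPiCoprod_mem (hcomm := hcomm) hS hmem (map_iSup_le ?_)
  exact ⟨_, inv_mul_noncommPiCoprod_mem_iSup_ne (hcomm := hcomm) x i, by simp [hx]⟩

theorem orders_of_components_eq_general
    (hinj : Function.Injective (Subgroup.noncommPiCoprod hcomm)) {a : MulAut G}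
    (hperm : ∀ i, ∃ j, (S i).map a.toMonoidHom = S j)
    (htrans : ∀ i j, ∃ m : ℕ, (S i).map (a ^ m).toMonoidHom = S j) {x : ∀ i, S i}
    (hx : a (Subgroup.noncommPiCoprod hcomm x) = Subgroup.noncommPiCoprod hcomm x) :
    (∀ i j, orderOf (x i : G) = orderOf (x j : G)) ∧
      ∀ i, orderOf (Subgroup.noncommPiCoprod hcomm x) = orderOf (x i : G) := by
  have orderOf_eq (i j : ι) : orderOf (x i : G) = orderOf (x j : G) := by
    obtain ⟨m, hm⟩ := htrans i j
    have hfix : (a ^ m) (Subgroup.noncommPiCoprod hcomm x) = Subgroup.noncommPiCoprod hcomm x :=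
      pow_mem (show a ∈ MulAction.stabilizer _ (Subgroup.noncommPiCoprod hcomm x) from hx) m
    have hxij : (a ^ m) (x i : G) = x j :=
      map_apply_eq_of_map_noncommPiCoprod_eq (iSupIndep_of_injective_noncommPiCoprod hinj)
        (a ^ m).injective (exists_map_pow_eq hperm m) hfix hm
    rw [← hxij, MulEquiv.orderOf_eq]
  refine ⟨orderOf_eq, fun i => ?_⟩
  simp only [Subgroup.orderOf_coe] at orderOf_eq ⊢
  rw [orderOf_injective _ hinj, orderOf_eq_orderOf_apply_of_forall_eq orderOf_eq i]

end NoncommPiCoprod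

/-- If `M = S₁ × ⋯ × Sₙ` is a normal subgroup of `G`, an internal direct product of
subgroups permuted transitively by conjugation by `g`, `r` is the order of `gM` in `G/M`,
and `g^r = s₁ ⋯ sₙ` with `s i ∈ S i`, then all the `s i` have the same order and the order
of `g^r` equals each of these orders. -/
theorem orders_of_components_eq (G : Type) [Group G] [Fintype G]
    (g : G) (M : Subgroup G) [hMn : M.Normal]
    (n : ℕ) (S : Fin n → Subgroup G)
    (hcomm : Pairwise fun i j => ∀ x y : G, x ∈ S i → y ∈ S j → Commute x y)
    (hinj : Function.Injective (Subgroup.noncommPiCoprod hcomm))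
    (hrange : (Subgroup.noncommPiCoprod hcomm).range = M)
    (hperm : ∀ i : Fin n, ∃ j : Fin n, (S i).map (MulAut.conj g).toMonoidHom = S j)
    (htrans : ∀ i j : Fin n, ∃ m : ℕ, (S i).map (MulAut.conj (g ^ m)).toMonoidHom = S j)
    (r : ℕ) (hr : r = orderOf (QuotientGroup.mk g : G ⧸ M))
    (hgr : g ^ r ∈ M)
    (s : Fin n → G) (hs : ∀ i, s i ∈ S i) (hprod : g ^ r = (List.ofFn s).prod) :
    (∀ i j : Fin n, orderOf (s i) = orderOf (s j)) ∧
    ∀ i : Fin n, orderOf (g ^ r) = orderOf (s i) := by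
  have hx : Subgroup.noncommPiCoprod hcomm (fun i => ⟨s i, hs i⟩) = g ^ r :=
    (noncommPiCoprod_eq_prod_ofFn hcomm _).trans hprod.symm
  have hfix : MulAut.conj g (g ^ r) = g ^ r :=
    (Commute.self_pow g r).mul_inv_cancel
  rw [← hx] at hfix ⊢
  exact orders_of_components_eq_general hinj hperm (by simpa only [map_pow] using htrans) hfix
end
end

section
/- Let G be a finite group, M a non-abelian minimal normal subgroup of G, and C = C_G(M) its centralizer. Let λ be a non-principal irreducible complex character of M, I = I_G(λ) its inertia subgroup, and suppose λ has an extension λ̂ to I with C ∩ I ≤ ker λ̂. Suppose M ≤ I, let ξ be an irreducible character of I/M, regarded via inflation as a character of I, and set χ = (λ̂ · ξ)^G. Then χ is an irreducible character of G, and cod(χ) is a multiple of the product cod_{I/M}(ξ) · (|M|/λ(1)), where cod_{I/M}(ξ) = |I/M : ker ξ| / ξ(1) is the codegree of ξ computed in I/M. -/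
open scoped MatrixGroups

noncomputable section

/-!
Since `λ̂` restricts irreducibly to `M`, the `M`-endomorphisms of its representation are scalars,
so `h ↦ λ̂ h * λ̂ h⁻¹` has average one over every coset of `M` in `I`; weighting the cosets by
`ξ q * ξ q⁻¹` shows that `λ̂ ξ` is irreducible. For `y ∉ I` the restrictions to `M` of `λ̂ ξ` and of
its conjugate by `y` are multiples of distinct irreducible characters, so the off-diagonal terms of
Mackey's norm formula vanish and `χ` is irreducible.

The kernel `N` of `χ` is contained in the kernel of `λ̂ ξ`. Hence `λ` is constant on `N ⊓ M`, which
forces `N ⊓ M = ⊥`; so `N` centralizes `M`, lies in the kernel of `λ̂`, and embeds into the kernel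
of `ξ` in `I ⧸ M`. Thus `|ker χ|` divides `|ker ξ|`, and the claim follows from
`χ 1 = |G : I| * λ 1 * ξ 1`.
-/

section FiniteOrder

open Polynomial

variable {V : Type*} [AddCommGroup V] [Module ℂ V]

theorem eq_one_of_norm_le_one_of_sum_eq_card {s : Multiset ℂ} (hnorm : ∀ z ∈ s, ‖z‖ ≤ 1)
    (hsum : s.sum = s.card) : ∀ z ∈ s, z = 1 := by
  have hre : ∀ z ∈ s, 0 ≤ 1 - z.re := fun z hz ↦
    sub_nonneg.2 ((Complex.re_le_norm z).trans (hnorm z hz))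
  have hdefect : (s.map fun z ↦ 1 - z.re).sum = 0 := by
    have hre_sum : (s.map Complex.re).sum = s.card := by
      simpa [hsum] using (map_multiset_sum Complex.reAddGroupHom s).symm
    simp [Multiset.sum_map_sub, hre_sum]
  intro z hz
  have hz_re : z.re = 1 := by
    have hzero := Multiset.all_zero_of_le_zero_le_of_sum_eq_zero (by simpa using hre) hdefect _
      (Multiset.mem_map_of_mem _ hz)
    linarith
  have hz_norm : ‖z‖ = z.re :=
    le_antisymm (hz_re ▸ hnorm z hz) (Complex.re_le_norm z)
  exact Complex.ext hz_re (Complex.re_eq_norm.1 hz_norm.symm).2.symm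

theorem isSemisimple_of_pow_eq_one {f : Module.End ℂ V} {n : ℕ} (hn : n ≠ 0)
    (hf : f ^ n = 1) : f.IsSemisimple :=
  Module.End.isSemisimple_of_squarefree_aeval_eq_zero (p := X ^ n - 1)
    (X_pow_sub_one_separable_iff.2 (Nat.cast_ne_zero.2 hn)).squarefree (by simp [hf])

variable [FiniteDimensional ℂ V]

theorem norm_eq_one_of_mem_charpoly_roots {f : Module.End ℂ V} {n : ℕ} (hn : n ≠ 0)
    (hf : f ^ n = 1) {z : ℂ} (hz : z ∈ f.charpoly.roots) : ‖z‖ = 1 := by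
  have hz_eigen : f.HasEigenvalue z :=
    (Module.End.hasEigenvalue_iff_isRoot_charpoly f z).2 (isRoot_of_mem_roots hz)
  obtain ⟨v, hv⟩ := hz_eigen.exists_hasEigenvector
  have hzn : z ^ n • v = (1 : ℂ) • v := by simpa [hf] using (hv.pow_apply n).symm
  exact Complex.norm_eq_one_of_pow_eq_one (smul_left_injective ℂ hv.2 hzn) hn

theorem eq_one_of_pow_eq_one_of_trace_eq_finrank {f : Module.End ℂ V} {n : ℕ} (hn : n ≠ 0)
    (hf : f ^ n = 1) (htrace : LinearMap.trace ℂ V f = Module.finrank ℂ V) : f = 1 := by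
  have hsplits : f.charpoly.Splits := IsAlgClosed.splits _
  have hcard : f.charpoly.roots.card = Module.finrank ℂ V := by
    rw [IsAlgClosed.card_roots_eq_natDegree, LinearMap.charpoly_natDegree]
  have hroots : ∀ z ∈ f.charpoly.roots, z = 1 :=
    eq_one_of_norm_le_one_of_sum_eq_card
      (fun z hz ↦ (norm_eq_one_of_mem_charpoly_roots hn hf hz).le)
      (by rw [← Module.End.trace_eq_sum_roots_charpoly_of_splits hsplits, htrace, hcard])
  have hcharpoly : f.charpoly = (X - C 1) ^ Module.finrank ℂ V := by
    rw [hsplits.eq_prod_roots_of_monic f.charpoly_monic,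
      Multiset.eq_replicate.2 ⟨hcard, hroots⟩, Multiset.map_replicate, Multiset.prod_replicate]
  have hnilpotent : IsNilpotent (f - algebraMap ℂ _ 1) :=
    ⟨Module.finrank ℂ V, by simpa [hcharpoly] using f.aeval_self_charpoly⟩
  simpa [sub_eq_zero] using Module.End.eq_zero_of_isNilpotent_isSemisimple hnilpotent
    (Module.End.isSemisimple_sub_algebraMap_iff.2 (isSemisimple_of_pow_eq_one hn hf))

theorem mem_ker_iff_character_eq_character_one {G : Type*} [Group G] [Finite G]
    (ρ : Representation ℂ G V) {g : G} :
    g ∈ MonoidHom.ker ρ ↔ ρ.character g = ρ.character 1 := by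
  refine ⟨fun hg ↦ ?_, fun hg ↦ ?_⟩
  · simp [Representation.character, MonoidHom.mem_ker.1 hg]
  · exact eq_one_of_pow_eq_one_of_trace_eq_finrank Nat.card_pos.ne'
      (by rw [← map_pow, pow_card_eq_one', map_one]) (hg.trans ρ.char_one)

end FiniteOrder

section CosetSums

variable {k H V W : Type*} [Field k] [Group H] [AddCommGroup V] [Module k V]
  [AddCommGroup W] [Module k W]

theorem sum_eq_sum_quotient_sum {A : Type*} [AddCommMonoid A] [Fintype H] (N : Subgroup H)
    [Fintype N] [Fintype (H ⧸ N)] (f : H → A) :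
    ∑ h, f h = ∑ q : H ⧸ N, ∑ n : N, f (q.out * n) := by
  have hbij : Function.Bijective fun p : (H ⧸ N) × N ↦ p.1.out * (p.2 : H) := by
    constructor
    · rintro ⟨q, n⟩ ⟨r, m⟩ h
      obtain rfl : q = r := by
        simpa [QuotientGroup.mk_mul_of_mem] using congrArg (QuotientGroup.mk (s := N)) h
      simpa using h
    · intro h
      exact ⟨(h, ⟨_, QuotientGroup.eq.1 (QuotientGroup.out_eq' (h : H ⧸ N))⟩), by simp⟩
  rw [← hbij.sum_comp, Fintype.sum_prod_type]

theorem sum_character_mul_eq_sum_character (ρ : Representation k H V) (N : Subgroup H)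
    [Fintype N] {a : H} (ha : ∀ v ∈ Representation.invariants (ρ.comp N.subtype), ρ a v = v) :
    ∑ n : N, ρ.character (a * n) = ∑ n : N, ρ.character n := by
  have hinvariant (v : V) : (∑ n : N, ρ n) v ∈ Representation.invariants (ρ.comp N.subtype) := by
    intro m
    simpa [map_sum, ← Module.End.mul_apply, ← map_mul] using
      Equiv.sum_comp (Equiv.mulLeft m) (fun n : N ↦ ρ n v)
  have hfix : ρ a * ∑ n : N, ρ n = ∑ n : N, ρ n := LinearMap.ext fun v ↦ ha _ (hinvariant v)
  simpa [Finset.mul_sum, Representation.character] using congrArg (LinearMap.trace k V) hfix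

variable [CharZero k] [FiniteDimensional k V] [FiniteDimensional k W]

theorem finrank_intertwiningMap_eq_one_iff [Fintype H] (ρ : Representation k H V) :
    Module.finrank k (ρ.IntertwiningMap ρ) = 1 ↔
      ∑ h, ρ.character h * ρ.character h⁻¹ = Nat.card H := by
  have := invertibleOfNonzero (NeZero.ne (Nat.card H : k))
  rw [← Nat.cast_inj (R := k), ← Representation.card_inv_mul_sum_char_mul_char_eq_finrank,
    Nat.cast_one, inv_mul_eq_one₀ (NeZero.ne _), eq_comm]

theorem finrank_intertwiningMap_eq_zero_iff [Fintype H] (ρ : Representation k H V)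
    (σ : Representation k H W) :
    Module.finrank k (ρ.IntertwiningMap σ) = 0 ↔
      ∑ h, σ.character h * ρ.character h⁻¹ = 0 := by
  have := invertibleOfNonzero (NeZero.ne (Nat.card H : k))
  rw [← Nat.cast_inj (R := k), ← Representation.card_inv_mul_sum_char_mul_char_eq_finrank,
    Nat.cast_zero, mul_eq_zero_iff_left (inv_ne_zero (NeZero.ne _))]

theorem sum_character_mul_character_inv_eq_zero_of_comp {K : Type*} [Group K] [Fintype K]
    [Fintype H] (φ : K →* H) (ρ : Representation k H V) (σ : Representation k H W)
    (h : ∑ x, σ.character (φ x) * ρ.character (φ x⁻¹) = 0) :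
    ∑ x, σ.character x * ρ.character x⁻¹ = 0 := by
  let restrict : ρ.IntertwiningMap σ →ₗ[k]
      Representation.IntertwiningMap (ρ.comp φ) (σ.comp φ) :=
    { toFun f := ⟨f.toLinearMap, fun x ↦ f.isIntertwining' (φ x)⟩
      map_add' _ _ := rfl
      map_smul' _ _ := rfl }
  have hrestrict : Function.Injective restrict := fun f g hfg ↦
    Representation.IntertwiningMap.ext (congrArg (·.toLinearMap) hfg)
  have hzero : Module.finrank k (Representation.IntertwiningMap (ρ.comp φ) (σ.comp φ)) = 0 :=
    (finrank_intertwiningMap_eq_zero_iff _ _).2 h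
  exact (finrank_intertwiningMap_eq_zero_iff ρ σ).1
    (Nat.eq_zero_of_le_zero (hzero ▸ LinearMap.finrank_le_finrank_of_injective hrestrict))

theorem sum_coset_character_mul_character_inv (ρ : Representation k H V) (N : Subgroup H)
    [Fintype N] (hN : ∑ n : N, ρ.character n * ρ.character (n : H)⁻¹ = Nat.card N) (a : H) :
    ∑ n : N, ρ.character (a * n) * ρ.character (a * n)⁻¹ = Nat.card N := by
  have hrank : Module.finrank k
      (Representation.IntertwiningMap (ρ.comp N.subtype) (ρ.comp N.subtype)) = 1 :=
    (finrank_intertwiningMap_eq_one_iff (ρ.comp N.subtype)).2 hN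
  have : Nontrivial (Representation.IntertwiningMap (ρ.comp N.subtype) (ρ.comp N.subtype)) :=
    Module.nontrivial_of_finrank_pos (R := k) (by simp [hrank])
  have hfix : ∀ f ∈ Representation.invariants ((ρ.linHom ρ).comp N.subtype),
      ρ.linHom ρ a f = f := by
    intro f hf
    obtain ⟨c, hc⟩ := (finrank_eq_one_iff_of_nonzero' 1 one_ne_zero).1 hrank
      (Representation.invariantsEquivIntertwiningMap (ρ.comp N.subtype) (ρ.comp N.subtype) ⟨f, hf⟩)
    have hfc : f = c • LinearMap.id := (congrArg (·.toLinearMap) hc).symm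
    ext v
    simp [hfc]
  have hsum := sum_character_mul_eq_sum_character (ρ.linHom ρ) N hfix
  simp only [Representation.char_linHom, mul_comm (ρ.character _⁻¹)] at hsum
  exact hsum.trans hN

end CosetSums

section IrreducibleCharacters

variable {G : Type} [Group G] {χ : G → ℂ}

theorem isIrrChar_character_iff [Fintype G] {V : Type} [AddCommGroup V] [Module ℂ V]
    [FiniteDimensional ℂ V] (ρ : Representation ℂ G V) :
    IsIrrChar G ρ.character ↔ ∑ g, ρ.character g * ρ.character g⁻¹ = Nat.card G := by
  constructor
  · rintro ⟨W, hW, hWρ⟩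
    simpa only [hWρ] using (FDRep.simple_iff_char_is_norm_one W).1 hW
  · exact fun h ↦ ⟨FDRep.of ρ, (FDRep.simple_iff_char_is_norm_one (FDRep.of ρ)).2 h, fun _ ↦ rfl⟩

namespace IsIrrChar

theorem exists_character_eq (h : IsIrrChar G χ) :
    ∃ (V : Type) (_ : AddCommGroup V) (_ : Module ℂ V) (_ : FiniteDimensional ℂ V)
      (ρ : Representation ℂ G V), ρ.character = χ := by
  obtain ⟨V, -, hV⟩ := h
  exact ⟨V, inferInstance, inferInstance, inferInstance, V.ρ, funext hV⟩

theorem sum_mul_inv_eq_card [Fintype G] (h : IsIrrChar G χ) :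
    ∑ g, χ g * χ g⁻¹ = Nat.card G := by
  obtain ⟨V, _, _, _, ρ, rfl⟩ := h.exists_character_eq
  exact (isIrrChar_character_iff ρ).1 h

theorem sum_mul_inv_eq_zero_of_ne [Fintype G] {ψ : G → ℂ} (hχ : IsIrrChar G χ)
    (hψ : IsIrrChar G ψ) (hne : χ ≠ ψ) : ∑ g, χ g * ψ g⁻¹ = 0 := by
  obtain ⟨V, hV, hVχ⟩ := hχ
  obtain ⟨W, hW, hWψ⟩ := hψ
  have := invertibleOfNonzero (NeZero.ne (Nat.card G : ℂ))
  have hVW : ¬ Nonempty (V ≅ W) := fun ⟨i⟩ ↦ hne (by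
    rw [← funext hVχ, ← funext hWψ]
    exact FDRep.char_iso i)
  have horth := FDRep.char_orthonormal V W
  rw [if_neg hVW, mul_eq_zero_iff_left (inv_ne_zero (NeZero.ne _))] at horth
  simpa only [hVχ, hWψ] using horth

theorem comp_mulEquiv [Finite G] {H : Type} [Group H] (h : IsIrrChar G χ) (e : H ≃* G) :
    IsIrrChar H fun x ↦ χ (e x) := by
  have := Fintype.ofFinite G
  have := Fintype.ofEquiv G e.symm.toEquiv
  obtain ⟨V, _, _, _, ρ, rfl⟩ := h.exists_character_eq
  refine (isIrrChar_character_iff (ρ.comp e.toMonoidHom)).2 ?_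
  rw [Nat.card_congr e.toEquiv, ← h.sum_mul_inv_eq_card]
  exact Fintype.sum_equiv e.toEquiv _ _ fun g ↦ by simp [Representation.character]

theorem exists_nat_eq_apply_one (h : IsIrrChar G χ) : ∃ n : ℕ, χ 1 = n := by
  obtain ⟨V, _, _, _, ρ, rfl⟩ := h.exists_character_eq
  exact ⟨_, ρ.char_one⟩

theorem apply_one_ne_zero [Finite G] (h : IsIrrChar G χ) : χ 1 ≠ 0 := by
  have := Fintype.ofFinite G
  obtain ⟨V, _, _, _, ρ, rfl⟩ := h.exists_character_eq
  intro hzero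
  have : Subsingleton V :=
    Module.finrank_zero_iff (R := ℂ).1 (by simpa [Representation.char_one] using hzero)
  have hcharacter (g : G) : ρ.character g = 0 := by
    rw [Representation.character, Subsingleton.elim (ρ g) 0, map_zero]
  exact NeZero.ne (Nat.card G : ℂ) (by simpa [hcharacter] using h.sum_mul_inv_eq_card.symm)

theorem eq_one_of_forall_eq_apply_one [Finite G] (h : IsIrrChar G χ) (hconst : ∀ g, χ g = χ 1) :
    χ = fun _ ↦ 1 := by
  have := Fintype.ofFinite G
  obtain ⟨n, hn⟩ := h.exists_nat_eq_apply_one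
  have hnorm : (Nat.card G : ℂ) * (n * n) = Nat.card G * 1 := by
    have hsum := h.sum_mul_inv_eq_card
    simp_rw [hconst, hn] at hsum
    simpa using hsum
  have hsq : n * n = 1 := by exact_mod_cast mul_left_cancel₀ (NeZero.ne _) hnorm
  funext g
  rw [hconst, hn, Nat.eq_one_of_mul_eq_one_right hsq, Nat.cast_one]

/-- The kernel `{g | χ g = χ 1}` of an irreducible character. The carrier is this literal set, so
that `Nat.card h.ker` is definitionally the number of solutions of `χ g = χ 1`. -/
def ker [Finite G] (h : IsIrrChar G χ) : Subgroup G :=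
  have hcarrier : ∃ K : Subgroup G, (K : Set G) = {g | χ g = χ 1} := by
    obtain ⟨V, _, _, _, ρ, rfl⟩ := h.exists_character_eq
    exact ⟨MonoidHom.ker ρ, Set.ext fun g ↦ mem_ker_iff_character_eq_character_one ρ⟩
  hcarrier.choose.copy {g | χ g = χ 1} hcarrier.choose_spec.symm

theorem mem_ker [Finite G] (h : IsIrrChar G χ) {g : G} : g ∈ h.ker ↔ χ g = χ 1 :=
  Iff.rfl

theorem ker_normal [Finite G] (h : IsIrrChar G χ) : h.ker.Normal where
  conj_mem g hg a := by
    obtain ⟨V, _, _, _, ρ, rfl⟩ := h.exists_character_eq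
    exact (ρ.char_conj g a).trans hg

end IsIrrChar

theorem sum_mul_conjNormal_inv_eq_zero {M : Subgroup G} [hM : M.Normal] [Fintype M]
    {lam : M → ℂ} (hlam : IsIrrChar M lam) {y : G} (hy : y ∉ inertia M hM lam) :
    ∑ m : M, lam m * lam (MulAut.conjNormal y m⁻¹) = 0 :=
  hlam.sum_mul_inv_eq_zero_of_ne (hlam.comp_mulEquiv (MulAut.conjNormal y)) fun heq ↦
    hy fun m ↦ (congrFun heq m).symm

end IrreducibleCharacters

section Induction

variable {k G : Type*} [Field k] [Group G]

theorem extend_val_of_notMem {A : Type*} [Zero A] {I : Subgroup G} (f : I → A) {a : G}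
    (ha : a ∉ I) : Function.extend Subtype.val f (0 : G → A) a = 0 :=
  Function.extend_apply' f (0 : G → A) a (by simpa using ha)

theorem eq_extend_val {A : Type*} [Zero A] {I : Subgroup G} {f : I → A} {F : G → A}
    (hF : ∀ x : I, F x = f x) (hF' : ∀ x ∉ I, F x = 0) :
    F = Function.extend Subtype.val f 0 := by
  funext x
  by_cases hx : x ∈ I
  · exact (hF ⟨x, hx⟩).trans (Subtype.val_injective.extend_apply f 0 ⟨x, hx⟩).symm
  · rw [hF' x hx, extend_val_of_notMem f hx]

/-- The function on `G` induced from a function `f` on the subgroup `I` by Frobenius' formula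
`a ↦ |I|⁻¹ ∑ₓ f⁰(x a x⁻¹)`, where `f⁰` extends `f` by zero. For a class function `f` this is the
usual induced class function. -/
def inducedFun [Fintype G] (I : Subgroup G) (f : I → k) (a : G) : k :=
  (Nat.card I : k)⁻¹ * ∑ x, Function.extend Subtype.val f 0 (x * a * x⁻¹)

theorem card_mul_inducedFun_one [CharZero k] [Fintype G] (I : Subgroup G) (f : I → k) :
    Nat.card I * inducedFun I f 1 = Nat.card G * f 1 := by
  have hone : Function.extend Subtype.val f 0 (1 : G) = f 1 :=
    Subtype.val_injective.extend_apply f 0 (1 : I)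
  have hI : (Nat.card I : k) ≠ 0 := NeZero.ne _
  simp [inducedFun, hone, mul_inv_cancel_left₀ hI]

theorem extend_character_conj {V : Type*} [AddCommGroup V] [Module k V] {I : Subgroup G}
    (θ : Representation k I V) {y : G} (hy : y ∈ I) (a : G) :
    Function.extend Subtype.val θ.character 0 (y * a * y⁻¹) =
      Function.extend Subtype.val θ.character 0 a := by
  by_cases ha : a ∈ I
  · have h := Subtype.val_injective.extend_apply θ.character 0 (⟨y, hy⟩ * ⟨a, ha⟩ * ⟨y, hy⟩⁻¹)
    rw [θ.char_conj, ← Subtype.val_injective.extend_apply θ.character 0 ⟨a, ha⟩] at h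
    exact h
  · have hconj : y * a * y⁻¹ ∉ I := by
      rwa [Subgroup.mul_mem_cancel_right _ (I.inv_mem hy), Subgroup.mul_mem_cancel_left _ hy]
    rw [extend_val_of_notMem _ ha, extend_val_of_notMem _ hconj]

theorem sum_extend_zero_mul {I : Subgroup G} [Fintype G] [Fintype I] (f : I → k) (g : G → k) :
    ∑ a, Function.extend Subtype.val f 0 a * g a = ∑ h : I, f h * g h := by
  refine (Finset.sum_of_injOn Subtype.val Subtype.val_injective.injOn (by simp) ?_ ?_).symm
  · intro a _ ha
    rw [extend_val_of_notMem _ (by simpa using ha), zero_mul]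
  · intro h _
    rw [Subtype.val_injective.extend_apply]

theorem sum_inducedFun_mul_inv [Fintype G] (I : Subgroup G) [Fintype I] (f : I → k) :
    ∑ a, inducedFun I f a * inducedFun I f a⁻¹ = (Nat.card I : k)⁻¹ ^ 2 * (Nat.card G *
      ∑ y, ∑ h : I, f h * Function.extend Subtype.val f 0 (y * (h : G)⁻¹ * y⁻¹)) := by
  let F : G → k := Function.extend Subtype.val f 0
  have hcenter (x : G) : ∑ y, ∑ a, F (x * a * x⁻¹) * F (y * a⁻¹ * y⁻¹) =
      ∑ y, ∑ a, F a * F (y * a⁻¹ * y⁻¹) := by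
    refine Fintype.sum_equiv (Equiv.mulRight x⁻¹) _ _ fun y ↦ ?_
    refine Fintype.sum_equiv (MulAut.conj x).toEquiv _ _ fun a ↦ ?_
    simp [mul_assoc]
  calc ∑ a, inducedFun I f a * inducedFun I f a⁻¹
      = ∑ a, (Nat.card I : k)⁻¹ ^ 2 * ∑ x, ∑ y, F (x * a * x⁻¹) * F (y * a⁻¹ * y⁻¹) := by
        refine Finset.sum_congr rfl fun a _ ↦ ?_
        rw [inducedFun, inducedFun, ← Finset.sum_mul_sum]
        ring
    _ = (Nat.card I : k)⁻¹ ^ 2 * ∑ x, ∑ y, ∑ a, F (x * a * x⁻¹) * F (y * a⁻¹ * y⁻¹) := by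
        rw [← Finset.mul_sum, Finset.sum_comm]
        simp_rw [Finset.sum_comm (γ := G) (f := fun a y ↦ F _ * F (y * a⁻¹ * y⁻¹))]
    _ = _ := by simp [hcenter, F, sum_extend_zero_mul]

theorem sum_inducedFun_character_mul_inv [CharZero k] [Fintype G] {I : Subgroup G} [Fintype I]
    {V : Type*} [AddCommGroup V] [Module k V] (θ : Representation k I V)
    (hnorm : ∑ h, θ.character h * θ.character h⁻¹ = Nat.card I)
    (hcross : ∀ y ∉ I, ∑ h : I, θ.character h *
      Function.extend Subtype.val θ.character 0 (y * (h : G)⁻¹ * y⁻¹) = 0) :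
    ∑ a, inducedFun I θ.character a * inducedFun I θ.character a⁻¹ = Nat.card G := by
  classical
  have hy (y : G) : ∑ h : I, θ.character h *
      Function.extend Subtype.val θ.character 0 (y * (h : G)⁻¹ * y⁻¹) =
        if y ∈ I then (Nat.card I : k) else 0 := by
    split_ifs with hyI
    · rw [← hnorm]
      refine Finset.sum_congr rfl fun h _ ↦ ?_
      rw [extend_character_conj θ hyI, ← Subgroup.coe_inv, Subtype.val_injective.extend_apply]
    · exact hcross y hyI
  have hcard : (Finset.univ.filter (· ∈ I)).card = Nat.card I := by
    rw [Nat.card_eq_fintype_card, Fintype.card_subtype]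
  have hI : (Nat.card I : k) ≠ 0 := NeZero.ne _
  rw [sum_inducedFun_mul_inv]
  simp_rw [hy]
  rw [← Finset.sum_filter, Finset.sum_const, hcard, nsmul_eq_mul]
  field_simp

theorem sum_character_mul_extend_conj_eq_zero [CharZero k] {I M : Subgroup G} [M.Normal]
    [Fintype I] [Fintype M] (hMI : M ≤ I) {V : Type*} [AddCommGroup V] [Module k V]
    [FiniteDimensional k V] (θ : Representation k I V) (y : G)
    (hM : ∑ m : M, θ.character (Subgroup.inclusion hMI m) *
      θ.character (Subgroup.inclusion hMI (MulAut.conjNormal y m⁻¹)) = 0) :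
    ∑ h : I, θ.character h *
      Function.extend Subtype.val θ.character 0 (y * (h : G)⁻¹ * y⁻¹) = 0 := by
  classical
  let conjI : I →* G := (MulAut.conj y).toMonoidHom.comp I.subtype
  let J : Subgroup I := I.comap conjI
  let conjJ : J →* I := (conjI.comp J.subtype).codRestrict I fun h ↦ h.2
  let inclJ : M →* J := (Subgroup.inclusion hMI).codRestrict J fun m ↦
    hMI (MulAut.conjNormal y m).2
  have hJ : ∑ h : J, θ.character h * θ.character (conjJ h⁻¹) = 0 :=
    sum_character_mul_character_inv_eq_zero_of_comp inclJ (θ.comp conjJ) (θ.comp J.subtype) hM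
  rw [← hJ]
  refine (Finset.sum_of_injOn Subtype.val Subtype.val_injective.injOn (by simp) ?_ ?_).symm
  · intro h _ hh
    have hmem : y * (h : G)⁻¹ * y⁻¹ ∉ I := fun hc ↦
      hh ⟨⟨h, by simpa [J, conjI, mul_assoc] using I.inv_mem hc⟩, by simp, rfl⟩
    rw [extend_val_of_notMem _ hmem, mul_zero]
  · intro h _
    exact congrArg (θ.character h * ·)
      (Subtype.val_injective.extend_apply θ.character 0 (conjJ h⁻¹)).symm

end Induction

section Coinduction

variable {k G W : Type*} [Field k] [Group G] [AddCommGroup W] [Module k W]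

theorem trace_pi_comp_proj {ι : Type*} [Fintype ι] [DecidableEq ι] [FiniteDimensional k W]
    (e : ι → ι) (A : ι → Module.End k W) :
    LinearMap.trace k (ι → W) (LinearMap.pi fun i ↦ A i ∘ₗ LinearMap.proj (e i)) =
      ∑ i, if e i = i then LinearMap.trace k W (A i) else 0 := by
  have hsum : (LinearMap.pi fun i ↦ A i ∘ₗ LinearMap.proj (e i) : (ι → W) →ₗ[k] ι → W) =
      ∑ i, LinearMap.single k (fun _ ↦ W) i ∘ₗ (A i ∘ₗ LinearMap.proj (e i)) := by
    ext j w i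
    simp [Finset.sum_apply, Pi.single_apply]
  rw [hsum, map_sum]
  refine Finset.sum_congr rfl fun i _ ↦ ?_
  rw [LinearMap.trace_comp_comm', LinearMap.comp_assoc]
  split_ifs with hi
  · rw [hi, LinearMap.proj_comp_single_same, LinearMap.comp_id]
  · rw [LinearMap.proj_comp_single_ne k (fun _ ↦ W) _ _ hi, LinearMap.comp_zero, map_zero]

variable {I : Subgroup G}

/-- Right translation by `a` on functions `G → W`, followed by the averaging projection onto the
coinduced space of `θ`. Its trace is that of `a` on the coinduced space. -/
def averagedTranslation [Fintype I] (θ : Representation k I W) (a : G) : Module.End k (G → W) :=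
  (Nat.card I : k)⁻¹ • ∑ h : I, LinearMap.pi fun x ↦ θ h⁻¹ ∘ₗ LinearMap.proj ((h : G) * x * a)

theorem averagedTranslation_apply [Fintype I] (θ : Representation k I W) (a : G) (f : G → W)
    (x : G) :
    averagedTranslation θ a f x = (Nat.card I : k)⁻¹ • ∑ h : I, θ h⁻¹ (f (h * x * a)) := by
  simp [averagedTranslation, LinearMap.sum_apply, Finset.sum_apply]

theorem averagedTranslation_mem_coindV [Fintype I] (θ : Representation k I W) (a : G)
    (f : G → W) : averagedTranslation θ a f ∈ Representation.coindV I.subtype θ := by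
  intro g x
  rw [averagedTranslation_apply, averagedTranslation_apply, map_smul, map_sum]
  congr 1
  refine Fintype.sum_equiv (Equiv.mulRight g) _ _ fun h ↦ ?_
  simp [mul_assoc, ← Module.End.mul_apply, ← map_mul]

theorem coind_eq_restrict_averagedTranslation [CharZero k] [Fintype I]
    (θ : Representation k I W) (a : G) :
    Representation.coind I.subtype θ a = (averagedTranslation θ a).restrict
      fun f _ ↦ averagedTranslation_mem_coindV θ a f := by
  ext f x
  have hterm (h : I) : θ h⁻¹ (f.1 (h * x * a)) = f.1 (x * a) := by
    rw [mul_assoc, show f.1 (h * (x * a)) = θ h (f.1 (x * a)) from f.2 h (x * a),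
      Representation.inv_self_apply]
  change f.1 (x * a) = averagedTranslation θ a f.1 x
  simp [averagedTranslation_apply, hterm, ← Nat.cast_smul_eq_nsmul k, smul_smul]

theorem trace_averagedTranslation [Fintype G] [Fintype I] [FiniteDimensional k W]
    (θ : Representation k I W) (a : G) :
    LinearMap.trace k (G → W) (averagedTranslation θ a) =
      inducedFun I θ.character a := by
  classical
  simp only [averagedTranslation, map_smul, map_sum, trace_pi_comp_proj, smul_eq_mul, inducedFun]
  rw [Finset.sum_comm]
  congr 1
  refine Finset.sum_congr rfl fun x _ ↦ ?_
  have hfix (h : I) : (h : G) * x * a = x ↔ x * a * x⁻¹ = (h⁻¹ : I) := by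
    rw [Subgroup.coe_inv, mul_inv_eq_iff_eq_mul, eq_inv_mul_iff_mul_eq, mul_assoc]
  simp only [hfix]
  by_cases hx : x * a * x⁻¹ ∈ I
  · lift x * a * x⁻¹ to I using hx with b
    rw [Subtype.val_injective.extend_apply, Finset.sum_eq_single b⁻¹]
    · simp [Representation.character]
    · intro h _ hne
      exact if_neg fun hb ↦ hne (by rw [Subtype.val_injective hb, inv_inv])
    · simp
  · rw [extend_val_of_notMem _ hx]
    refine Finset.sum_eq_zero fun h _ ↦ if_neg fun hb ↦ hx ?_
    rw [hb]
    exact h⁻¹.2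

theorem character_coind_subtype [CharZero k] [Fintype G] [FiniteDimensional k W]
    (θ : Representation k I W) :
    (Representation.coind I.subtype θ).character = inducedFun I θ.character := by
  have := Fintype.ofFinite I
  funext a
  rw [Representation.character, coind_eq_restrict_averagedTranslation,
    LinearMap.trace_restrict_eq_of_forall_mem _ _ (averagedTranslation_mem_coindV θ a),
    trace_averagedTranslation]

theorem extend_apply_mem_coindV (θ : Representation k I W) (w : W) :
    Function.extend Subtype.val (fun h ↦ θ h w) 0 ∈ Representation.coindV I.subtype θ := by
  intro h a
  by_cases ha : a ∈ I
  · lift a to I using ha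
    rw [Subgroup.coe_subtype, ← Subgroup.coe_mul, Subtype.val_injective.extend_apply,
      Subtype.val_injective.extend_apply, map_mul, Module.End.mul_apply]
  · have hha : (h : G) * a ∉ I := by rwa [Subgroup.mul_mem_cancel_left _ h.2]
    rw [Subgroup.coe_subtype, extend_val_of_notMem _ hha, extend_val_of_notMem _ ha, map_zero]

theorem ker_coind_subtype_le [Nontrivial W] (θ : Representation k I W) :
    MonoidHom.ker (Representation.coind I.subtype θ) ≤ (MonoidHom.ker θ).map I.subtype := by
  intro x hx
  have hfix (w : W) : Function.extend Subtype.val (fun h ↦ θ h w) 0 x = w := by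
    let f : Representation.coindV I.subtype θ := ⟨_, extend_apply_mem_coindV θ w⟩
    have hcoind : Representation.coind I.subtype θ x f = f := by
      rw [MonoidHom.mem_ker.1 hx, Module.End.one_apply]
    calc f.1 x = f.1 (1 * x) := by rw [one_mul]
      _ = f.1 1 := congrFun (congrArg Subtype.val hcoind) 1
      _ = θ 1 w := Subtype.val_injective.extend_apply (fun h ↦ θ h w) 0 1
      _ = w := by rw [map_one, Module.End.one_apply]
  have hxI : x ∈ I := by
    by_contra hxI
    obtain ⟨w, hw⟩ := exists_ne (0 : W)
    exact hw ((hfix w).symm.trans (extend_val_of_notMem _ hxI))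
  lift x to I using hxI
  refine Subgroup.mem_map_of_mem _ (MonoidHom.mem_ker.2 (LinearMap.ext fun w ↦ ?_))
  exact (Subtype.val_injective.extend_apply (fun h ↦ θ h w) 0 x).symm.trans (hfix w)

end Coinduction

section Correspondence

theorem card_subgroup_dvd_of_disjoint {G : Type*} [Group G] [Finite G] {N M I : Subgroup G}
    [(M.subgroupOf I).Normal] (hNI : N ≤ I) (hdisj : Disjoint N M)
    {K : Subgroup (I ⧸ M.subgroupOf I)}
    (hK : N.subgroupOf I ≤ K.comap (QuotientGroup.mk' (M.subgroupOf I))) :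
    Nat.card N ∣ Nat.card K := by
  let toK : N →* K :=
    ((QuotientGroup.mk' (M.subgroupOf I)).comp (Subgroup.inclusion hNI)).codRestrict K
      fun x ↦ hK (show Subgroup.inclusion hNI x ∈ N.subgroupOf I from x.2)
  refine Subgroup.card_dvd_of_injective toK ((injective_iff_map_eq_one toK).2 fun x hx ↦ ?_)
  have hxM : (x : G) ∈ M :=
    (QuotientGroup.eq_one_iff (Subgroup.inclusion hNI x)).1 (congrArg Subtype.val hx)
  exact Subtype.ext (Subgroup.disjoint_def.1 hdisj x.2 hxM)

theorem card_quotient_subgroupOf_mul_card {G : Type*} [Group G] {M I : Subgroup G}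
    (hMI : M ≤ I) : Nat.card (I ⧸ M.subgroupOf I) * Nat.card M = Nat.card I := by
  rw [Subgroup.card_eq_card_quotient_mul_card_subgroup (M.subgroupOf I),
    Nat.card_congr (Subgroup.subgroupOfEquivOfLe hMI).toEquiv]

theorem sum_character_mul_quotient_mul_inv {k H V : Type*} [Field k] [CharZero k] [Group H]
    [Fintype H] [AddCommGroup V] [Module k V] [FiniteDimensional k V] (ρ : Representation k H V)
    {N : Subgroup H} [N.Normal] [Fintype N] [Fintype (H ⧸ N)]
    (hρ : ∑ n : N, ρ.character n * ρ.character (n : H)⁻¹ = Nat.card N) {ξ : H ⧸ N → k}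
    (hξ : ∑ q, ξ q * ξ q⁻¹ = Nat.card (H ⧸ N)) :
    ∑ h : H, ρ.character h * ξ h * (ρ.character h⁻¹ * ξ (h⁻¹ : H)) = Nat.card H := by
  have hcoset (q : H ⧸ N) : ∑ n : N, ρ.character (q.out * n) * ξ (q.out * n : H) *
      (ρ.character (q.out * n)⁻¹ * ξ ((q.out * n)⁻¹ : H)) = Nat.card N * (ξ q * ξ q⁻¹) := by
    rw [← sum_coset_character_mul_character_inv ρ N hρ q.out, Finset.sum_mul]
    refine Finset.sum_congr rfl fun n _ ↦ ?_
    rw [QuotientGroup.mk_inv, QuotientGroup.mk_mul_of_mem _ n.2, QuotientGroup.out_eq']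
    ring
  rw [sum_eq_sum_quotient_sum N, Finset.sum_congr rfl fun q _ ↦ hcoset q, ← Finset.mul_sum, hξ,
    Subgroup.card_eq_card_quotient_mul_card_subgroup N]
  push_cast
  ring

namespace IsIrrChar

theorem mul_quotient {H : Type} [Group H] [Finite H] {N : Subgroup H} [N.Normal] {ψ : H → ℂ}
    (hψ : IsIrrChar H ψ) (hres : IsIrrChar N fun n ↦ ψ n) {ξ : H ⧸ N → ℂ}
    (hξ : IsIrrChar (H ⧸ N) ξ) : IsIrrChar H fun h ↦ ψ h * ξ h := by
  have := Fintype.ofFinite H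
  have := Fintype.ofFinite N
  have := Fintype.ofFinite (H ⧸ N)
  obtain ⟨V, _, _, _, ρ, rfl⟩ := hψ.exists_character_eq
  obtain ⟨W, _, _, _, σ, hσ⟩ := hξ.exists_character_eq
  let τ : Representation ℂ H W := σ.comp (QuotientGroup.mk' N)
  have hτ : (fun h : H ↦ ρ.character h * ξ h) = (ρ.tprod τ).character := by
    rw [Representation.char_tensor, ← hσ]
    rfl
  rw [hτ, isIrrChar_character_iff, ← hτ]
  exact sum_character_mul_quotient_mul_inv ρ hres.sum_mul_inv_eq_card hξ.sum_mul_inv_eq_card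

theorem subgroupOf_of_extends {G : Type} [Group G] {M I : Subgroup G} [Finite M] (hMI : M ≤ I)
    {lam : M → ℂ} (hlam : IsIrrChar M lam) {lamhat : I → ℂ}
    (hres : ∀ (x : G) (hxM : x ∈ M) (hxI : x ∈ I), lamhat ⟨x, hxI⟩ = lam ⟨x, hxM⟩) :
    IsIrrChar (M.subgroupOf I) fun m ↦ lamhat m := by
  convert hlam.comp_mulEquiv (Subgroup.subgroupOfEquivOfLe hMI) using 2 with m
  exact hres m m.2 m.1.2

variable {G : Type} [Group G] [Fintype G] {I M : Subgroup G} {f : I → ℂ}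

theorem inducedFun_of_inertia_le [hM : M.Normal] (hMI : M ≤ I) {lam : M → ℂ}
    (hlam : IsIrrChar M lam) (hI : inertia M hM lam ≤ I) (hf : IsIrrChar I f) {c : ℂ}
    (hres : ∀ m, f (Subgroup.inclusion hMI m) = c * lam m) :
    IsIrrChar G (inducedFun I f) := by
  have := Fintype.ofFinite I
  have := Fintype.ofFinite M
  obtain ⟨W, _, _, _, θ, rfl⟩ := hf.exists_character_eq
  rw [← character_coind_subtype, isIrrChar_character_iff, character_coind_subtype]
  refine sum_inducedFun_character_mul_inv θ hf.sum_mul_inv_eq_card fun y hy ↦ ?_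
  refine sum_character_mul_extend_conj_eq_zero hMI θ y ?_
  have hconj := sum_mul_conjNormal_inv_eq_zero hlam fun hyI ↦ hy (hI hyI)
  simp_rw [hres, mul_mul_mul_comm c, ← Finset.mul_sum, hconj, mul_zero]

theorem ker_inducedFun_le (hf : IsIrrChar I f) (hχ : IsIrrChar G (inducedFun I f)) :
    hχ.ker ≤ hf.ker.map I.subtype := by
  obtain ⟨W, _, _, _, θ, rfl⟩ := hf.exists_character_eq
  have : Nontrivial W := Module.nontrivial_of_finrank_pos (R := ℂ) <| Nat.pos_of_ne_zero
    fun hzero ↦ hf.apply_one_ne_zero (by rw [θ.char_one, hzero, Nat.cast_zero])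
  intro x hx
  rw [mem_ker, ← character_coind_subtype, ← mem_ker_iff_character_eq_character_one] at hx
  obtain ⟨h, hh, rfl⟩ := ker_coind_subtype_le θ hx
  exact Subgroup.mem_map_of_mem _ ((mem_ker_iff_character_eq_character_one θ).1 hh)

theorem card_ker_inducedFun_dvd [M.Normal] {lamhat : I → ℂ} (hlamhat : IsIrrChar I lamhat)
    (hcore : ∀ N : Subgroup G, N.Normal → N ≤ M →
      (∀ x : I, (x : G) ∈ N → lamhat x = lamhat 1) → N = ⊥)
    (hcentralizer : ∀ x : I, (x : G) ∈ Subgroup.centralizer (M : Set G) → lamhat x = lamhat 1)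
    {ξ : I ⧸ M.subgroupOf I → ℂ} (hξ : IsIrrChar (I ⧸ M.subgroupOf I) ξ)
    (hf : IsIrrChar I fun x ↦ lamhat x * ξ x)
    (hχ : IsIrrChar G (inducedFun I fun x ↦ lamhat x * ξ x)) :
    Nat.card hχ.ker ∣ Nat.card hξ.ker := by
  have hnormal := hχ.ker_normal
  have hker_le : hχ.ker ≤ I := (hf.ker_inducedFun_le hχ).trans (Subgroup.map_subtype_le _)
  have hker (x : I) (hx : (x : G) ∈ hχ.ker) : lamhat x * ξ x = lamhat 1 * ξ 1 := by
    obtain ⟨h, hh, hhx⟩ := hf.ker_inducedFun_le hχ hx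
    exact Subtype.ext hhx ▸ hh
  have hdisj : Disjoint hχ.ker M := by
    refine disjoint_iff.2 (hcore _ inferInstance inf_le_right fun x hx ↦ ?_)
    have hξx : ξ x = ξ 1 := congrArg ξ ((QuotientGroup.eq_one_iff x).2 hx.2)
    exact mul_right_cancel₀ hξ.apply_one_ne_zero (hξx ▸ hker x hx.1)
  refine card_subgroup_dvd_of_disjoint hker_le hdisj fun x hx ↦ ?_
  have hx_centralizer : (x : G) ∈ Subgroup.centralizer (M : Set G) := fun m hm ↦
    (Subgroup.commute_of_normal_of_disjoint _ M hnormal ‹_› hdisj x m hx hm).symm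
  exact mul_left_cancel₀ hlamhat.apply_one_ne_zero
    (hcentralizer x hx_centralizer ▸ hker x hx)

end IsIrrChar

end Correspondence

theorem induced_gallagher_codegree_general {G : Type} [Group G] [Fintype G] {M : Subgroup G}
    [hM : M.Normal] {lam : M → ℂ} (hlam : IsIrrChar M lam)
    (hcore : ∀ N : Subgroup G, N.Normal → N ≤ M → (∀ m : M, (m : G) ∈ N → lam m = lam 1) → N = ⊥)
    {I : Subgroup G} (hI : I = inertia M hM lam) (hMI : M ≤ I)
    {lamhat : I → ℂ} (hlamhat : IsIrrChar I lamhat)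
    (hres : ∀ (x : G) (hxM : x ∈ M) (hxI : x ∈ I), lamhat ⟨x, hxI⟩ = lam ⟨x, hxM⟩)
    (hcentralizer : ∀ x : I, (x : G) ∈ Subgroup.centralizer (M : Set G) → lamhat x = lamhat 1)
    {ξ : I ⧸ M.subgroupOf I → ℂ} (hξ : IsIrrChar (I ⧸ M.subgroupOf I) ξ)
    {F : G → ℂ} (hF : ∀ x : I, F x = lamhat x * ξ x) (hF' : ∀ x ∉ I, F x = 0)
    {χ : G → ℂ} (hind : ∀ a, χ a = (Nat.card I : ℂ)⁻¹ * ∑ x, F (x * a * x⁻¹)) :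
    IsIrrChar G χ ∧ ∃ k : ℕ,
      (Fintype.card G : ℂ) * (Nat.card {y | ξ y = ξ 1} : ℂ) * ξ 1 * lam 1 =
        (k : ℂ) * (Nat.card (I ⧸ M.subgroupOf I) : ℂ) * (Nat.card M : ℂ) *
          (Nat.card {x | χ x = χ 1} : ℂ) * χ 1 := by
  obtain rfl := eq_extend_val hF hF'
  obtain rfl : χ = inducedFun I fun x ↦ lamhat x * ξ x := funext hind
  have hone : lamhat 1 = lam 1 := hres 1 M.one_mem I.one_mem
  have hf := hlamhat.mul_quotient (hlam.subgroupOf_of_extends hMI hres) hξ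
  have hχ : IsIrrChar G (inducedFun I fun x ↦ lamhat x * ξ x) := by
    refine hlam.inducedFun_of_inertia_le hMI hI.ge hf (c := ξ 1) fun m ↦ ?_
    rw [(QuotientGroup.eq_one_iff (Subgroup.inclusion hMI m)).2 m.2, mul_comm]
    exact congrArg (ξ 1 * ·) (hres m m.2 _)
  obtain ⟨k, hk⟩ := hlamhat.card_ker_inducedFun_dvd (fun N hN hNM hker ↦ hcore N hN hNM fun m hm ↦
    (hres m m.2 (hMI m.2)).symm.trans ((hker _ hm).trans hone)) hcentralizer hξ hf hχ
  refine ⟨hχ, k, ?_⟩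
  have hcard : (Nat.card (I ⧸ M.subgroupOf I) * Nat.card M : ℂ) = Nat.card I :=
    mod_cast card_quotient_subgroupOf_mul_card hMI
  have hdegree := card_mul_inducedFun_one I fun x ↦ lamhat x * ξ x
  rw [← hcard, hone, Nat.card_eq_fintype_card (α := G), QuotientGroup.mk_one] at hdegree
  change (Fintype.card G : ℂ) * Nat.card hξ.ker * ξ 1 * lam 1 = k * _ * _ * Nat.card hχ.ker * _
  rw [hk, Nat.cast_mul]
  linear_combination (-(Nat.card hχ.ker * k) : ℂ) * hdegree

/-- The key computation in the reduction: `M` a non-abelian minimal normal subgroup of `G`,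
`C = C_G(M)`, `λ` a non-principal irreducible character of `M`, `I = I_G(λ)`, `λ̂` an
extension of `λ` to `I` with `C ∩ I ≤ ker λ̂`, `ξ ∈ Irr(I/M)` inflated to `I`, and
`χ = (λ̂ ξ)^G` (given by the induction formula).  Then `χ` is irreducible and `cod(χ)`
is a multiple of `cod_{I/M}(ξ) · (|M|/λ(1))` (stated multiplicatively). -/
theorem induced_gallagher_codegree (G : Type) [Group G] [Fintype G]
    (M : Subgroup G) [hMn : M.Normal] (hMne : M ≠ ⊥)
    (hMmin : ∀ N : Subgroup G, N.Normal → N ≤ M → N = ⊥ ∨ N = M)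
    (hMnonab : ∃ a b : ↥M, a * b ≠ b * a)
    (lam : ↥M → ℂ) (hlam : IsIrrChar ↥M lam) (hlamnp : lam ≠ (fun _ => 1))
    (I : Subgroup G) (hI : I = inertia M hMn lam) (hMI : M ≤ I)
    [hquot : (M.subgroupOf I).Normal]
    (lamhat : ↥I → ℂ) (hlamhat : IsIrrChar ↥I lamhat)
    (hlamhatres : ∀ (x : G) (hxM : x ∈ M) (hxI : x ∈ I),
      lamhat ⟨x, hxI⟩ = lam ⟨x, hxM⟩)
    (hlamhatker : ∀ x : ↥I, (x : G) ∈ Subgroup.centralizer (M : Set G) →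
      lamhat x = lamhat 1)
    (ξ : (↥I ⧸ M.subgroupOf I) → ℂ) (hξ : IsIrrChar (↥I ⧸ M.subgroupOf I) ξ)
    (F : G → ℂ)
    (hF : ∀ x : ↥I, F x = lamhat x * ξ (QuotientGroup.mk x))
    (hF' : ∀ x : G, x ∉ I → F x = 0)
    (χ : G → ℂ)
    (hind : ∀ a : G, χ a = (Nat.card ↥I : ℂ)⁻¹ * ∑ x : G, F (x * a * x⁻¹)) :
    IsIrrChar G χ ∧
    ∃ k : ℕ,
      (Fintype.card G : ℂ) *
          (Nat.card {y : ↥I ⧸ M.subgroupOf I | ξ y = ξ 1} : ℂ) * ξ 1 * lam 1 =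
        (k : ℂ) * (Nat.card (↥I ⧸ M.subgroupOf I) : ℂ) * (Nat.card ↥M : ℂ) *
          (Nat.card {x : G | χ x = χ 1} : ℂ) * χ 1 :=
  induced_gallagher_codegree_general hlam
    (fun N hN hNM hker ↦ (hMmin N hN hNM).resolve_right fun hNeq ↦ hlamnp
      (hlam.eq_one_of_forall_eq_apply_one fun m ↦ hker m (hNeq ▸ m.2)))
    hI hMI hlamhat hlamhatres hlamhatker hξ hF hF' hind
end
end
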